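/- arXiv:1403.6927 — 3 statements merged into one kernel-verified Lean document; each statement's English description precedes it below -/
import Mathlib

section
/- For α > 1/2 and λ > 0, the coefficients d_n(α) = ξ_n^{(α)} · ‖C_n^{(α)}‖_μ² / ‖Q_{n,λ}^{(α)}‖_S² satisfy the asymptotic relation d_n(α) ≅ 1/(16 λ n²); that is, 16 λ n² · d_n(α) → 1 as n → ∞. -/
open Polynomial MeasureTheory Real Set

/-- The Gegenbauer inner product `∫ f g (1-x²)^{α-1/2}` on `(-1,1)`. -/
noncomputable def gegInner (α : ℝ) (f g : Polynomial ℝ) : ℝ :=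
  ∫ x in Set.Ioo (-1 : ℝ) 1, f.eval x * g.eval x * (1 - x ^ 2) ^ (α - 1/2)

/-- `C` is the monic Gegenbauer polynomial of degree `n` for parameter `α`. -/
def IsMonicGegenbauer (α : ℝ) (n : ℕ) (C : Polynomial ℝ) : Prop :=
  C.Monic ∧ C.natDegree = n ∧
    ∀ p : Polynomial ℝ, p.degree < (n : ℕ) → gegInner α C p = 0

/-- The Gegenbauer–Sobolev inner product. -/
noncomputable def sobInner (α lam : ℝ) (f g : Polynomial ℝ) : ℝ :=
  gegInner α f g + lam * gegInner α (derivative f) (derivative g)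

/-- `Q` is the monic Gegenbauer–Sobolev polynomial of degree `n`. -/
def IsMonicGegSobolev (α lam : ℝ) (n : ℕ) (Q : Polynomial ℝ) : Prop :=
  Q.Monic ∧ Q.natDegree = n ∧
    ∀ p : Polynomial ℝ, p.degree < (n : ℕ) → sobInner α lam Q p = 0

/-!
Monic orthogonal polynomials minimise the norm among monic polynomials. Hence, with `h_n = ‖C_n‖²`,
the derivative of `Q_{n+1}` has squared norm at least `(n+1)² h_n`, so that
`λ (n+1)² h_n ≤ ‖Q_{n+1}‖_S²`. Conversely, `C_{n+2} - ξ_n C_n` is monic with derivative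
`(n+2) C_{n+1}`, so that `‖Q_{n+2}‖_S² ≤ h_{n+2} + ξ_n² h_n + λ (n+2)² h_{n+1}`. Since
`h_{n+1} / h_n → 1/4` and `ξ_n → 1/4`, this gives `‖Q_n‖_S² ∼ λ n² h_{n-1} ∼ 4 λ n² h_n`.
-/

open Filter Topology

section MonicOrthogonal

/-- `P` is the monic orthogonal polynomial of degree `n` for the bilinear form `B`. The Gegenbauer
and Gegenbauer–Sobolev polynomials are the instances `gegForm` and `sobForm`. -/
def IsMonicOrthogonal {R : Type*} [CommRing R] (B : LinearMap.BilinForm R R[X]) (n : ℕ)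
    (P : R[X]) : Prop :=
  P.Monic ∧ P.natDegree = n ∧ ∀ p : R[X], p.degree < n → B P p = 0

namespace IsMonicOrthogonal

variable {R : Type*} [CommRing R] {B : LinearMap.BilinForm R R[X]} {n k : ℕ} {P p : R[X]}

lemma coeff_self (hP : IsMonicOrthogonal B n P) : P.coeff n = 1 := by
  simpa only [hP.2.1] using hP.1.coeff_natDegree

lemma coeff_eq_zero (hP : IsMonicOrthogonal B n P) (hk : n < k) : P.coeff k = 0 :=
  coeff_eq_zero_of_natDegree_lt (hP.2.1.trans_lt hk)

lemma apply_eq_coeff_mul (hP : IsMonicOrthogonal B n P) (hp : p.natDegree ≤ n) :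
    B P p = p.coeff n * B P P := by
  have hdeg : (p - p.coeff n • P).degree < n := by
    rw [degree_lt_iff_coeff_zero]
    intro k hk
    rcases hk.eq_or_lt with rfl | hk
    · simp [hP.coeff_self]
    · simp [hP.coeff_eq_zero hk, coeff_eq_zero_of_natDegree_lt (hp.trans_lt hk)]
  simpa [sub_eq_zero] using hP.2.2 _ hdeg

lemma apply_eq_zero (hP : IsMonicOrthogonal B n P) (hp : p.natDegree < n) : B P p = 0 := by
  rw [hP.apply_eq_coeff_mul hp.le, coeff_eq_zero_of_natDegree_lt hp, zero_mul]

lemma coeff_sq_mul_apply_self_le [LinearOrder R] [IsStrictOrderedRing R]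
    (hB : B.IsPosSemidef) (hP : IsMonicOrthogonal B n P) (hp : p.natDegree ≤ n) :
    p.coeff n ^ 2 * B P P ≤ B p p := by
  have hPp : B P p = p.coeff n * B P P := hP.apply_eq_coeff_mul hp
  have hpP : B p P = p.coeff n * B P P := (hB.isSymm.eq _ _).trans hPp
  have hnonneg : 0 ≤ B (p - p.coeff n • P) (p - p.coeff n • P) := hB.nonneg _
  simp only [map_sub, map_smul, LinearMap.sub_apply, LinearMap.smul_apply, smul_eq_mul, hPp,
    hpP] at hnonneg
  linarith

end IsMonicOrthogonal

end MonicOrthogonal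

section GegenbauerForm

variable {α : ℝ}

lemma intervalIntegrable_one_sub_sq_rpow {s : ℝ} (hs : -1 < s) :
    IntervalIntegrable (fun x : ℝ => (1 - x ^ 2) ^ s) volume (-1) 1 := by
  have hsub : IntervalIntegrable (fun x : ℝ => (1 - x) ^ s) volume 0 1 := by
    simpa using ((intervalIntegral.intervalIntegrable_rpow' (a := 0) (b := 1) hs).comp_sub_left
      1).symm
  have hadd : ContinuousOn (fun x : ℝ => (1 + x) ^ s) (uIcc 0 1) := by
    refine ContinuousOn.rpow_const (by fun_prop) fun x hx => Or.inl ?_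
    rw [uIcc_of_le zero_le_one] at hx
    linarith [hx.1]
  have hright : IntervalIntegrable (fun x : ℝ => (1 - x ^ 2) ^ s) volume 0 1 := by
    refine (hsub.mul_continuousOn hadd).congr fun x hx => ?_
    rw [uIoc_of_le zero_le_one] at hx
    rw [← mul_rpow (by linarith [hx.2]) (by linarith [hx.1])]
    ring_nf
  have hleft : IntervalIntegrable (fun x : ℝ => (1 - x ^ 2) ^ s) volume (-1) 0 := by
    simpa using (hright.comp_sub_left 0).symm
  exact hleft.trans hright

lemma intervalIntegrable_eval_mul_one_sub_sq_rpow (hα : -1 / 2 < α) (p : ℝ[X]) :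
    IntervalIntegrable (fun x => p.eval x * (1 - x ^ 2) ^ (α - 1 / 2)) volume (-1) 1 :=
  (intervalIntegrable_one_sub_sq_rpow (by linarith)).continuousOn_mul p.continuousOn

lemma gegInner_eq_intervalIntegral (α : ℝ) (f g : ℝ[X]) :
    gegInner α f g = ∫ x in (-1 : ℝ)..1, (f * g).eval x * (1 - x ^ 2) ^ (α - 1 / 2) := by
  rw [intervalIntegral.integral_of_le (by norm_num), integral_Ioc_eq_integral_Ioo]
  simp only [eval_mul, gegInner]

lemma gegInner_comm (α : ℝ) (f g : ℝ[X]) : gegInner α f g = gegInner α g f := by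
  simp only [gegInner_eq_intervalIntegral, mul_comm f g]

lemma gegInner_mul_left (α : ℝ) (f g h : ℝ[X]) :
    gegInner α (f * g) h = gegInner α f (g * h) := by
  simp only [gegInner_eq_intervalIntegral, mul_assoc]

lemma gegInner_add_left (hα : -1 / 2 < α) (f g h : ℝ[X]) :
    gegInner α (f + g) h = gegInner α f h + gegInner α g h := by
  simp only [gegInner_eq_intervalIntegral]
  rw [← intervalIntegral.integral_add (intervalIntegrable_eval_mul_one_sub_sq_rpow hα _)
    (intervalIntegrable_eval_mul_one_sub_sq_rpow hα _)]
  simp only [add_mul, eval_add]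

lemma gegInner_smul_left (α c : ℝ) (f g : ℝ[X]) :
    gegInner α (c • f) g = c * gegInner α f g := by
  simp only [gegInner_eq_intervalIntegral]
  rw [← intervalIntegral.integral_const_mul]
  simp only [smul_mul_assoc, eval_smul, smul_eq_mul, mul_assoc]

lemma gegInner_add_one (α : ℝ) (f g : ℝ[X]) :
    gegInner (α + 1) f g = gegInner α f ((1 - X ^ 2) * g) := by
  refine setIntegral_congr_fun measurableSet_Ioo fun x hx => ?_
  have hpos : 0 < 1 - x ^ 2 := by nlinarith [hx.1, hx.2]
  simp only [eval_mul, eval_sub, eval_one, eval_pow, eval_X]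
  rw [show α + 1 - 1 / 2 = α - 1 / 2 + 1 by ring, rpow_add_one hpos.ne']
  ring

lemma gegInner_self_pos (hα : -1 / 2 < α) {f : ℝ[X]} (hf : f ≠ 0) : 0 < gegInner α f f := by
  have hweight : ∀ x ∈ Ioo (-1 : ℝ) 1, 0 < (1 - x ^ 2) ^ (α - 1 / 2) := fun x hx =>
    rpow_pos_of_pos (by nlinarith [hx.1, hx.2]) _
  have hnonneg : ∀ x ∈ Ioo (-1 : ℝ) 1, 0 ≤ f.eval x * f.eval x * (1 - x ^ 2) ^ (α - 1 / 2) :=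
    fun x hx => mul_nonneg (mul_self_nonneg _) (hweight x hx).le
  have hint : IntegrableOn (fun x => f.eval x * f.eval x * (1 - x ^ 2) ^ (α - 1 / 2))
      (Ioo (-1) 1) := by
    rw [← integrableOn_Ioc_iff_integrableOn_Ioo,
      ← intervalIntegrable_iff_integrableOn_Ioc_of_le (by norm_num)]
    simpa only [eval_mul] using intervalIntegrable_eval_mul_one_sub_sq_rpow hα (f * f)
  have hroots : volume (f.rootSet ℝ) = 0 := (f.rootSet_finite ℝ).measure_zero _
  refine (setIntegral_pos_iff_support_of_nonneg_ae
    (ae_restrict_of_forall_mem measurableSet_Ioo hnonneg) hint).2 ?_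
  have hvol : 0 < volume (Ioo (-1 : ℝ) 1 \ f.rootSet ℝ) := by
    rw [measure_sdiff_null hroots]
    simp
  refine hvol.trans_le (measure_mono fun x hx => ⟨?_, hx.1⟩)
  have heval : f.eval x ≠ 0 := fun h => hx.2 (by simp [mem_rootSet, hf, h])
  exact mul_ne_zero (mul_ne_zero heval heval) (hweight x hx.1).ne'

lemma eq_zero_of_gegInner_self_eq_zero (hα : -1 / 2 < α) {f : ℝ[X]} (h : gegInner α f f = 0) :
    f = 0 := by
  by_contra hf
  exact (gegInner_self_pos hα hf).ne' h

/-- `gegInner α` as a bilinear form. Bilinearity needs the weight to be integrable. -/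
noncomputable def gegForm (hα : -1 / 2 < α) : LinearMap.BilinForm ℝ ℝ[X] :=
  LinearMap.mk₂ ℝ (gegInner α) (gegInner_add_left hα) (gegInner_smul_left α)
    (fun f g h => by simp only [gegInner_comm α f, gegInner_add_left hα])
    (fun c f g => by simp only [gegInner_comm α f, gegInner_smul_left, smul_eq_mul])

lemma gegForm_apply (hα : -1 / 2 < α) (f g : ℝ[X]) : gegForm hα f g = gegInner α f g := rfl

lemma gegForm_isPosSemidef (hα : -1 / 2 < α) : (gegForm hα).IsPosSemidef where
  eq := gegInner_comm α
  nonneg f := by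
    rcases eq_or_ne f 0 with rfl | hf
    · simp
    · exact (gegInner_self_pos hα hf).le

/-- `sobInner α lam` as a bilinear form. -/
noncomputable def sobForm (hα : -1 / 2 < α) (lam : ℝ) : LinearMap.BilinForm ℝ ℝ[X] :=
  gegForm hα + lam • LinearMap.BilinForm.comp (gegForm hα) derivative derivative

lemma sobForm_isPosSemidef (hα : -1 / 2 < α) {lam : ℝ} (hlam : 0 ≤ lam) :
    (sobForm hα lam).IsPosSemidef := by
  have h := gegForm_isPosSemidef hα
  have hderiv : (LinearMap.BilinForm.comp (gegForm hα) derivative derivative).IsPosSemidef :=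
    { eq := fun _ _ => h.eq _ _, nonneg := fun _ => h.nonneg _ }
  exact h.add (hderiv.smul hlam)

lemma IsMonicGegenbauer.isMonicOrthogonal {n : ℕ} {P : ℝ[X]} (hP : IsMonicGegenbauer α n P)
    (hα : -1 / 2 < α) : IsMonicOrthogonal (gegForm hα) n P := hP

lemma IsMonicGegSobolev.isMonicOrthogonal {lam : ℝ} {n : ℕ} {Q : ℝ[X]}
    (hQ : IsMonicGegSobolev α lam n Q) (hα : -1 / 2 < α) :
    IsMonicOrthogonal (sobForm hα lam) n Q := hQ

end GegenbauerForm

section Adjoint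

variable {α : ℝ}

/-- Up to sign, the adjoint of the derivative, taken from the Gegenbauer space of parameter `α`
to the one of parameter `α + 1`; see `gegInner_add_one_derivative`. -/
noncomputable def gegAdjoint (α : ℝ) (p : ℝ[X]) : ℝ[X] :=
  (1 - X ^ 2) * derivative p - C (2 * α + 1) * (X * p)

lemma gegAdjoint_mul (α : ℝ) (p q : ℝ[X]) :
    gegAdjoint α (q * p) = derivative q * ((1 - X ^ 2) * p) + q * gegAdjoint α p := by
  simp only [gegAdjoint, derivative_mul]
  ring

lemma hasDerivAt_eval_mul_one_sub_sq_rpow (α : ℝ) (p : ℝ[X]) {x : ℝ} (hx : x ∈ Ioo (-1) 1) :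
    HasDerivAt (fun x => p.eval x * (1 - x ^ 2) ^ (α + 1 / 2))
      ((gegAdjoint α p).eval x * (1 - x ^ 2) ^ (α - 1 / 2)) x := by
  have hpos : 0 < 1 - x ^ 2 := by nlinarith [hx.1, hx.2]
  have hbase : HasDerivAt (fun x : ℝ => 1 - x ^ 2) (-(2 * x)) x := by
    simpa using (hasDerivAt_pow 2 x).const_sub 1
  refine ((p.hasDerivAt x).mul
    (hbase.rpow_const (p := α + 1 / 2) (Or.inl hpos.ne'))).congr_deriv ?_
  rw [show α + 1 / 2 - 1 = α - 1 / 2 by ring, show α + 1 / 2 = α - 1 / 2 + 1 by ring,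
    rpow_add_one hpos.ne']
  simp only [gegAdjoint, eval_sub, eval_mul, eval_one, eval_pow, eval_X, eval_C]
  ring

lemma gegInner_one_gegAdjoint_eq_zero (hα : -1 / 2 < α) (p : ℝ[X]) :
    gegInner α 1 (gegAdjoint α p) = 0 := by
  have hexp : 0 < α + 1 / 2 := by linarith
  have hcont : ContinuousOn (fun x => p.eval x * (1 - x ^ 2) ^ (α + 1 / 2)) (Icc (-1) 1) :=
    p.continuousOn.mul (ContinuousOn.rpow_const (by fun_prop) fun _ _ => Or.inr hexp.le)
  rw [gegInner_eq_intervalIntegral, one_mul,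
    intervalIntegral.integral_eq_sub_of_hasDerivAt_of_le (by norm_num) hcont
      (fun _ hx => hasDerivAt_eval_mul_one_sub_sq_rpow α p hx)
      (intervalIntegrable_eval_mul_one_sub_sq_rpow hα _)]
  norm_num [zero_rpow hexp.ne']

lemma gegInner_add_one_derivative (hα : -1 / 2 < α) (p q : ℝ[X]) :
    gegInner (α + 1) (derivative q) p = -gegInner α q (gegAdjoint α p) := by
  rw [gegInner_add_one, eq_neg_iff_add_eq_zero]
  calc
    gegInner α (derivative q) ((1 - X ^ 2) * p) + gegInner α q (gegAdjoint α p)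
      = gegForm hα 1 (gegAdjoint α (q * p)) := by
        rw [gegAdjoint_mul, map_add, gegForm_apply, gegForm_apply,
          ← gegInner_mul_left _ 1 (derivative q), ← gegInner_mul_left _ 1 q, one_mul, one_mul]
    _ = 0 := gegInner_one_gegAdjoint_eq_zero hα _

-- Both sides equal `-gegInner (α + 1) (derivative p) (derivative q)`.
lemma gegInner_gegAdjoint_derivative_comm (hα : -1 / 2 < α) (p q : ℝ[X]) :
    gegInner α (gegAdjoint α (derivative p)) q = gegInner α p (gegAdjoint α (derivative q)) := by
  rw [gegInner_comm, ← neg_inj, ← gegInner_add_one_derivative hα,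
    ← gegInner_add_one_derivative hα, gegInner_comm]

lemma coeff_gegAdjoint_zero (α : ℝ) (p : ℝ[X]) : (gegAdjoint α p).coeff 0 = p.coeff 1 := by
  simp [gegAdjoint, coeff_derivative]

lemma coeff_gegAdjoint_succ (α : ℝ) (p : ℝ[X]) (k : ℕ) :
    (gegAdjoint α p).coeff (k + 1) =
      (k + 2) * p.coeff (k + 2) - (k + 2 * α + 1) * p.coeff k := by
  have hexpand : gegAdjoint α p =
      derivative p - X * (X * derivative p) - C (2 * α + 1) * (X * p) := by
    rw [gegAdjoint]
    ring
  rw [hexpand, coeff_sub, coeff_sub, coeff_C_mul]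
  rcases k with _ | k
  · simp only [zero_add, coeff_derivative, Nat.reduceAdd, Nat.cast_one, coeff_X_mul,
      mul_coeff_zero, coeff_X_zero, Nat.cast_zero, zero_mul, sub_zero]
    ring
  · simp only [coeff_derivative, Nat.cast_add, Nat.cast_one, coeff_X_mul]
    ring

lemma coeff_gegAdjoint_derivative (α : ℝ) (p : ℝ[X]) (k : ℕ) :
    (gegAdjoint α (derivative p)).coeff k =
      (k + 2) * (k + 1) * p.coeff (k + 2) - k * (k + 2 * α) * p.coeff k := by
  rcases k with _ | k
  · rw [coeff_gegAdjoint_zero, coeff_derivative]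
    norm_num
    ring
  · simp only [coeff_gegAdjoint_succ, coeff_derivative]
    push_cast
    ring

lemma degree_gegAdjoint_lt {n : ℕ} {p : ℝ[X]} (hp : p.degree < n) :
    (gegAdjoint α p).degree < (n + 1 : ℕ) := by
  rw [degree_lt_iff_coeff_zero] at hp ⊢
  rintro (_ | k) hk
  · omega
  · rw [coeff_gegAdjoint_succ, hp k (by omega), hp (k + 2) (by omega)]
    ring

lemma degree_gegAdjoint_derivative_lt {n : ℕ} {p : ℝ[X]} (hp : p.degree < n) :
    (gegAdjoint α (derivative p)).degree < n := by
  rw [degree_lt_iff_coeff_zero] at hp ⊢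
  intro k hk
  rw [coeff_gegAdjoint_derivative, hp k hk, hp (k + 2) (by omega)]
  ring

end Adjoint

section GegenbauerPolynomials

variable {α : ℝ}

namespace IsMonicGegenbauer

variable {n : ℕ} {P : ℝ[X]}

lemma differential_equation (hα : -1 / 2 < α) (hP : IsMonicGegenbauer α n P) :
    gegAdjoint α (derivative P) = -(n * (n + 2 * α)) • P := by
  rw [neg_smul, ← add_eq_zero_iff_eq_neg]
  set r := gegAdjoint α (derivative P) + (n * (n + 2 * α)) • P with hr
  have hdeg : r.degree < n := by
    rw [degree_lt_iff_coeff_zero]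
    intro k hk
    have hO := hP.isMonicOrthogonal hα
    rw [hr, coeff_add, coeff_smul, smul_eq_mul, coeff_gegAdjoint_derivative,
      hO.coeff_eq_zero (show n < k + 2 by omega)]
    rcases hk.eq_or_lt with rfl | hk
    · ring
    · rw [hO.coeff_eq_zero hk]
      ring
  have horth : gegInner α (gegAdjoint α (derivative P)) r = 0 := by
    rw [gegInner_gegAdjoint_derivative_comm hα]
    exact hP.2.2 _ (degree_gegAdjoint_derivative_lt hdeg)
  apply eq_zero_of_gegInner_self_eq_zero hα
  nth_rewrite 1 [hr]
  rw [gegInner_add_left hα, gegInner_smul_left, horth, hP.2.2 _ hdeg, mul_zero, add_zero]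

lemma coeff_pred (hα : -1 / 2 < α) (hP : IsMonicGegenbauer α (n + 1) P) : P.coeff n = 0 := by
  have h := congrArg (fun p => p.coeff n) (hP.differential_equation hα)
  simp only [coeff_gegAdjoint_derivative, coeff_smul, smul_eq_mul,
    (hP.isMonicOrthogonal hα).coeff_eq_zero (Nat.lt_succ_self (n + 1))] at h
  push_cast at h
  have hfactor : (0 : ℝ) < 2 * n + 1 + 2 * α := by linarith [n.cast_nonneg (α := ℝ)]
  refine (mul_eq_zero.1 (?_ : (2 * n + 1 + 2 * α) * P.coeff n = 0)).resolve_left hfactor.ne'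
  linarith

lemma coeff_sub_two (hα : -1 / 2 < α) (hP : IsMonicGegenbauer α (n + 2) P) :
    P.coeff n = -((n + 2) * (n + 1) / (4 * (n + 1 + α))) := by
  have h := congrArg (fun p => p.coeff n) (hP.differential_equation hα)
  simp only [coeff_gegAdjoint_derivative, coeff_smul, smul_eq_mul,
    (hP.isMonicOrthogonal hα).coeff_self] at h
  push_cast at h
  have hne : (n + 1 + α : ℝ) ≠ 0 := by linarith [n.cast_nonneg (α := ℝ)]
  field_simp
  linarith

lemma gegInner_add_one_derivative_eq_zero (hα : -1 / 2 < α) (hP : IsMonicGegenbauer α (n + 1) P)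
    {p : ℝ[X]} (hp : p.degree < n) : gegInner (α + 1) (derivative P) p = 0 := by
  rw [gegInner_add_one_derivative hα, hP.2.2 _ (degree_gegAdjoint_lt hp), neg_zero]

lemma gegInner_add_one_eq_zero (hP : IsMonicGegenbauer α (n + 2) P) {p : ℝ[X]}
    (hp : p.degree < n) : gegInner (α + 1) P p = 0 := by
  have hdeg : ((1 - X ^ 2) * p).degree < ((n + 2 : ℕ) : WithBot ℕ) := by
    rw [degree_lt_iff_coeff_zero] at hp ⊢
    intro k hk
    obtain ⟨k, rfl⟩ : ∃ j, k = j + 2 := ⟨k - 2, by omega⟩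
    simp [sub_mul, coeff_X_pow_mul, hp k (by omega), hp (k + 2) (by omega)]
  rw [gegInner_add_one, hP.2.2 _ hdeg]

end IsMonicGegenbauer

variable {P : ℕ → ℝ[X]}

lemma coeff_X_mul_sub (hα : -1 / 2 < α) (hP : ∀ n, IsMonicGegenbauer α n (P n)) (n : ℕ) :
    (X * P (n + 2) - P (n + 3)).coeff (n + 1) =
      (n + 2) * (n + 1 + 2 * α) / (4 * (n + 2 + α) * (n + 1 + α)) := by
  rw [coeff_sub, coeff_X_mul, (hP (n + 2)).coeff_sub_two hα, (hP (n + 3)).coeff_sub_two hα]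
  have h₁ : (n + 1 + α : ℝ) ≠ 0 := by linarith [n.cast_nonneg (α := ℝ)]
  have h₂ : (n + 2 + α : ℝ) ≠ 0 := by linarith [n.cast_nonneg (α := ℝ)]
  push_cast
  rw [show (n + 1 + 1 + α : ℝ) = n + 2 + α by ring]
  field_simp
  ring

lemma natDegree_X_mul_sub_le (hα : -1 / 2 < α) (hP : ∀ n, IsMonicGegenbauer α n (P n)) (n : ℕ) :
    (X * P (n + 1) - P (n + 2)).natDegree ≤ n := by
  have hO := fun n => (hP n).isMonicOrthogonal hα
  rw [natDegree_le_iff_coeff_eq_zero]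
  rintro (_ | k) hk
  · omega
  rw [coeff_sub, coeff_X_mul]
  obtain rfl | rfl | hk : k = n ∨ k = n + 1 ∨ n + 1 < k := by omega
  · rw [(hP (k + 1)).coeff_pred hα, (hP (k + 2)).coeff_pred hα, sub_zero]
  · rw [(hO (n + 1)).coeff_self, (hO (n + 2)).coeff_self, sub_self]
  · rw [(hO (n + 1)).coeff_eq_zero hk, (hO (n + 2)).coeff_eq_zero (by omega), sub_zero]

lemma gegInner_self_succ (hα : -1 / 2 < α) (hP : ∀ n, IsMonicGegenbauer α n (P n)) (n : ℕ) :
    gegInner α (P (n + 2)) (P (n + 2)) =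
      (n + 2) * (n + 1 + 2 * α) / (4 * (n + 2 + α) * (n + 1 + α)) *
        gegInner α (P (n + 1)) (P (n + 1)) := by
  have hO := fun n => (hP n).isMonicOrthogonal hα
  have hXP : (X * P (n + 1)).natDegree ≤ n + 2 := by
    rw [natDegree_X_mul (hP (n + 1)).1.ne_zero, (hP (n + 1)).2.1]
  have horth : gegForm hα (P (n + 1)) (P (n + 3)) = 0 :=
    (gegInner_comm _ _ _).trans <| (hO (n + 3)).apply_eq_zero <| by
      rw [(hP (n + 1)).2.1]
      omega
  calc
    gegForm hα (P (n + 2)) (P (n + 2)) = gegForm hα (P (n + 2)) (X * P (n + 1)) := by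
      rw [(hO (n + 2)).apply_eq_coeff_mul hXP, coeff_X_mul, (hO (n + 1)).coeff_self, one_mul]
    _ = gegForm hα (P (n + 1)) (X * P (n + 2)) := by
      rw [gegForm_apply, gegForm_apply, gegInner_comm, mul_comm X, gegInner_mul_left]
    _ = gegForm hα (P (n + 1)) (X * P (n + 2) - P (n + 3)) := by rw [map_sub, horth, sub_zero]
    _ = _ := by
      rw [(hO (n + 1)).apply_eq_coeff_mul (natDegree_X_mul_sub_le hα hP (n + 1)),
        coeff_X_mul_sub hα hP, gegForm_apply]

/-- The coefficient `ξ_n^{(α)}` for which `C_{n+2} - ξ_n C_n` has derivative `(n + 2) C_{n+1}`. -/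
noncomputable def gegXi (α : ℝ) (n : ℕ) : ℝ :=
  ((n : ℝ) + 2) * ((n : ℝ) + 1) / (4 * ((n : ℝ) + α + 1) * ((n : ℝ) + α))

lemma degree_derivative_sub_gegXi_smul_sub_lt (hα : -1 / 2 < α)
    (hP : ∀ n, IsMonicGegenbauer α n (P n)) (n : ℕ) :
    (derivative (P (n + 3)) - gegXi α (n + 1) • derivative (P (n + 1)) -
      (n + 3 : ℝ) • P (n + 2)).degree < n := by
  have hO := fun n => (hP n).isMonicOrthogonal hα
  rw [degree_lt_iff_coeff_zero]
  intro k hk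
  simp only [coeff_sub, coeff_smul, coeff_derivative, smul_eq_mul]
  obtain rfl | rfl | rfl | hk : k = n ∨ k = n + 1 ∨ k = n + 2 ∨ n + 2 < k := by omega
  · rw [(hP (k + 3)).coeff_sub_two hα, (hP (k + 2)).coeff_sub_two hα, (hO (k + 1)).coeff_self,
      gegXi]
    have h₁ : (k + 1 + α : ℝ) ≠ 0 := by linarith [k.cast_nonneg (α := ℝ)]
    have h₂ : (k + 2 + α : ℝ) ≠ 0 := by linarith [k.cast_nonneg (α := ℝ)]
    push_cast
    rw [show (k + 1 + 1 + α : ℝ) = k + 2 + α by ring,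
      show (k + 1 + α + 1 : ℝ) = k + 2 + α by ring]
    field_simp
    ring
  · rw [(hP (n + 3)).coeff_pred hα, (hP (n + 2)).coeff_pred hα,
      (hO (n + 1)).coeff_eq_zero (by omega)]
    ring
  · rw [(hO (n + 3)).coeff_self, (hO (n + 2)).coeff_self, (hO (n + 1)).coeff_eq_zero (by omega)]
    push_cast
    ring
  · rw [(hO (n + 3)).coeff_eq_zero (by omega), (hO (n + 2)).coeff_eq_zero hk,
      (hO (n + 1)).coeff_eq_zero (by omega)]
    ring

-- The difference of the two sides has degree less than `n` and is orthogonal to every such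
-- polynomial for the parameter `α + 1`.
lemma derivative_sub_gegXi_smul (hα : -1 / 2 < α) (hP : ∀ n, IsMonicGegenbauer α n (P n))
    (n : ℕ) :
    derivative (P (n + 3) - gegXi α (n + 1) • P (n + 1)) = (n + 3 : ℝ) • P (n + 2) := by
  have hα' : -1 / 2 < α + 1 := by linarith
  have hdeg := degree_derivative_sub_gegXi_smul_sub_lt hα hP n
  rw [derivative_sub, derivative_smul, ← sub_eq_zero]
  set r := derivative (P (n + 3)) - gegXi α (n + 1) • derivative (P (n + 1)) -
    (n + 3 : ℝ) • P (n + 2) with hr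
  have h₁ : gegForm hα' (derivative (P (n + 1))) r = 0 :=
    (hP (n + 1)).gegInner_add_one_derivative_eq_zero hα hdeg
  have h₂ : gegForm hα' (P (n + 2)) r = 0 := (hP (n + 2)).gegInner_add_one_eq_zero hdeg
  have h₃ : gegForm hα' (derivative (P (n + 3))) r = 0 :=
    (hP (n + 3)).gegInner_add_one_derivative_eq_zero hα
      (hdeg.trans (by exact_mod_cast (by omega : n < n + 2)))
  apply eq_zero_of_gegInner_self_eq_zero hα'
  rw [← gegForm_apply hα']
  nth_rewrite 1 [hr]
  simp only [map_sub, map_smul, LinearMap.sub_apply, LinearMap.smul_apply, h₁, h₂, h₃, smul_zero,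
    sub_zero]

end GegenbauerPolynomials

section SobolevNorm

variable {α lam : ℝ}

lemma le_sobInner_self (hα : -1 / 2 < α) (hlam : 0 ≤ lam) {n : ℕ} {P p : ℝ[X]}
    (hP : IsMonicGegenbauer α n P) (hp : p.Monic) (hdeg : p.natDegree = n + 1) :
    lam * ((n + 1) ^ 2 * gegInner α P P) ≤ sobInner α lam p p := by
  have hderiv : (n + 1) ^ 2 * gegInner α P P ≤ gegInner α (derivative p) (derivative p) := by
    have h := (hP.isMonicOrthogonal hα).coeff_sq_mul_apply_self_le (gegForm_isPosSemidef hα)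
      (p := derivative p) ((natDegree_derivative_le p).trans (by omega))
    rwa [coeff_derivative, ← hdeg, hp.coeff_natDegree, one_mul] at h
  have hnonneg : 0 ≤ gegInner α p p := (gegForm_isPosSemidef hα).nonneg p
  rw [sobInner]
  linarith [mul_le_mul_of_nonneg_left hderiv hlam]

lemma sobInner_self_le (hα : -1 / 2 < α) (hlam : 0 ≤ lam) {n : ℕ} {P : ℕ → ℝ[X]} {Q : ℝ[X]}
    (hP : ∀ n, IsMonicGegenbauer α n (P n)) (hQ : IsMonicGegSobolev α lam (n + 3) Q) :
    sobInner α lam Q Q ≤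
      gegInner α (P (n + 3)) (P (n + 3)) +
        gegXi α (n + 1) ^ 2 * gegInner α (P (n + 1)) (P (n + 1)) +
        lam * ((n + 3) ^ 2 * gegInner α (P (n + 2)) (P (n + 2))) := by
  have hO := fun n => (hP n).isMonicOrthogonal hα
  set T := P (n + 3) - gegXi α (n + 1) • P (n + 1) with hT
  have hdeg : T.natDegree ≤ n + 3 := by
    refine (natDegree_sub_le_of_le (hP (n + 3)).2.1.le (natDegree_smul_le _ _)).trans ?_
    rw [(hP (n + 1)).2.1]
    omega
  have hlead : T.coeff (n + 3) = 1 := by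
    simp [hT, (hO (n + 3)).coeff_self, (hO (n + 1)).coeff_eq_zero (show n + 1 < n + 3 by omega)]
  have horth : gegForm hα (P (n + 3)) (P (n + 1)) = 0 :=
    (hO (n + 3)).apply_eq_zero (by rw [(hP (n + 1)).2.1]; omega)
  have horth' : gegForm hα (P (n + 1)) (P (n + 3)) = 0 := (gegInner_comm _ _ _).trans horth
  calc
    sobInner α lam Q Q ≤ sobInner α lam T T := by
      have h :=
        (hQ.isMonicOrthogonal hα).coeff_sq_mul_apply_self_le (sobForm_isPosSemidef hα hlam) hdeg
      rwa [hlead, one_pow, one_mul] at h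
    _ = gegForm hα T T +
          lam * gegForm hα ((n + 3 : ℝ) • P (n + 2)) ((n + 3 : ℝ) • P (n + 2)) := by
      rw [← derivative_sub_gegXi_smul hα hP]
      rfl
    _ = _ := by
      simp only [hT, map_sub, map_smul, LinearMap.sub_apply, LinearMap.smul_apply, smul_eq_mul,
        horth, horth', gegForm_apply]
      ring

end SobolevNorm

section Asymptotics

variable {α lam : ℝ} {P Q : ℕ → ℝ[X]}

lemma tendsto_natCast_add_div_natCast_add (a b : ℝ) :
    Tendsto (fun n : ℕ => ((n : ℝ) + a) / (n + b)) atTop (𝓝 1) := by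
  simpa [add_comm] using tendsto_add_mul_div_add_mul_atTop_nhds a b (1 : ℝ) one_ne_zero

lemma tendsto_gegXi (α : ℝ) : Tendsto (gegXi α) atTop (𝓝 (1 / 4)) := by
  have h := ((tendsto_natCast_add_div_natCast_add 2 (α + 1)).mul
    (tendsto_natCast_add_div_natCast_add 1 α)).div_const 4
  rw [one_mul] at h
  refine h.congr fun n => ?_
  rw [gegXi, div_mul_div_comm, div_div]
  ring_nf

lemma tendsto_gegInner_self_succ_div (hα : -1 / 2 < α) (hP : ∀ n, IsMonicGegenbauer α n (P n)) :
    Tendsto (fun n => gegInner α (P (n + 1)) (P (n + 1)) / gegInner α (P n) (P n)) atTop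
      (𝓝 (1 / 4)) := by
  have h := ((tendsto_natCast_add_div_natCast_add 2 (2 + α)).mul
    (tendsto_natCast_add_div_natCast_add (1 + 2 * α) (1 + α))).div_const 4
  rw [one_mul] at h
  rw [← tendsto_add_atTop_iff_nat 1]
  refine h.congr fun n => ?_
  rw [gegInner_self_succ hα hP,
    mul_div_cancel_right₀ _ (gegInner_self_pos hα (hP (n + 1)).1.ne_zero).ne', div_mul_div_comm,
    div_div]
  ring_nf

lemma tendsto_sobInner_self_succ_div (hα : -1 / 2 < α) (hlam : 0 ≤ lam)
    (hP : ∀ n, IsMonicGegenbauer α n (P n)) (hQ : ∀ n, IsMonicGegSobolev α lam n (Q n)) :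
    Tendsto (fun n : ℕ => sobInner α lam (Q (n + 1)) (Q (n + 1)) /
      ((n + 1) ^ 2 * gegInner α (P n) (P n))) atTop (𝓝 lam) := by
  have hpos : ∀ n, 0 < gegInner α (P n) (P n) := fun n => gegInner_self_pos hα (hP n).1.ne_zero
  have hratio := tendsto_gegInner_self_succ_div hα hP
  set ρ : ℕ → ℝ := fun n => gegInner α (P (n + 1)) (P (n + 1)) / gegInner α (P n) (P n) with hρ
  have hbound : Tendsto
      (fun n : ℕ => (ρ (n + 2) + gegXi α (n + 1) ^ 2 / ρ (n + 1)) / ((n : ℝ) + 3) ^ 2 + lam)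
      atTop (𝓝 lam) := by
    have hnum := ((tendsto_add_atTop_iff_nat 2).2 hratio).add
      ((((tendsto_add_atTop_iff_nat 1).2 (tendsto_gegXi α)).pow 2).div
        ((tendsto_add_atTop_iff_nat 1).2 hratio) (by norm_num))
    have hden : Tendsto (fun n : ℕ => ((n : ℝ) + 3) ^ 2) atTop atTop :=
      (tendsto_pow_atTop two_ne_zero).comp
        (tendsto_atTop_add_const_right _ _ tendsto_natCast_atTop_atTop)
    simpa using (hnum.div_atTop hden).add_const lam
  rw [← tendsto_add_atTop_iff_nat 2]
  refine tendsto_of_tendsto_of_tendsto_of_le_of_le tendsto_const_nhds hbound (fun n => ?_)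
    fun n => ?_
  · have := hpos (n + 2)
    rw [le_div_iff₀ (by positivity)]
    exact le_sobInner_self hα hlam (hP (n + 2)) (hQ (n + 3)).1 (hQ (n + 3)).2.1
  · have := hpos (n + 2)
    have hcast : (((n + 2 : ℕ) : ℝ) + 1) = n + 3 := by
      push_cast
      ring
    rw [hcast, div_le_iff₀ (by positivity)]
    refine (sobInner_self_le hα hlam hP (hQ (n + 3))).trans_eq ?_
    simp only [hρ]
    field_simp [(hpos (n + 1)).ne']

end Asymptotics

theorem gegSobolev_connection_coeff_asymptotics_general (α lam : ℝ) (hα : -1 / 2 < α)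
    (hlam : 0 < lam)
    (C Q : ℕ → Polynomial ℝ)
    (hC : ∀ n, IsMonicGegenbauer α n (C n))
    (hQ : ∀ n, IsMonicGegSobolev α lam n (Q n)) :
    Filter.Tendsto
      (fun n : ℕ =>
        16 * lam * (n : ℝ) ^ 2 *
          (((n : ℝ) + 2) * ((n : ℝ) + 1) /
                (4 * ((n : ℝ) + α + 1) * ((n : ℝ) + α)) *
              gegInner α (C n) (C n) / sobInner α lam (Q n) (Q n)))
      Filter.atTop (nhds 1) := by
  have hnorm := tendsto_gegInner_self_succ_div hα hC
  have hsob := tendsto_sobInner_self_succ_div hα hlam.le hC hQ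
  have hxi := (tendsto_add_atTop_iff_nat 1).2 (tendsto_gegXi α)
  have hlim := ((hxi.const_mul (16 * lam)).mul hnorm).div hsob hlam.ne'
  rw [show 16 * lam * (1 / 4) * (1 / 4) / lam = 1 by field_simp; norm_num] at hlim
  rw [← tendsto_add_atTop_iff_nat 1]
  refine hlim.congr fun n => ?_
  have hpos : gegInner α (C n) (C n) ≠ 0 := (gegInner_self_pos hα (hC n).1.ne_zero).ne'
  rw [Pi.div_apply, ← gegXi]
  push_cast
  field_simp

/-- Asymptotics of the connection coefficients: `d_n(α) ≅ 1/(16 λ n²)`. -/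
theorem gegSobolev_connection_coeff_asymptotics (α lam : ℝ) (hα : 1/2 < α)
    (hlam : 0 < lam)
    (C Q : ℕ → Polynomial ℝ)
    (hC : ∀ n, IsMonicGegenbauer α n (C n))
    (hQ : ∀ n, IsMonicGegSobolev α lam n (Q n)) :
    Filter.Tendsto
      (fun n : ℕ =>
        16 * lam * (n : ℝ) ^ 2 *
          (((n : ℝ) + 2) * ((n : ℝ) + 1) /
                (4 * ((n : ℝ) + α + 1) * ((n : ℝ) + α)) *
              gegInner α (C n) (C n) / sobInner α lam (Q n) (Q n)))
      Filter.atTop (nhds 1) :=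
  gegSobolev_connection_coeff_asymptotics_general α lam (by linarith) hlam C Q hC hQ
end

section
/- (Bojanov–Naidenov) Let P be a real polynomial of degree n ≥ 3 all of whose zeros are real and lie in the interval [a,b], and assume that max_{x∈[a,b]} |P(x)| = |P(a)| = 1. Let τ_1 ≤ τ_2 ≤ … ≤ τ_{n-2} denote the zeros of P''. Then |P'(τ_j)| < |P'(a)| for every j = 1, …, ⌊(n-1)/2⌋. -/
open Polynomial Set

/-!
Translate and rescale so that `a = 0` and `P 0 = 1`, and let `y i > 0` be the zeros of `P`, so that
`|P' 0| = ∑ 1 / y i`. Suppose that `|P' 0| ≤ |P' T|`, where `T` is the `j`-th zero of `P''`. By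
interlacing, once the `(j + 1)`-st zero of `P` is dropped, each zero of `P'` is paired with a
remaining zero `w i` of `P` on the same side of `T` and no closer to it, whence
`1 ≤ ∏ |1 - T / w i|`. Taking logarithms, `∑ T / w i` over the `j` zeros to the left of `T` is at
least `2 * j` plus the same sum over the zeros to the right.

For `j ≥ 2` this makes `T * |P' 0|` larger than Bernstein-type bounds for `T * |P' T|` allow. If
`[0, 2 * T]` lies in the interval, Bernstein's inequality is used in a form where a zero
`y ≥ 2 * T` counts only as the fraction `2 * T / y` of a degree. Otherwise the classical inequality
is enough, since the factors `1 - T / w i` to the right of `T` are then bounded by that of the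
right endpoint.

For `j = 1` the derivative `P'` is concave on `[0, T]`, and the trapezoidal rule turns
`|P' 0| ≤ P' T` into `P 0 ≤ P T`: an interior maximum at which `P'` does not vanish.
-/

/-! ### Bernstein's inequality -/

/-- The polynomial `ζ ^ n * p ((ζ + ζ⁻¹) / 2)`, `n = natDegree p`: it carries bounds for `p` on
`[-1, 1]` to bounds on the unit circle, where complex analysis applies. -/
noncomputable def joukowski (p : ℂ[X]) : ℂ[X] :=
  ∑ k ∈ Finset.range (p.natDegree + 1),
    C (p.coeff k) * ((C 2⁻¹ * (X ^ 2 + 1)) ^ k * X ^ (p.natDegree - k))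

lemma natDegree_joukowski_le (p : ℂ[X]) : (joukowski p).natDegree ≤ 2 * p.natDegree := by
  refine natDegree_sum_le_of_forall_le _ _ fun k hk => ?_
  have hquad : (C 2⁻¹ * (X ^ 2 + 1) : ℂ[X]).natDegree ≤ 2 := by compute_degree
  calc _ ≤ _ := natDegree_C_mul_le _ _
    _ ≤ _ := natDegree_mul_le
    _ ≤ k * 2 + (p.natDegree - k) := by
      gcongr
      exacts [natDegree_pow_le_of_le k hquad, natDegree_X_pow_le _]
    _ ≤ 2 * p.natDegree := by rw [Finset.mem_range] at hk; omega

lemma eval_joukowski (p : ℂ[X]) {ζ : ℂ} (hζ : ζ ≠ 0) :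
    (joukowski p).eval ζ = ζ ^ p.natDegree * p.eval ((ζ + ζ⁻¹) / 2) := by
  rw [joukowski, eval_finsetSum, eval_eq_sum_range, Finset.mul_sum]
  refine Finset.sum_congr rfl fun k hk => ?_
  have hsplit : ζ ^ p.natDegree = ζ ^ k * ζ ^ (p.natDegree - k) := by
    rw [← pow_add, Nat.add_sub_cancel' (Nat.lt_succ_iff.1 (Finset.mem_range.1 hk))]
  have hquad : 2⁻¹ * (ζ ^ 2 + 1) = ζ * ((ζ + ζ⁻¹) / 2) := by field_simp
  simp only [eval_mul, eval_C, eval_pow, eval_add, eval_X, eval_one]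
  rw [hquad, hsplit, mul_pow]
  ring

lemma eval_joukowski_exp (p : ℂ[X]) (θ : ℂ) :
    (joukowski p).eval (Complex.exp (θ * Complex.I)) =
      Complex.exp (θ * Complex.I) ^ p.natDegree * p.eval (Complex.cos θ) := by
  rw [eval_joukowski p (Complex.exp_ne_zero _), ← Complex.exp_neg, ← neg_mul, Complex.cos]

lemma exp_mul_eval_derivative_joukowski (p : ℂ[X]) (θ : ℂ) :
    Complex.exp (θ * Complex.I) * (derivative (joukowski p)).eval (Complex.exp (θ * Complex.I)) =
      Complex.exp (θ * Complex.I) ^ p.natDegree * (p.natDegree * p.eval (Complex.cos θ) +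
        Complex.I * (Complex.sin θ * (derivative p).eval (Complex.cos θ))) := by
  have hexp : HasDerivAt (fun t : ℂ => Complex.exp (t * Complex.I))
      (Complex.exp (θ * Complex.I) * Complex.I) θ := by
    simpa using ((hasDerivAt_id θ).mul_const Complex.I).cexp
  have hleft := ((joukowski p).hasDerivAt _).comp θ hexp
  have hright := (hexp.pow p.natDegree).mul
    ((p.hasDerivAt _).comp θ (Complex.hasDerivAt_cos θ))
  have heq := hleft.unique
    (hright.congr_of_eventuallyEq (.of_forall (eval_joukowski_exp p)))
  have hpow : (p.natDegree : ℂ) * Complex.exp (θ * Complex.I) ^ (p.natDegree - 1) *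
      Complex.exp (θ * Complex.I) = p.natDegree * Complex.exp (θ * Complex.I) ^ p.natDegree := by
    rcases p.natDegree with _ | n
    · simp
    · rw [Nat.add_sub_cancel, pow_succ, mul_assoc]
  simp only [Function.comp_apply, Pi.pow_apply] at heq
  linear_combination (-Complex.I) * heq + p.eval (Complex.cos θ) * hpow +
    (Complex.exp (θ * Complex.I) * (derivative (joukowski p)).eval (Complex.exp (θ * Complex.I)) -
      p.natDegree * Complex.exp (θ * Complex.I) ^ (p.natDegree - 1) * Complex.exp (θ * Complex.I) *
        p.eval (Complex.cos θ)) * Complex.I_sq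

lemma re_div_sub_le_half {ζ z : ℂ} (hζ : ‖ζ‖ = 1) (hz : 1 ≤ ‖z‖) : (ζ / (ζ - z)).re ≤ 1 / 2 := by
  rcases eq_or_ne ζ z with rfl | hne
  · simp
  have hpos : 0 < Complex.normSq (ζ - z) := Complex.normSq_pos.2 (sub_ne_zero.2 hne)
  have hζsq : Complex.normSq ζ = 1 := by rw [Complex.normSq_eq_norm_sq, hζ, one_pow]
  have hzsq : 1 ≤ Complex.normSq z := by rw [Complex.normSq_eq_norm_sq]; nlinarith
  rw [Complex.div_re, ← add_div, div_le_iff₀ hpos]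
  simp only [Complex.normSq_apply, Complex.sub_re, Complex.sub_im] at *
  nlinarith

lemma re_mul_eval_derivative_div_eval_le {G : ℂ[X]} (hG : ∀ z ∈ G.roots, 1 ≤ ‖z‖) {ζ : ℂ}
    (hζ : ‖ζ‖ = 1) (h0 : G.eval ζ ≠ 0) :
    (ζ * (derivative G).eval ζ / G.eval ζ).re ≤ G.natDegree / 2 := by
  have hsum : ∀ s : Multiset ℂ, (∀ z ∈ s, 1 ≤ ‖z‖) →
      (ζ * (s.map fun z => 1 / (ζ - z)).sum).re ≤ (s.card : ℝ) / 2 := by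
    intro s
    induction s using Multiset.induction_on with
    | empty => simp
    | cons z s ih =>
      intro hs
      have hz := re_div_sub_le_half hζ (hs z (Multiset.mem_cons_self z s))
      have hrest := ih fun w hw => hs w (Multiset.mem_cons_of_mem hw)
      rw [Multiset.map_cons, Multiset.sum_cons, mul_add, Complex.add_re, Multiset.card_cons,
        mul_one_div]
      push_cast
      linarith
  rw [mul_div_assoc, (IsAlgClosed.splits G).eval_derivative_div_eval_of_ne_zero h0]
  exact (hsum _ hG).trans (by gcongr; exact card_roots' G)

lemma norm_eval_le_of_forall_norm_eq_one {G : ℂ[X]} {M : ℝ}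
    (hM : ∀ ζ : ℂ, ‖ζ‖ = 1 → ‖G.eval ζ‖ ≤ M) {z : ℂ} (hz : ‖z‖ ≤ 1) : ‖G.eval z‖ ≤ M := by
  refine Complex.norm_le_of_forall_mem_frontier_norm_le (U := Metric.ball 0 1) (f := G.eval)
    Metric.isBounded_ball G.differentiable.diffContOnCl (fun w hw => hM w ?_) ?_
  · simpa [frontier_ball (0 : ℂ) one_ne_zero] using hw
  · simpa [closure_ball (0 : ℂ) one_ne_zero] using hz

lemma re_mul_eval_derivative_div_sub_le {G : ℂ[X]} {M : ℝ}
    (hM : ∀ ζ : ℂ, ‖ζ‖ = 1 → ‖G.eval ζ‖ ≤ M) {c : ℂ} (hc : M < ‖c‖) {ζ : ℂ} (hζ : ‖ζ‖ = 1) :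
    (ζ * (derivative G).eval ζ / (G.eval ζ - c)).re ≤ G.natDegree / 2 := by
  have hne : ∀ z : ℂ, ‖z‖ ≤ 1 → (G - C c).eval z ≠ 0 := by
    intro z hz h0
    rw [eval_sub, eval_C, sub_eq_zero] at h0
    exact (norm_eval_le_of_forall_norm_eq_one hM hz).not_gt (h0 ▸ hc)
  have hroots : ∀ z ∈ (G - C c).roots, 1 ≤ ‖z‖ := fun z hz =>
    le_of_not_ge fun hz1 => hne z hz1 (mem_roots'.1 hz).2
  simpa [natDegree_sub_C] using re_mul_eval_derivative_div_eval_le hroots hζ (hne ζ hζ.le)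

section Bernstein

variable {p : ℝ[X]} {M : ℝ}

lemma eval_map_ofRealHom_cos (p : ℝ[X]) (θ : ℝ) :
    (p.map Complex.ofRealHom).eval (Complex.cos θ) = p.eval (Real.cos θ) := by
  rw [← Complex.ofReal_cos]
  exact eval_map_apply (f := Complex.ofRealHom) _

lemma norm_eval_joukowski_le (hM : ∀ x ∈ Icc (-1) 1, |p.eval x| ≤ M) {ζ : ℂ} (hζ : ‖ζ‖ = 1) :
    ‖(joukowski (p.map Complex.ofRealHom)).eval ζ‖ ≤ M := by
  obtain ⟨θ, rfl⟩ := (Complex.norm_eq_one_iff ζ).1 hζ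
  rw [eval_joukowski_exp, eval_map_ofRealHom_cos, norm_mul, norm_pow, hζ, one_pow, one_mul,
    Complex.norm_real]
  exact hM _ ⟨Real.neg_one_le_cos θ, Real.cos_le_one θ⟩

lemma re_div_le_natDegree (hM : ∀ x ∈ Icc (-1) 1, |p.eval x| ≤ M) (hM0 : 0 ≤ M) {t : ℝ}
    (ht : M < t) (θ : ℝ) :
    ((p.natDegree * p.eval (Real.cos θ) +
        Complex.I * (Real.sin θ * (derivative p).eval (Real.cos θ) : ℝ)) /
      (p.eval (Real.cos θ) + Complex.I * t)).re ≤ p.natDegree := by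
  set q := p.map Complex.ofRealHom with hq
  set ζ := Complex.exp (θ * Complex.I) with hζ_def
  have hdeg : q.natDegree = p.natDegree :=
    natDegree_map_eq_of_injective Complex.ofRealHom.injective p
  have hζ : ‖ζ‖ = 1 := Complex.norm_exp_ofReal_mul_I θ
  have hquot : ζ * (derivative (joukowski q)).eval ζ /
      ((joukowski q).eval ζ - ζ ^ p.natDegree * -(Complex.I * t)) =
      (p.natDegree * p.eval (Real.cos θ) +
        Complex.I * (Real.sin θ * (derivative p).eval (Real.cos θ) : ℝ)) /
      (p.eval (Real.cos θ) + Complex.I * t) := by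
    rw [hζ_def, exp_mul_eval_derivative_joukowski, eval_joukowski_exp, hdeg, hq, derivative_map,
      eval_map_ofRealHom_cos, eval_map_ofRealHom_cos, mul_neg, sub_neg_eq_add, ← mul_add,
      mul_div_mul_left _ _ (pow_ne_zero _ (Complex.exp_ne_zero _))]
    push_cast
    rfl
  rw [← hquot]
  calc _ ≤ ((joukowski q).natDegree : ℝ) / 2 :=
        re_mul_eval_derivative_div_sub_le (fun _ => norm_eval_joukowski_le hM)
          (by simpa [hζ, abs_of_pos (hM0.trans_lt ht)] using ht) hζ
    _ ≤ p.natDegree := by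
        rw [div_le_iff₀ two_pos, mul_comm, ← hdeg]
        exact_mod_cast natDegree_joukowski_le q

lemma sin_mul_eval_derivative_cos_le (hM : ∀ x ∈ Icc (-1) 1, |p.eval x| ≤ M) (θ : ℝ) :
    Real.sin θ * (derivative p).eval (Real.cos θ) ≤ p.natDegree * M := by
  have hM0 : 0 ≤ M := (abs_nonneg _).trans (hM 0 (by norm_num))
  suffices h : ∀ t > M, Real.sin θ * (derivative p).eval (Real.cos θ) ≤ p.natDegree * t from
    ge_of_tendsto ((continuous_const_mul (p.natDegree : ℝ)).continuousWithinAt (s := Ioi M))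
      (Filter.eventually_of_mem self_mem_nhdsWithin h)
  intro t ht
  have ht0 : 0 < t := hM0.trans_lt ht
  have hre := re_div_le_natDegree hM hM0 ht θ
  set f := p.eval (Real.cos θ)
  set σ := Real.sin θ * (derivative p).eval (Real.cos θ)
  have hnormSq : 0 < f * f + t * t :=
    add_pos_of_nonneg_of_pos (mul_self_nonneg f) (mul_pos ht0 ht0)
  simp only [Complex.div_re, Complex.normSq_apply, Complex.add_re, Complex.add_im, Complex.mul_re,
    Complex.mul_im, Complex.I_re, Complex.I_im, Complex.ofReal_re, Complex.ofReal_im,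
    Complex.natCast_re, Complex.natCast_im, zero_mul, one_mul, mul_zero, sub_zero, add_zero,
    zero_add, ← add_div] at hre
  rw [div_le_iff₀ hnormSq] at hre
  exact le_of_mul_le_mul_right (by linarith) ht0

lemma abs_eval_derivative_mul_sqrt_one_sub_sq_le (hM : ∀ x ∈ Icc (-1) 1, |p.eval x| ≤ M) {x : ℝ}
    (hx : x ∈ Icc (-1) 1) : |(derivative p).eval x| * √(1 - x ^ 2) ≤ p.natDegree * M := by
  have hcos := Real.cos_arccos hx.1 hx.2
  have hpos := sin_mul_eval_derivative_cos_le hM (Real.arccos x)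
  have hneg := sin_mul_eval_derivative_cos_le hM (-Real.arccos x)
  rw [Real.sin_neg, Real.cos_neg, hcos, Real.sin_arccos] at hneg
  rw [hcos, Real.sin_arccos] at hpos
  rw [← abs_of_nonneg (Real.sqrt_nonneg (1 - x ^ 2)), ← abs_mul, abs_le]
  constructor <;> linarith

lemma abs_eval_derivative_mul_sqrt_le {A B : ℝ} (hM : ∀ x ∈ Icc A B, |p.eval x| ≤ M) {x : ℝ}
    (hx : x ∈ Icc A B) :
    |(derivative p).eval x| * √((x - A) * (B - x)) ≤ p.natDegree * M := by
  have hM0 : 0 ≤ M := (abs_nonneg _).trans (hM x hx)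
  rcases (hx.1.trans hx.2).eq_or_lt with rfl | hAB
  · rw [sub_eq_zero.2 (le_antisymm hx.2 hx.1)]
    simpa using mul_nonneg p.natDegree.cast_nonneg hM0
  have hr : 0 < (B - A) / 2 := by linarith
  set r := (B - A) / 2 with hr_def
  set m := (A + B) / 2 with hm_def
  set u := (x - m) / r with hu_def
  have hxu : r * u + m = x := by rw [hu_def]; field_simp; ring
  have hu : u ∈ Icc (-1) 1 := by
    rw [hu_def, mem_Icc, le_div_iff₀ hr, div_le_iff₀ hr]
    constructor <;> linarith [hx.1, hx.2]
  have hcomp := abs_eval_derivative_mul_sqrt_one_sub_sq_le (p := p.comp (C r * X + C m)) (M := M)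
    (fun v hv => by
      simp only [eval_comp, eval_add, eval_mul, eval_C, eval_X]
      exact hM _ ⟨by nlinarith [hv.1], by nlinarith [hv.2]⟩) hu
  have hsqrt : √((x - A) * (B - x)) = r * √(1 - u ^ 2) := by
    rw [← Real.sqrt_sq hr.le, ← Real.sqrt_mul (sq_nonneg r), ← hxu]
    congr 1
    rw [hr_def, hm_def]
    ring
  simp only [derivative_comp, derivative_add, derivative_mul, derivative_C, derivative_X, zero_mul,
    zero_add, mul_one, add_zero, eval_mul, eval_comp, eval_C, eval_add, eval_X, natDegree_comp,
    natDegree_linear hr.ne', hxu, abs_mul, abs_of_pos hr] at hcomp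
  rw [hsqrt]
  linarith

end Bernstein

/-! ### Fractional degrees -/

lemma eval_zero_derivative_prod_one_add {ι : Type*} (s : Finset ι) (e : ι → ℝ) :
    (derivative (∏ i ∈ s, (1 + C (e i) * X : ℝ[X]))).eval 0 = ∑ i ∈ s, e i := by
  classical
  simp [derivative_prod_finset, eval_finsetSum, eval_prod]

lemma one_add_mul_nonneg {e w : ℝ} (he : e ∈ Icc 0 1) (hw : -1 ≤ w) : 0 ≤ 1 + e * w := by
  nlinarith [he.1, he.2]

lemma exists_pow_mul_le_mul {e φ : ℝ} (he : e ∈ Icc 0 1) (hφ : φ ∈ Icc 0 1) :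
    ∃ (k : ℕ) (ψ : ℝ), ψ ∈ Icc 0 1 ∧ k + ψ = e + φ ∧
      ∀ w ≥ -1, (1 + w) ^ k * (1 + ψ * w) ≤ (1 + e * w) * (1 + φ * w) := by
  rcases le_total (e + φ) 1 with hle | hge
  · refine ⟨0, e + φ, ⟨add_nonneg he.1 hφ.1, hle⟩, by simp, fun w _ => ?_⟩
    linarith [mul_nonneg (mul_nonneg he.1 hφ.1) (sq_nonneg w)]
  · refine ⟨1, e + φ - 1, ⟨by linarith, by linarith [he.2, hφ.2]⟩, by simp, fun w _ => ?_⟩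
    linarith [mul_nonneg (mul_nonneg (sub_nonneg.2 he.2) (sub_nonneg.2 hφ.2)) (sq_nonneg w)]

lemma exists_pow_mul_le_prod {ι : Type*} (s : Finset ι) {e : ι → ℝ} (he : ∀ i ∈ s, e i ∈ Icc 0 1) :
    ∃ (k : ℕ) (φ : ℝ), φ ∈ Icc 0 1 ∧ k + φ = ∑ i ∈ s, e i ∧
      ∀ w ≥ -1, (1 + w) ^ k * (1 + φ * w) ≤ ∏ i ∈ s, (1 + e i * w) := by
  classical
  induction s using Finset.induction_on with
  | empty => exact ⟨0, 0, by simp, by simp, by simp⟩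
  | insert i s hi ih =>
    obtain ⟨hei, hes⟩ := (Finset.forall_mem_insert _ _ _).1 he
    obtain ⟨k, φ, hφ, hsum, hprod⟩ := ih hes
    obtain ⟨l, ψ, hψ, hsum', hmul⟩ := exists_pow_mul_le_mul hei hφ
    refine ⟨k + l, ψ, hψ, ?_, fun w hw => ?_⟩
    · rw [Finset.sum_insert hi, ← hsum]
      push_cast
      linarith
    · rw [Finset.prod_insert hi]
      calc (1 + w) ^ (k + l) * (1 + ψ * w) = (1 + w) ^ k * ((1 + w) ^ l * (1 + ψ * w)) := by ring
        _ ≤ (1 + w) ^ k * ((1 + e i * w) * (1 + φ * w)) :=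
          mul_le_mul_of_nonneg_left (hmul w hw) (pow_nonneg (by linarith) k)
        _ = (1 + e i * w) * ((1 + w) ^ k * (1 + φ * w)) := by ring
        _ ≤ (1 + e i * w) * ∏ i ∈ s, (1 + e i * w) :=
          mul_le_mul_of_nonneg_left (hprod w hw) (one_add_mul_nonneg hei hw)

/- A factor `1 + e * u` with `0 ≤ e ≤ 1` counts only as a fraction `e` of a degree, since these
factors may be replaced by `(1 + u) ^ k * (1 + φ * u)` without changing the polynomial to first
order at `0` or increasing it on `[-1, 1]`. -/
lemma abs_eval_zero_derivative_mul_prod_le {ι : Type*} (q : ℝ[X]) (s : Finset ι) {e : ι → ℝ}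
    (he : ∀ i ∈ s, e i ∈ Icc 0 1) {M : ℝ}
    (hM : ∀ u ∈ Icc (-1) 1, |(q * ∏ i ∈ s, (1 + C (e i) * X)).eval u| ≤ M) :
    |(derivative (q * ∏ i ∈ s, (1 + C (e i) * X))).eval 0| ≤
      (q.natDegree + ∑ i ∈ s, e i + 1) * M := by
  obtain ⟨k, φ, hφ, hsum, hprod⟩ := exists_pow_mul_le_prod s he
  have hM0 : 0 ≤ M := (abs_nonneg _).trans (hM 0 (by norm_num))
  obtain ⟨r, hr⟩ : ∃ r : ℝ[X], r = (1 + X) ^ k * (1 + C φ * X) := ⟨_, rfl⟩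
  have hr_deg : r.natDegree ≤ k + 1 := by rw [hr]; compute_degree
  have hr_eval : ∀ u, r.eval u = (1 + u) ^ k * (1 + φ * u) := fun u => by simp [hr]
  have hr_deriv : (derivative r).eval 0 = ∑ i ∈ s, e i := by
    rw [← hsum, hr]
    simp [derivative_pow]
  have hsame :
      (derivative (q * ∏ i ∈ s, (1 + C (e i) * X))).eval 0 = (derivative (q * r)).eval 0 := by
    simp only [derivative_mul, eval_add, eval_mul, eval_zero_derivative_prod_one_add, hr_deriv,
      hr_eval]
    simp [eval_prod]
  have hbound : ∀ u ∈ Icc (-1) 1, |(q * r).eval u| ≤ M := by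
    intro u hu
    refine le_trans ?_ (hM u hu)
    have hr_nonneg : 0 ≤ (1 + u) ^ k * (1 + φ * u) :=
      mul_nonneg (pow_nonneg (by linarith [hu.1]) k) (one_add_mul_nonneg hφ hu.1)
    rw [eval_mul, eval_mul, abs_mul, abs_mul, hr_eval, eval_prod]
    refine mul_le_mul_of_nonneg_left (abs_le_abs_of_nonneg hr_nonneg ?_) (abs_nonneg _)
    simpa using hprod u hu.1
  have hdeg : ((q * r).natDegree : ℝ) ≤ q.natDegree + ∑ i ∈ s, e i + 1 := by
    have hle : ((q * r).natDegree : ℝ) ≤ q.natDegree + (k + 1 : ℕ) := by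
      exact_mod_cast natDegree_mul_le.trans (Nat.add_le_add_left hr_deg _)
    push_cast at hle
    linarith [hφ.1]
  have hbern := abs_eval_derivative_mul_sqrt_one_sub_sq_le hbound (x := 0) (by norm_num)
  rw [hsame]
  calc _ ≤ ((q * r).natDegree : ℝ) * M := by simpa using hbern
    _ ≤ _ := by gcongr

section Comonic

variable {ι : Type*} [Fintype ι] (y : ι → ℝ)

/-- The polynomial with constant term `1` whose roots, with multiplicity, are the nonzero reals
`y i`: the normalization of an oscillating polynomial at a point that is not a root. A vanishing
`y i` contributes the factor `1`. -/
noncomputable def comonic : ℝ[X] := ∏ i, (1 - C (y i)⁻¹ * X)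

lemma eval_comonic (t : ℝ) : (comonic y).eval t = ∏ i, (1 - t / y i) := by
  simp [comonic, eval_prod, div_eq_inv_mul]

lemma natDegree_comonic_le : (comonic y).natDegree ≤ Fintype.card ι := by
  refine (natDegree_prod_le _ _).trans ?_
  rw [← Finset.card_univ, Finset.card_eq_sum_ones]
  gcongr
  compute_degree

lemma eval_zero_derivative_comonic : (derivative (comonic y)).eval 0 = -∑ i, (y i)⁻¹ := by
  have h := eval_zero_derivative_prod_one_add Finset.univ fun i => -(y i)⁻¹
  simpa [comonic, sub_eq_add_neg] using h

lemma antitoneOn_eval_comonic {T : ℝ} (hT : ∀ i, T ≤ y i) :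
    AntitoneOn (comonic y).eval (Icc 0 T) := by
  intro u hu v hv huv
  simp only [eval_comonic]
  refine Finset.prod_le_prod (fun i _ => ?_) fun i _ => ?_
  · exact sub_nonneg.2 (div_le_one_of_le₀ (hv.2.trans (hT i)) ((hu.1.trans hu.2).trans (hT i)))
  · have hyi : 0 ≤ y i := (hu.1.trans hu.2).trans (hT i)
    gcongr

variable {y} in
lemma comonic_comp_eq_mul_prod {T : ℝ} (hT : 0 < T) (s : Finset ι) (hs : ∀ i ∈ s, T < y i) :
    ∃ q : ℝ[X], q.natDegree ≤ Fintype.card ι - s.card ∧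
      (comonic y).comp (C T - C T * X) = q * ∏ i ∈ s, (1 + C (T / (y i - T)) * X) := by
  classical
  refine ⟨C (∏ i ∈ s, (1 - T / y i)) * ∏ i ∈ sᶜ, (1 - C (y i)⁻¹ * (C T - C T * X)), ?_, ?_⟩
  · refine (natDegree_C_mul_le _ _).trans ((natDegree_prod_le _ _).trans ?_)
    rw [← Finset.card_compl, Finset.card_eq_sum_ones]
    gcongr
    compute_degree
  · refine Polynomial.funext fun u => ?_
    rw [eval_comp, eval_comonic, ← Finset.prod_mul_prod_compl s]
    simp only [eval_sub, eval_mul, eval_C, eval_X, eval_prod, eval_add, eval_one]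
    rw [mul_right_comm, ← Finset.prod_mul_distrib]
    congr 1
    · refine Finset.prod_congr rfl fun i hi => ?_
      have hyT := sub_ne_zero.2 (hs i hi).ne'
      have hy := (hT.trans (hs i hi)).ne'
      field_simp
      ring
    · exact Finset.prod_congr rfl fun i _ => by rw [div_eq_inv_mul]

variable {y} in
lemma abs_eval_derivative_comonic_mul_le (hy : ∀ i, 0 < y i) {T : ℝ} (hT : 0 < T) {M : ℝ}
    (hM : ∀ x ∈ Icc 0 (2 * T), |(comonic y).eval x| ≤ M) :
    |(derivative (comonic y)).eval T| * T ≤ (∑ i, min 1 (2 * T / y i) + 1) * M := by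
  classical
  have hM0 : 0 ≤ M := (abs_nonneg _).trans (hM 0 ⟨le_rfl, by linarith⟩)
  set s := Finset.univ.filter fun i => 2 * T ≤ y i with hs
  have hsT : ∀ i ∈ s, 2 * T ≤ y i := fun i hi => (Finset.mem_filter.1 hi).2
  obtain ⟨q, hq, hcomp⟩ := comonic_comp_eq_mul_prod hT s fun i hi =>
    (by linarith [hsT i hi] : T < y i)
  have hslope : ∀ i ∈ s, T / (y i - T) ∈ Icc 0 1 ∧ T / (y i - T) ≤ min 1 (2 * T / y i) := by
    intro i hi
    have hyT : 0 < y i - T := by linarith [hsT i hi]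
    have hle : T / (y i - T) ≤ 1 := (div_le_one hyT).2 (by linarith [hsT i hi])
    refine ⟨⟨by positivity, hle⟩, le_min hle ?_⟩
    rw [div_le_div_iff₀ hyT (hy i)]
    nlinarith [hsT i hi]
  have hbern := abs_eval_zero_derivative_mul_prod_le q s (M := M) (fun i hi => (hslope i hi).1)
    fun u hu => by
      rw [← hcomp, eval_comp]
      simp only [eval_sub, eval_mul, eval_C, eval_X]
      exact hM _ ⟨by nlinarith [hu.2], by nlinarith [hu.1]⟩
  have hchain : |(derivative (comonic y)).eval T| * T =
      |(derivative (q * ∏ i ∈ s, (1 + C (T / (y i - T)) * X))).eval 0| := by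
    rw [← hcomp, derivative_comp]
    simp [abs_of_pos hT, mul_comm T]
  have hcompl : (q.natDegree : ℝ) ≤ ∑ i ∈ sᶜ, min 1 (2 * T / y i) := by
    have hmin : ∀ i ∈ sᶜ, min 1 (2 * T / y i) = 1 := fun i hi => by
      rw [hs, Finset.mem_compl, Finset.mem_filter_univ, not_le] at hi
      exact min_eq_left ((one_le_div (hy i)).2 hi.le)
    rw [Finset.sum_congr rfl hmin, Finset.sum_const, nsmul_one, Finset.card_compl]
    exact_mod_cast hq
  rw [hchain, ← Finset.sum_compl_add_sum s]
  refine hbern.trans (mul_le_mul_of_nonneg_right ?_ hM0)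
  linarith [Finset.sum_le_sum fun i hi => (hslope i hi).2]

end Comonic

/-! ### Interlacing -/

section SortedRoots

/-- `SortedRoots p y` says that the real polynomial `p` has as many real roots as its degree, and
that `y` lists them in increasing order, with multiplicity. -/
structure SortedRoots (p : ℝ[X]) {n : ℕ} (y : Fin n → ℝ) : Prop where
  natDegree_eq : p.natDegree = n
  roots_eq : p.roots = Finset.univ.val.map y
  monotone : Monotone y

lemma exists_sortedRoots {p : ℝ[X]} {n : ℕ} (hdeg : p.natDegree = n) (hcard : p.roots.card = n) :
    ∃ y : Fin n → ℝ, SortedRoots p y := by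
  have hlen : (p.roots.sort (· ≤ ·)).length = n := by rw [Multiset.length_sort, hcard]
  subst hlen
  refine ⟨(p.roots.sort (· ≤ ·)).get, hdeg, ?_, ?_⟩
  · rw [Fin.univ_val_map, List.ofFn_get, Multiset.sort_eq]
  · rw [← List.sortedLE_ofFn_iff, List.ofFn_get]
    exact (Multiset.pairwise_sort _ _).sortedLE

namespace SortedRoots

variable {p : ℝ[X]} {n : ℕ} {y : Fin n → ℝ}

lemma card_roots (h : SortedRoots p y) : p.roots.card = n := by simp [h.roots_eq]

lemma countP_roots (h : SortedRoots p y) (q : ℝ → Prop) [DecidablePred q] :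
    p.roots.countP q = (Finset.univ.filter fun i => q (y i)).card := by
  rw [h.roots_eq, Multiset.countP_map]
  rfl

lemma mem_roots (h : SortedRoots p y) (i : Fin n) : y i ∈ p.roots := by simp [h.roots_eq]

lemma eq_C_mul_comonic (h : SortedRoots p y) (hy : ∀ i, y i ≠ 0) :
    p = C (p.eval 0) * comonic y := by
  have hsplits : p.Splits := splits_iff_card_roots.2 (h.card_roots.trans h.natDegree_eq.symm)
  have heval : ∀ t, p.eval t = p.leadingCoeff * ∏ i, (t - y i) := fun t => by
    rw [hsplits.eval_eq_prod_roots, h.roots_eq, Multiset.map_map]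
    rfl
  refine Polynomial.funext fun t => ?_
  rw [eval_mul, eval_C, eval_comonic, heval, heval, mul_assoc, ← Finset.prod_mul_distrib]
  congr 1
  refine Finset.prod_congr rfl fun i _ => ?_
  field_simp [hy i]
  ring

lemma C_mul_comp_X_add_C (h : SortedRoots p y) {c : ℝ} (hc : c ≠ 0) (a : ℝ) :
    SortedRoots (C c * p.comp (X + C a)) fun i => y i - a where
  natDegree_eq := by
    rw [natDegree_C_mul hc, natDegree_comp, natDegree_X_add_C, mul_one, h.natDegree_eq]
  roots_eq := by
    have hroots := roots_comp_C_mul_X_add_C p 1 a isUnit_one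
    rw [C_1, one_mul, h.roots_eq, Multiset.map_map] at hroots
    simpa [roots_C_mul _ hc, Function.comp_def] using hroots
  monotone := fun _ _ hij => sub_le_sub_right (h.monotone hij) a

lemma exists_derivative {y : Fin (n + 1) → ℝ} (h : SortedRoots p y) :
    ∃ ρ : Fin n → ℝ, SortedRoots (derivative p) ρ := by
  have hdeg : (derivative p).natDegree = n := by rw [natDegree_derivative, h.natDegree_eq]; rfl
  refine exists_sortedRoots hdeg (le_antisymm (hdeg ▸ card_roots' _) ?_)
  have := card_roots_le_derivative p
  rw [h.card_roots] at this
  omega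

end SortedRoots

lemma filter_roots_sub_dedup_add_sdiff_le (p : ℝ[X]) (q : ℝ → Prop) [DecidablePred q] :
    p.roots.filter q - (p.roots.filter q).dedup +
      (((derivative p).roots.filter q).toFinset \ (p.roots.filter q).toFinset).val ≤
        (derivative p).roots.filter q := by
  set R := p.roots.filter q
  set R' := (derivative p).roots.filter q
  refine Multiset.le_iff_count.2 fun x => ?_
  rw [Multiset.count_add, Multiset.count_sub, Multiset.count_dedup]
  by_cases hx : x ∈ R
  · have hqx := Multiset.of_mem_filter hx
    have hnot : x ∉ R'.toFinset \ R.toFinset := by simp [hx]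
    rw [if_pos hx, Multiset.count_eq_zero_of_notMem hnot, Multiset.count_filter_of_pos hqx,
      Multiset.count_filter_of_pos hqx, count_roots, count_roots]
    exact rootMultiplicity_sub_one_le_derivative_rootMultiplicity p x
  · rw [if_neg hx, Multiset.count_eq_zero_of_notMem hx, zero_tsub, zero_add]
    refine Multiset.le_iff_count.1 ?_ x
    exact (Multiset.toFinset_val R' ▸ Finset.val_le_iff.2 Finset.sdiff_subset).trans R'.dedup_le

lemma countP_roots_le_countP_roots_derivative_add_one (p : ℝ[X]) (S : Set ℝ) [S.OrdConnected]
    [DecidablePred (· ∈ S)] :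
    p.roots.countP (· ∈ S) ≤ (derivative p).roots.countP (· ∈ S) + 1 := by
  rcases eq_or_ne (derivative p) 0 with hp' | hp'
  · rw [eq_C_of_derivative_eq_zero hp', roots_C]
    simp
  rw [Multiset.countP_eq_card_filter, Multiset.countP_eq_card_filter]
  have hcard := Multiset.card_le_card (filter_roots_sub_dedup_add_sdiff_le p (· ∈ S))
  set R := p.roots.filter (· ∈ S)
  set R' := (derivative p).roots.filter (· ∈ S)
  have hdistinct : R.toFinset.card ≤ (R'.toFinset \ R.toFinset).card + 1 := by
    refine Finset.card_le_sdiff_of_interleaved fun x hx z hz hxz _ => ?_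
    obtain ⟨hxp, hxS⟩ := Multiset.mem_filter.1 (Multiset.mem_toFinset.1 hx)
    obtain ⟨hzp, hzS⟩ := Multiset.mem_filter.1 (Multiset.mem_toFinset.1 hz)
    obtain ⟨w, hw, hw0⟩ := exists_deriv_eq_zero hxz p.continuousOn
      ((isRoot_of_mem_roots hxp).trans (isRoot_of_mem_roots hzp).symm)
    rw [p.deriv] at hw0
    exact ⟨w, Multiset.mem_toFinset.2 (Multiset.mem_filter.2
      ⟨(mem_roots hp').2 hw0, ‹S.OrdConnected›.out hxS hzS (Ioo_subset_Icc_self hw)⟩), hw⟩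
  have hdedup := Multiset.card_le_card R.dedup_le
  rw [Multiset.card_add, Multiset.card_sub R.dedup_le, Finset.card_val] at hcard
  rw [Multiset.card_toFinset] at hdistinct
  omega

namespace SortedRoots

variable {p : ℝ[X]} {n : ℕ} {y : Fin (n + 1) → ℝ} {ρ : Fin n → ℝ}

lemma castSucc_le_derivative (h : SortedRoots p y) (h' : SortedRoots (derivative p) ρ)
    (i : Fin n) : y i.castSucc ≤ ρ i := by
  by_contra! hlt
  have hrolle := countP_roots_le_countP_roots_derivative_add_one p (Ici (y i.castSucc))
  rw [h.countP_roots, h'.countP_roots] at hrolle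
  have hy : Finset.Ici i.castSucc ⊆ Finset.univ.filter fun k => y k ∈ Ici (y i.castSucc) :=
    fun k hk => by simpa using h.monotone (Finset.mem_Ici.1 hk)
  have hρ : (Finset.univ.filter fun k => ρ k ∈ Ici (y i.castSucc)) ⊆ Finset.Ioi i := fun k hk =>
    Finset.mem_Ioi.2 (h'.monotone.reflect_lt (hlt.trans_le (Finset.mem_filter.1 hk).2))
  have hycard := Finset.card_le_card hy
  have hρcard := Finset.card_le_card hρ
  rw [Fin.card_Ici, Fin.val_castSucc] at hycard
  rw [Fin.card_Ioi] at hρcard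
  omega

lemma derivative_le_succ (h : SortedRoots p y) (h' : SortedRoots (derivative p) ρ)
    (i : Fin n) : ρ i ≤ y i.succ := by
  by_contra! hlt
  have hrolle := countP_roots_le_countP_roots_derivative_add_one p (Iic (y i.succ))
  rw [h.countP_roots, h'.countP_roots] at hrolle
  have hy : Finset.Iic i.succ ⊆ Finset.univ.filter fun k => y k ∈ Iic (y i.succ) :=
    fun k hk => by simpa using h.monotone (Finset.mem_Iic.1 hk)
  have hρ : (Finset.univ.filter fun k => ρ k ∈ Iic (y i.succ)) ⊆ Finset.Iio i := fun k hk =>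
    Finset.mem_Iio.2 (h'.monotone.reflect_lt (lt_of_le_of_lt (Finset.mem_filter.1 hk).2 hlt))
  have hycard := Finset.card_le_card hy
  have hρcard := Finset.card_le_card hρ
  rw [Fin.card_Iic, Fin.val_succ] at hycard
  rw [Fin.card_Iio] at hρcard
  omega

end SortedRoots

end SortedRoots

/-! ### The derivative at the zeros of the second derivative -/

section ProductBound

variable {ι : Type*} [Fintype ι] {w : ι → ℝ} {T : ℝ}

lemma abs_one_sub_div_le_abs_one_sub_div {ρ v : ℝ} (hT : 0 ≤ T) (hρ : 0 < ρ) (hv : 0 < v)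
    (h : v ≤ ρ ∧ ρ ≤ T ∨ T ≤ ρ ∧ ρ ≤ v) : |1 - T / ρ| ≤ |1 - T / v| := by
  rcases h with ⟨hvρ, hρT⟩ | ⟨hTρ, hρv⟩
  · have h1 : 1 ≤ T / ρ := (one_le_div hρ).2 hρT
    have h2 : T / ρ ≤ T / v := by gcongr
    rw [abs_of_nonpos (by linarith), abs_of_nonpos (by linarith)]
    linarith
  · have h1 : T / ρ ≤ 1 := (div_le_one hρ).2 hTρ
    have h2 : T / v ≤ T / ρ := by gcongr
    rw [abs_of_nonneg (by linarith), abs_of_nonneg (by linarith)]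
    linarith

lemma ne_of_one_le_prod_abs_one_sub_div (hw : ∀ i, 0 < w i) (hprod : 1 ≤ ∏ i, |1 - T / w i|)
    (i : ι) : w i ≠ T := by
  rintro rfl
  rw [Finset.prod_eq_zero (Finset.mem_univ i) (by simp [(hw i).ne'])] at hprod
  linarith

variable [DecidableEq ι] {s : Finset ι}

lemma sum_log_add_sum_log_nonneg (hw : ∀ i, 0 < w i) (hprod : 1 ≤ ∏ i, |1 - T / w i|) :
    0 ≤ ∑ i ∈ s, Real.log (T / w i - 1) + ∑ i ∈ sᶜ, Real.log (1 - T / w i) := by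
  have hne : ∀ i, |1 - T / w i| ≠ 0 := fun i => by
    rw [abs_ne_zero, sub_ne_zero, ne_comm, Ne, div_eq_one_iff_eq (hw i).ne']
    exact (ne_of_one_le_prod_abs_one_sub_div hw hprod i).symm
  have hlog := Real.log_nonneg hprod
  rw [Real.log_prod fun i _ => hne i, ← Finset.sum_add_sum_compl s] at hlog
  simpa only [Real.log_abs, ← Real.log_neg_eq_log (1 - _), neg_sub] using hlog

lemma two_mul_card_add_sum_le (hw : ∀ i, 0 < w i) (hs : ∀ i ∈ s, w i < T) (hs' : ∀ i ∉ s, T < w i)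
    (hprod : 1 ≤ ∏ i, |1 - T / w i|) :
    2 * (s.card : ℝ) + ∑ i ∈ sᶜ, T / w i ≤ ∑ i ∈ s, T / w i := by
  have hleft : ∑ i ∈ s, Real.log (T / w i - 1) ≤ ∑ i ∈ s, (T / w i - 2) := by
    gcongr with i hi
    linarith [Real.log_le_sub_one_of_pos (sub_pos.2 ((one_lt_div (hw i)).2 (hs i hi)))]
  have hright : ∑ i ∈ sᶜ, Real.log (1 - T / w i) ≤ ∑ i ∈ sᶜ, -(T / w i) := by
    gcongr with i hi
    linarith [Real.log_le_sub_one_of_pos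
      (sub_pos.2 ((div_lt_one (hw i)).2 (hs' i (Finset.mem_compl.1 hi))))]
  have hlog := sum_log_add_sum_log_nonneg (s := s) hw hprod
  rw [Finset.sum_sub_distrib, Finset.sum_const, nsmul_eq_mul] at hleft
  rw [Finset.sum_neg_distrib] at hright
  linarith

lemma two_mul_card_add_card_compl_mul_le {L : ℝ} (hL : 0 < L) (hw : ∀ i, 0 < w i)
    (hs : ∀ i ∈ s, w i < T) (hs' : ∀ i ∉ s, T < w i) (hL' : ∀ i ∉ s, 1 - T / w i ≤ L⁻¹)
    (hcard : s.card ≤ sᶜ.card) (hprod : 1 ≤ ∏ i, |1 - T / w i|) :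
    2 * (s.card : ℝ) + sᶜ.card * (L - 1) ≤ ∑ i ∈ s, T / w i := by
  have hleft : ∑ i ∈ s, Real.log (T / w i - 1) ≤
      ∑ i ∈ s, ((T / w i - 1) / L - 1 + Real.log L) := by
    gcongr with i hi
    have hpos : 0 < T / w i - 1 := sub_pos.2 ((one_lt_div (hw i)).2 (hs i hi))
    have hlog := Real.log_le_sub_one_of_pos (div_pos hpos hL)
    rw [Real.log_div hpos.ne' hL.ne'] at hlog
    linarith
  have hright : ∑ i ∈ sᶜ, Real.log (1 - T / w i) ≤ ∑ _i ∈ sᶜ, -Real.log L := by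
    gcongr with i hi
    rw [Finset.mem_compl] at hi
    rw [← Real.log_inv]
    exact Real.log_le_log (sub_pos.2 ((div_lt_one (hw i)).2 (hs' i hi))) (hL' i hi)
  have hlog := sum_log_add_sum_log_nonneg (s := s) hw hprod
  simp only [Finset.sum_add_distrib, Finset.sum_sub_distrib, ← Finset.sum_div, Finset.sum_const,
    nsmul_eq_mul, mul_one] at hleft hright
  have hdiff : (sᶜ.card - s.card : ℝ) * (1 - L⁻¹) ≤
      (∑ i ∈ s, T / w i - s.card) / L - s.card := by
    have hcard' : (0 : ℝ) ≤ sᶜ.card - s.card := sub_nonneg.2 (Nat.cast_le.2 hcard)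
    have := mul_le_mul_of_nonneg_left (Real.one_sub_inv_le_log_of_pos hL) hcard'
    linarith
  have hdiff' : (sᶜ.card - s.card : ℝ) * (L - 1) ≤ ∑ i ∈ s, T / w i - s.card - s.card * L := by
    calc _ = (sᶜ.card - s.card : ℝ) * (1 - L⁻¹) * L := by field_simp
      _ ≤ _ := mul_le_mul_of_nonneg_right hdiff hL.le
      _ = _ := by field_simp
  linarith

end ProductBound

section Comonic

variable {n : ℕ} {y : Fin (n + 1) → ℝ} {T : ℝ}

lemma sum_eq_add_sum_removeNth (f : ℝ → ℝ) (k : Fin (n + 1)) (s : Finset (Fin n)) :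
    ∑ i, f (y i) =
      f (y k) + (∑ i ∈ s, f (k.removeNth y i) + ∑ i ∈ sᶜ, f (k.removeNth y i)) := by
  rw [Finset.sum_add_sum_compl, Fin.sum_univ_succAbove _ k]
  rfl

lemma sum_inv_mul_eq (k : Fin (n + 1)) (s : Finset (Fin n)) (T : ℝ) :
    (∑ i, (y i)⁻¹) * T = T / y k +
      (∑ i ∈ s, T / k.removeNth y i + ∑ i ∈ sᶜ, T / k.removeNth y i) := by
  rw [Finset.sum_mul, ← sum_eq_add_sum_removeNth (fun v => T / v)]
  exact Finset.sum_congr rfl fun i _ => inv_mul_eq_div _ _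

lemma abs_eval_derivative_comonic_lt_of_two_mul_le (hy : ∀ i, 0 < y i) (hT : 0 < T)
    (hM : ∀ x ∈ Icc 0 (2 * T), |(comonic y).eval x| ≤ 1) (k : Fin (n + 1)) {s : Finset (Fin n)}
    (hs : ∀ i ∈ s, k.removeNth y i < T) (hs' : ∀ i ∉ s, T < k.removeNth y i) (hcard : 2 ≤ s.card)
    (hprod : 1 ≤ ∏ i, |1 - T / k.removeNth y i|) :
    |(derivative (comonic y)).eval T| < ∑ i, (y i)⁻¹ := by
  have hbern := abs_eval_derivative_comonic_mul_le hy hT hM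
  have hsum := two_mul_card_add_sum_le (w := k.removeNth y) (fun _ => hy _) hs hs' hprod
  rw [sum_eq_add_sum_removeNth (fun v => min 1 (2 * T / v)) k s] at hbern
  have hk : min 1 (2 * T / y k) ≤ 1 := min_le_left _ _
  have hleft : ∑ i ∈ s, min 1 (2 * T / k.removeNth y i) ≤ s.card := by
    simpa using Finset.sum_le_card_nsmul s _ 1 fun i _ => min_le_left 1 (2 * T / k.removeNth y i)
  have hright : ∑ i ∈ sᶜ, min 1 (2 * T / k.removeNth y i) ≤
      2 * ∑ i ∈ sᶜ, T / k.removeNth y i := by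
    rw [Finset.mul_sum]
    gcongr with i
    exact (min_le_right _ _).trans_eq (mul_div_assoc _ _ _)
  have hcard' : (2 : ℝ) ≤ s.card := by exact_mod_cast hcard
  have hyk : 0 < T / y k := div_pos hT (hy k)
  refine lt_of_mul_lt_mul_right ?_ hT.le
  rw [sum_inv_mul_eq k s]
  linarith

lemma abs_eval_derivative_comonic_mul_le_mul_sqrt {B : ℝ} (hT : 0 < T) (hTB : T < B)
    (hM : ∀ x ∈ Icc 0 B, |(comonic y).eval x| ≤ 1) :
    |(derivative (comonic y)).eval T| * T ≤ (n + 1) * √(T / (B - T)) := by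
  have hBT : 0 < B - T := sub_pos.2 hTB
  have hbern := abs_eval_derivative_mul_sqrt_le hM ⟨hT.le, hTB.le⟩
  have hsqrt : √((T - 0) * (B - T)) * √(T / (B - T)) = T := by
    rw [← Real.sqrt_mul (by nlinarith), sub_zero,
      show T * (B - T) * (T / (B - T)) = T * T by field_simp, Real.sqrt_mul_self hT.le]
  calc |(derivative (comonic y)).eval T| * T
      = |(derivative (comonic y)).eval T| * √((T - 0) * (B - T)) * √(T / (B - T)) := by
        rw [mul_assoc, hsqrt]
    _ ≤ (comonic y).natDegree * 1 * √(T / (B - T)) := by gcongr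
    _ ≤ (n + 1) * √(T / (B - T)) := by
        rw [mul_one]
        gcongr
        exact_mod_cast (natDegree_comonic_le y).trans_eq (Fintype.card_fin _)

lemma add_add_one_mul_lt {l r g : ℝ} (hl : 2 ≤ l) (hlr : l ≤ r) (hg : 1 < g) :
    (l + r + 1) * g < 2 * l + r * g ^ 2 + (r + 1) * (1 / 2) := by
  have h1 : 0 ≤ (l - 2) * ((g - 1) ^ 2 + 3 / 2) := mul_nonneg (by linarith) (by positivity)
  have h2 : 0 ≤ (r - l) * (g * (g - 1) + 1 / 2) := mul_nonneg (by linarith) (by nlinarith)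
  nlinarith [sq_nonneg (g - 1), sq_nonneg (g - 5 / 4)]

lemma abs_eval_derivative_comonic_lt_of_lt_two_mul {B : ℝ} (hy : ∀ i, y i ∈ Ioc 0 B) (hT : 0 < T)
    (hTB : T < B) (hB : B < 2 * T) (hM : ∀ x ∈ Icc 0 B, |(comonic y).eval x| ≤ 1)
    (k : Fin (n + 1)) {s : Finset (Fin n)} (hs : ∀ i ∈ s, k.removeNth y i < T)
    (hs' : ∀ i ∉ s, T < k.removeNth y i) (hcard : 2 ≤ s.card) (hcard' : s.card ≤ sᶜ.card)
    (hprod : 1 ≤ ∏ i, |1 - T / k.removeNth y i|) :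
    |(derivative (comonic y)).eval T| < ∑ i, (y i)⁻¹ := by
  have hB0 : 0 < B := hT.trans hTB
  have hBT : 0 < B - T := sub_pos.2 hTB
  have hhalf : ∀ i, 1 / 2 ≤ T / y i := fun i =>
    calc (1 / 2 : ℝ) ≤ T / B := by rw [le_div_iff₀ hB0]; linarith
      _ ≤ T / y i := by gcongr; exacts [(hy i).1, (hy i).2]
  have hleft := two_mul_card_add_card_compl_mul_le (w := k.removeNth y)
    (L := B / (B - T)) (by positivity) (fun _ => (hy _).1) hs hs' (fun i _ => by
      rw [inv_div, sub_div, div_self hB0.ne']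
      gcongr
      exacts [(hy _).1, (hy _).2]) hcard' hprod
  have hright : sᶜ.card * (1 / 2 : ℝ) ≤ ∑ i ∈ sᶜ, T / k.removeNth y i := by
    rw [← nsmul_eq_mul]
    exact Finset.card_nsmul_le_sum _ _ _ fun i _ => hhalf _
  have hbern := abs_eval_derivative_comonic_mul_le_mul_sqrt hT hTB hM
  set g := √(T / (B - T)) with hg
  have hg2 : B / (B - T) - 1 = g ^ 2 := by
    rw [hg, Real.sq_sqrt (by positivity)]
    field_simp
    ring
  have hg1 : 1 < g := by
    rw [hg, Real.lt_sqrt zero_le_one, one_pow, one_lt_div hBT]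
    linarith
  have hn : (s.card : ℝ) + sᶜ.card = n := by exact_mod_cast s.card_add_card_compl.trans (by simp)
  have hlt := add_add_one_mul_lt (by exact_mod_cast hcard : (2 : ℝ) ≤ s.card)
    (by exact_mod_cast hcard' : (s.card : ℝ) ≤ sᶜ.card) hg1
  rw [hg2] at hleft
  rw [hn] at hlt
  refine lt_of_mul_lt_mul_right ?_ hT.le
  rw [sum_inv_mul_eq k s]
  linarith [hhalf k]

lemma abs_eval_derivative_comonic_lt {B : ℝ} (hy : ∀ i, y i ∈ Ioc 0 B) (hT : T ∈ Ioo 0 B)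
    (hM : ∀ x ∈ Icc 0 B, |(comonic y).eval x| ≤ 1) (k : Fin (n + 1)) {s : Finset (Fin n)}
    (hs : ∀ i ∈ s, k.removeNth y i < T) (hs' : ∀ i ∉ s, T < k.removeNth y i) (hcard : 2 ≤ s.card)
    (hcard' : s.card ≤ sᶜ.card) (hprod : 1 ≤ ∏ i, |1 - T / k.removeNth y i|) :
    |(derivative (comonic y)).eval T| < ∑ i, (y i)⁻¹ := by
  rcases le_or_gt (2 * T) B with hle | hlt
  · exact abs_eval_derivative_comonic_lt_of_two_mul_le (fun i => (hy i).1) hT.1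
      (fun x hx => hM x ⟨hx.1, hx.2.trans hle⟩) k hs hs' hcard hprod
  · exact abs_eval_derivative_comonic_lt_of_lt_two_mul hy hT.1 hT.2 hlt hM k hs hs' hcard hcard'
      hprod

end Comonic

namespace SortedRoots

variable {p : ℝ[X]} {n : ℕ} {y : Fin (n + 1) → ℝ} {ρ : Fin n → ℝ} {T : ℝ}

lemma removeNth_le_derivative (h : SortedRoots p y) (h' : SortedRoots (derivative p) ρ)
    {k : Fin (n + 1)} {i : Fin n} (hi : i.castSucc < k) : k.removeNth y i ≤ ρ i := by
  rw [Fin.removeNth_apply, Fin.succAbove_of_castSucc_lt _ _ hi]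
  exact h.castSucc_le_derivative h' i

lemma derivative_le_removeNth (h : SortedRoots p y) (h' : SortedRoots (derivative p) ρ)
    {k : Fin (n + 1)} {i : Fin n} (hi : k ≤ i.castSucc) : ρ i ≤ k.removeNth y i := by
  rw [Fin.removeNth_apply, Fin.succAbove_of_le_castSucc _ _ hi]
  exact h.derivative_le_succ h' i

lemma abs_eval_derivative_le_mul_prod_removeNth (h : SortedRoots p y)
    (h' : SortedRoots (derivative p) ρ) (hy : ∀ i, 0 < y i) (hT : 0 ≤ T) {k : Fin (n + 1)}
    (hρ : ∀ i, i.castSucc < k → ρ i ≤ T) (hρ' : ∀ i, k ≤ i.castSucc → T ≤ ρ i) :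
    |(derivative p).eval T| ≤
      |(derivative p).eval 0| * ∏ i, |1 - T / k.removeNth y i| := by
  have hρ0 : ∀ i, 0 < ρ i := fun i => (hy _).trans_le (h.castSucc_le_derivative h' i)
  have heval : (derivative p).eval T = (derivative p).eval 0 * ∏ i, (1 - T / ρ i) := by
    conv_lhs => rw [h'.eq_C_mul_comonic fun i => (hρ0 i).ne', eval_mul, eval_C, eval_comonic]
  rw [heval, abs_mul, Finset.abs_prod]
  refine mul_le_mul_of_nonneg_left (Finset.prod_le_prod (fun _ _ => abs_nonneg _) fun i _ =>
    abs_one_sub_div_le_abs_one_sub_div hT (hρ0 i) (hy _) ?_) (abs_nonneg _)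
  rcases lt_or_ge i.castSucc k with hik | hik
  · exact Or.inl ⟨h.removeNth_le_derivative h' hik, hρ i hik⟩
  · exact Or.inr ⟨hρ' i hik, h.derivative_le_removeNth h' hik⟩

lemma abs_eval_derivative_lt_of_two_le {B : ℝ} (h : SortedRoots p y)
    (h' : SortedRoots (derivative p) ρ) (hy : ∀ i, y i ∈ Ioc 0 B) (hp0 : p.eval 0 = 1)
    (hM : ∀ x ∈ Icc 0 B, |p.eval x| ≤ 1) (hT : 0 ≤ T) {k : Fin (n + 1)} (hk : 2 ≤ (k : ℕ))
    (hkn : 2 * (k : ℕ) ≤ n) (hρ : ∀ i, i.castSucc < k → ρ i ≤ T)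
    (hρ' : ∀ i, k ≤ i.castSucc → T ≤ ρ i) :
    |(derivative p).eval T| < |(derivative p).eval 0| := by
  have hcomonic : p = comonic y := by
    simpa [hp0] using h.eq_C_mul_comonic fun i => (hy i).1.ne'
  have hpos : 0 < ∑ i, (y i)⁻¹ :=
    Finset.sum_pos (fun i _ => inv_pos.2 (hy i).1) Finset.univ_nonempty
  have hsum : |(derivative p).eval 0| = ∑ i, (y i)⁻¹ := by
    rw [hcomonic, eval_zero_derivative_comonic, abs_neg, abs_of_pos hpos]
  by_contra! hle
  have hprod : 1 ≤ ∏ i, |1 - T / k.removeNth y i| :=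
    (le_mul_iff_one_le_right (hsum ▸ hpos)).1 (hle.trans
      (h.abs_eval_derivative_le_mul_prod_removeNth h' (fun i => (hy i).1) hT hρ hρ'))
  have hne := ne_of_one_le_prod_abs_one_sub_div (w := k.removeNth y) (fun _ => (hy _).1) hprod
  have hlt : ∀ i, i.castSucc < k → k.removeNth y i < T := fun i hi =>
    (hne i).lt_of_le ((h.removeNth_le_derivative h' hi).trans (hρ i hi))
  have hgt : ∀ i, k ≤ i.castSucc → T < k.removeNth y i := fun i hi =>
    (hne i).symm.lt_of_le ((hρ' i hi).trans (h.derivative_le_removeNth h' hi))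
  have hT0 : 0 < T := (hy _).1.trans (hlt ⟨0, by omega⟩ (two_pos.trans_le hk))
  have hTB : T < B := (hgt ⟨k, by omega⟩ le_rfl).trans_le (hy _).2
  have hcard : (Finset.univ.filter fun i : Fin n => i.castSucc < k).card = k := by
    simp only [Fin.lt_def, Fin.val_castSucc, Fin.card_filter_val_lt]
    omega
  refine (abs_eval_derivative_comonic_lt hy ⟨hT0, hTB⟩ (hcomonic ▸ hM) k
    (s := Finset.univ.filter fun i => i.castSucc < k) (by simpa using hlt) (by simpa using hgt)
    (hk.trans_eq hcard.symm) ?_ hprod).not_ge (by rwa [← hcomonic, ← hsum])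
  rw [Finset.card_compl, hcard, Fintype.card_fin]
  omega

end SortedRoots

section Trapezoid

variable {p : ℝ[X]} {a T : ℝ}

lemma sub_mul_add_le_of_antitoneOn (haT : a ≤ T)
    (hanti : AntitoneOn (derivative (derivative p)).eval (Icc a T)) :
    (T - a) * ((derivative p).eval a + (derivative p).eval T) ≤ 2 * (p.eval T - p.eval a) := by
  set q : ℝ[X] := 2 * p - (X - C a) * (C ((derivative p).eval a) + derivative p) with hq
  have hderiv : ∀ x, (derivative q).eval x = (derivative p).eval x - (derivative p).eval a -
      (x - a) * (derivative (derivative p)).eval x := fun x => by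
    simp only [hq, derivative_sub, derivative_mul, derivative_ofNat, zero_mul, zero_add,
      derivative_X, derivative_C, sub_zero, one_mul, derivative_add, eval_sub, eval_mul, eval_ofNat,
      eval_add, eval_C, eval_X]
    ring
  have hmono : MonotoneOn q.eval (Icc a T) := by
    refine monotoneOn_of_deriv_nonneg (convex_Icc a T) q.continuousOn
      q.differentiable.differentiableOn fun x hx => ?_
    rw [interior_Icc] at hx
    rw [q.deriv, hderiv, sub_nonneg, mul_comm]
    refine (convex_Icc a x).mul_sub_le_image_sub_of_le_deriv (derivative p).continuousOn
      (derivative p).differentiable.differentiableOn (fun z hz => ?_) a ⟨le_rfl, hx.1.le⟩ x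
      ⟨hx.1.le, le_rfl⟩ hx.1.le
    rw [interior_Icc] at hz
    rw [Polynomial.deriv]
    exact hanti ⟨hz.1.le, (hz.2.trans hx.2).le⟩ ⟨hx.1.le, hx.2.le⟩ hz.2.le
  have hle := hmono ⟨le_rfl, haT⟩ ⟨haT, le_rfl⟩ haT
  simp only [hq, eval_sub, eval_mul, eval_ofNat, eval_X, eval_C, sub_self, eval_add, zero_mul,
    sub_zero] at hle
  linarith

lemma abs_eval_derivative_lt_of_antitoneOn {b : ℝ} (hT : T ∈ Ioo a b)
    (hmax : ∀ x ∈ Icc a b, p.eval x ≤ p.eval a) (hneg : (derivative p).eval a < 0)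
    (hpos : ∀ x ∈ Ioo a T, 0 < (derivative (derivative p)).eval x)
    (hanti : AntitoneOn (derivative (derivative p)).eval (Icc a T)) :
    |(derivative p).eval T| < |(derivative p).eval a| := by
  have hmono : StrictMonoOn (derivative p).eval (Icc a T) := by
    refine strictMonoOn_of_deriv_pos (convex_Icc a T) (derivative p).continuousOn fun x hx => ?_
    rw [interior_Icc] at hx
    simpa only [Polynomial.deriv] using hpos x hx
  have hlt := hmono ⟨le_rfl, hT.1.le⟩ ⟨hT.1.le, le_rfl⟩ hT.1
  rw [abs_of_neg hneg, abs_lt, neg_neg]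
  refine ⟨hlt, ?_⟩
  by_contra! hle
  have htrap := sub_mul_add_le_of_antitoneOn hT.1.le hanti
  have hTa : p.eval a ≤ p.eval T := by
    linarith [mul_nonneg (sub_nonneg.2 hT.1.le) (by linarith :
      0 ≤ (derivative p).eval a + (derivative p).eval T)]
  have hlocal : IsLocalMax p.eval T := by
    filter_upwards [Icc_mem_nhds hT.1 hT.2] with x hx using (hmax x hx).trans hTa
  have hzero := hlocal.deriv_eq_zero
  rw [p.deriv] at hzero
  linarith

end Trapezoid

namespace SortedRoots

variable {p : ℝ[X]} {m : ℕ} {y : Fin (m + 2) → ℝ} {τ : Fin m → ℝ} {B : ℝ}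

lemma abs_eval_derivative_lt_of_forall_le (h : SortedRoots p y) {ρ : Fin (m + 1) → ℝ}
    (h' : SortedRoots (derivative p) ρ) (h'' : SortedRoots (derivative (derivative p)) τ)
    (hy : ∀ i, y i ∈ Ioc 0 B) (hmax : ∀ x ∈ Icc 0 B, p.eval x ≤ p.eval 0)
    (hneg : (derivative p).eval 0 < 0) {j : Fin m} (hj : ∀ i, τ j ≤ τ i) :
    |(derivative p).eval (τ j)| < |(derivative p).eval 0| := by
  have hρ : ∀ i, 0 < ρ i := fun i => (hy _).1.trans_le (h.castSucc_le_derivative h' i)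
  have hτ : ∀ i, 0 < τ i := fun i => (hρ _).trans_le (h'.castSucc_le_derivative h'' i)
  have hsecond : 0 < (derivative (derivative p)).eval 0 := by
    rw [h'.eq_C_mul_comonic fun i => (hρ i).ne', derivative_C_mul, eval_C_mul,
      eval_zero_derivative_comonic, mul_neg, ← neg_mul]
    exact mul_pos (neg_pos.2 hneg)
      (Finset.sum_pos (fun i _ => inv_pos.2 (hρ i)) Finset.univ_nonempty)
  have heval : ∀ x, (derivative (derivative p)).eval x =
      (derivative (derivative p)).eval 0 * (comonic τ).eval x := fun x => by
    conv_lhs => rw [h''.eq_C_mul_comonic fun i => (hτ i).ne', eval_C_mul]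
  rcases (h'.derivative_le_succ h'' j).eq_or_lt with heq | hlt
  · rw [heq, isRoot_of_mem_roots (h'.mem_roots j.succ), abs_zero]
    exact abs_pos.2 hneg.ne
  · refine abs_eval_derivative_lt_of_antitoneOn
      ⟨hτ j, (hlt.trans_le (h.derivative_le_succ h' _)).trans_le (hy _).2⟩ hmax hneg
      (fun x hx => ?_) fun u hu v hv huv => ?_
    · rw [heval, eval_comonic]
      exact mul_pos hsecond (Finset.prod_pos fun i _ =>
        sub_pos.2 ((div_lt_one (hτ i)).2 (hx.2.trans_le (hj i))))
    · beta_reduce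
      rw [heval u, heval v]
      exact mul_le_mul_of_nonneg_left (antitoneOn_eval_comonic τ hj hu hv huv) hsecond.le

theorem abs_eval_derivative_lt_eval_zero (h : SortedRoots p y)
    (h'' : SortedRoots (derivative (derivative p)) τ) (hy : ∀ i, y i ∈ Icc 0 B)
    (hp0 : p.eval 0 = 1) (hM : ∀ x ∈ Icc 0 B, |p.eval x| ≤ 1) (j : Fin m)
    (hj : 2 * ((j : ℕ) + 1) ≤ m + 1) :
    |(derivative p).eval (τ j)| < |(derivative p).eval 0| := by
  have hy' : ∀ i, y i ∈ Ioc 0 B := fun i => ⟨(hy i).1.lt_of_ne fun hi => by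
    have hroot := isRoot_of_mem_roots (h.mem_roots i)
    rw [← hi, IsRoot, hp0] at hroot
    exact one_ne_zero hroot, (hy i).2⟩
  obtain ⟨ρ, h'⟩ := h.exists_derivative
  have hρτ := h'.castSucc_le_derivative h''
  rcases Nat.eq_zero_or_pos (j : ℕ) with hj0 | hj0
  · refine h.abs_eval_derivative_lt_of_forall_le h' h'' hy'
      (fun x hx => (le_abs_self _).trans ((hM x hx).trans_eq hp0.symm)) ?_
      fun i => h''.monotone (Fin.le_def.2 (by omega))
    rw [h.eq_C_mul_comonic fun i => (hy' i).1.ne', hp0, C_1, one_mul, eval_zero_derivative_comonic,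
      neg_lt_zero]
    exact Finset.sum_pos (fun i _ => inv_pos.2 (hy' i).1) Finset.univ_nonempty
  · have hτ : 0 ≤ τ j :=
      (hy _).1.trans ((h.castSucc_le_derivative h' _).trans (hρτ j))
    refine h.abs_eval_derivative_lt_of_two_le h' hy' hp0 hM hτ (k := j.succ.castSucc)
      (Nat.succ_le_succ hj0) hj (fun i hi => ?_) fun i hi => ?_
    · exact (h'.monotone (Fin.le_castSucc_iff.2 hi)).trans (hρτ j)
    · exact (h'.derivative_le_succ h'' j).trans (h'.monotone hi)

end SortedRoots

lemma derivative_C_mul_comp_X_add_C (p : ℝ[X]) (c a : ℝ) :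
    derivative (C c * p.comp (X + C a)) = C c * (derivative p).comp (X + C a) := by
  simp [derivative_comp]

/-- Bojanov–Naidenov: for an oscillating polynomial `P` on `[a,b]` of degree `n ≥ 3`
with `max_{[a,b]} |P| = |P(a)| = 1`, each local extremum of `P'` from the first half
is smaller in absolute value than `|P'(a)|`. Here `τ` lists the zeros of `P''`
in increasing order. -/
theorem bojanov_naidenov (n : ℕ) (hn : 3 ≤ n) (a b : ℝ) (hab : a ≤ b)
    (P : Polynomial ℝ) (hdeg : P.natDegree = n)
    (hcard : P.roots.card = n)
    (hloc : ∀ x ∈ P.roots, x ∈ Set.Icc a b)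
    (hmax : ∀ x ∈ Set.Icc a b, |P.eval x| ≤ 1)
    (ha : |P.eval a| = 1)
    (τ : Fin (n - 2) → ℝ) (hmono : Monotone τ)
    (hτ : (derivative (derivative P)).roots = (List.ofFn τ : List ℝ)) :
    ∀ j : Fin (n - 2), (j : ℕ) + 1 ≤ (n - 1) / 2 →
      |(derivative P).eval (τ j)| < |(derivative P).eval a| := by
  obtain ⟨m, rfl⟩ := Nat.exists_eq_add_of_le' (show 2 ≤ n by omega)
  intro j hj
  obtain ⟨y, hy⟩ := exists_sortedRoots hdeg hcard
  have hc : P.eval a ≠ 0 := abs_pos.1 (ha ▸ one_pos)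
  have h'' : SortedRoots (derivative (derivative P)) τ :=
    ⟨by simp [natDegree_derivative, hdeg], by rw [hτ, Fin.univ_val_map], hmono⟩
  have hQ'' := h''.C_mul_comp_X_add_C hc a
  rw [← derivative_C_mul_comp_X_add_C, ← derivative_C_mul_comp_X_add_C] at hQ''
  have hlt := (hy.C_mul_comp_X_add_C hc a).abs_eval_derivative_lt_eval_zero (B := b - a)
    hQ'' (fun i => ⟨sub_nonneg.2 (hloc _ (hy.mem_roots i)).1,
      sub_le_sub_right (hloc _ (hy.mem_roots i)).2 a⟩)
    (by simp [← sq, ← sq_abs, ha])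
    (fun x hx => by
      simpa [abs_mul, ha] using hmax (x + a) ⟨by linarith [hx.1], by linarith [hx.2]⟩) j (by omega)
  rw [derivative_C_mul_comp_X_add_C] at hlt
  simpa [abs_mul, ha] using hlt
end

section
/- (Bojanov–Naidenov, symmetric case) Let P be a real polynomial of degree n all of whose zeros are real and lie in [-1,1], which is symmetric, i.e., P(-x) = (-1)^n P(x) for all x, and assume max_{x∈[-1,1]} |P(x)| = |P(1)| = 1. Then for every k = 1, …, n, max_{x∈[-1,1]} |P^{(k)}(x)| = |P^{(k)}(1)|, where P^{(k)} denotes the k-th derivative of P. -/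
open Polynomial Set

/-!
By induction on `k` it suffices to treat `P'`. Put `q = (1 - a²)⁻¹` for each zero `a` of `P` and
let `A` be the sum of these weights, so that `P(x)² = P(1)² ∏ (1 - q (1 - x²))` and
`P'(1) = A P(1)`. Let `|P'|` attain its maximum over `[0, 1]` at `ξ`. If no zero of `P'` exceeds
`ξ`, then `|P'|` increases on `[ξ, 1]` and there is nothing to prove. Otherwise the Laguerre
expression of `P` at `1` gives `A (1 - ξ²) ≥ 3`, while the Laguerre inequality gives
`y² P'(ξ)² ≤ |P(ξ + iy)|²` for every real `y`. With `y = 5 / (2A)` the claim becomes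
`|P(ξ + iy)| ≤ (5/2) |P(1)|`.

To bound `P` off the real axis, write `x = cos ζ` and move `[-1, 1]` to the unit circle by
`z = exp (2iζ)`. The logarithm of the transported polynomial is nonpositive on the circle, so
the larger the Poisson kernel, the smaller its average. The kernel at `ζ` dominates an explicit
multiple of the kernel at a point `ζ₁` with `|sin ζ₁| = |sin ζ|` and `|cos ζ₁| = 1`, where each
factor `1 - q sin² ζ₁` has a modulus depending only on `q` and `|sin ζ|`. This leaves a
one-variable numerical inequality for each weight `q`.
-/

open Metric Complex ComplexConjugate

lemma exp_le_five_halves : Real.exp (0.733 * (5 / 4)) ≤ 5 / 2 := by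
  refine (Real.exp_bound' (n := 10) (by norm_num) (by norm_num) (by norm_num)).trans ?_
  norm_num [Finset.sum_range_succ, Nat.factorial]

lemma log_one_add_sq_le {w : ℝ} (hw : 0 ≤ w) : Real.log (1 + w ^ 2) ≤ 0.81 * w := by
  rw [Real.log_le_iff_le_exp (by positivity)]
  refine le_trans ?_ (Real.sum_le_exp_of_nonneg (by positivity) 7)
  obtain ⟨t, rfl⟩ : ∃ t, w = t / 0.81 := ⟨0.81 * w, by ring⟩
  have ht : 0 ≤ t := by norm_num at hw; linarith
  rw [mul_div_cancel₀ t (by norm_num)]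
  have taylor : 0 ≤ 1 - 1.0242 * t + t ^ 2 / 6 + t ^ 3 / 24 + t ^ 4 / 120 + t ^ 5 / 720 := by
    nlinarith [mul_nonneg ht (sq_nonneg (t - 1.6)), mul_nonneg ht (sq_nonneg (t ^ 2 - 1.6 * t)),
      mul_nonneg ht (sq_nonneg (t ^ 2 - 1.6 ^ 2)), sq_nonneg (t - 1.6),
      sq_nonneg (t ^ 2 - 1.6 * t), sq_nonneg (t ^ 2 - 1.6 ^ 2)]
  norm_num [Finset.sum_range_succ, Nat.factorial]
  nlinarith [mul_nonneg ht taylor, sq_nonneg t]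

lemma log_one_add_mul_sub_one_mul_sq_le {q a : ℝ} (hq : 1 ≤ q) (ha : 0 ≤ a) :
    Real.log (1 + q * (q - 1) * a ^ 2) ≤ 0.8268 * a * (q - 0.6) := by
  have hq' : 0 ≤ q - 0.6 := by linarith
  have : 0 ≤ q * (q - 1) * a ^ 2 :=
    mul_nonneg (mul_nonneg (by linarith) (by linarith)) (sq_nonneg a)
  have square : q * (q - 1) ≤ (0.8268 / 0.81 * (q - 0.6)) ^ 2 := by
    norm_num
    nlinarith [sq_nonneg (q - 3)]
  calc Real.log (1 + q * (q - 1) * a ^ 2)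
      ≤ Real.log (1 + (0.8268 / 0.81 * (q - 0.6) * a) ^ 2) := by
        rw [mul_pow _ a]
        gcongr
    _ ≤ 0.81 * (0.8268 / 0.81 * (q - 0.6) * a) := log_one_add_sq_le (by positivity)
    _ = 0.8268 * a * (q - 0.6) := by ring

lemma one_sub_half_sq_le_inv_sqrt (x : ℝ) : 1 - x ^ 2 / 2 ≤ (√(1 + x ^ 2))⁻¹ := by
  have hs : √(1 + x ^ 2) ≤ 1 + x ^ 2 / 2 := by
    rw [Real.sqrt_le_left (by positivity)]
    nlinarith [sq_nonneg (x ^ 2)]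
  calc 1 - x ^ 2 / 2 ≤ (1 + x ^ 2 / 2)⁻¹ := by
        rw [← one_div, le_div_iff₀ (by positivity)]
        nlinarith [sq_nonneg (x ^ 2)]
    _ ≤ (√(1 + x ^ 2))⁻¹ := by gcongr

lemma sub_cube_div_six_le_arsinh {x : ℝ} (hx : 0 ≤ x) : x - x ^ 3 / 6 ≤ Real.arsinh x := by
  have hd (y : ℝ) : HasDerivAt (fun y ↦ Real.arsinh y - (y - y ^ 3 / 6))
      ((√(1 + y ^ 2))⁻¹ - (1 - y ^ 2 / 2)) y := by
    refine ((Real.hasDerivAt_arsinh y).sub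
      ((hasDerivAt_id y).sub ((hasDerivAt_pow 3 y).div_const 6))).congr_deriv ?_
    norm_num
    ring
  have hmono : Monotone (fun y ↦ Real.arsinh y - (y - y ^ 3 / 6)) :=
    monotone_of_hasDerivAt_nonneg hd fun y ↦ sub_nonneg.2 (one_sub_half_sq_le_inv_sqrt y)
  simpa using hmono hx

lemma arsinh_le_self {x : ℝ} (hx : 0 ≤ x) : Real.arsinh x ≤ x := by
  rw [← Real.arsinh_sinh x, Real.arsinh_le_arsinh, Real.arsinh_sinh]
  exact Real.self_le_sinh_iff.2 hx

lemma slope_polynomial_le {a τ : ℝ} (ha : 0 ≤ a) (ha1 : a ≤ 1) (hτ : 0 ≤ τ)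
    (h : 6 * τ ≤ 5 * (1 - τ ^ 2 + a * τ ^ 2)) :
    0.4134 ^ 2 * ((1 + τ ^ 2) * (1 + a * τ ^ 2)) ≤ 0.3665 ^ 2 * (2 + a + a * τ ^ 2) := by
  have hτ' : τ ≤ 5 / 6 := by nlinarith [sq_nonneg τ]
  have hτ2 : τ ^ 2 ≤ 25 / 36 := by nlinarith
  rcases le_total τ 0.75 with h75 | h75
  · have : τ ^ 2 ≤ 0.5625 := by nlinarith
    nlinarith [mul_nonneg ha (sub_nonneg.2 this),
      mul_nonneg (mul_nonneg ha (sq_nonneg τ)) (sub_nonneg.2 this)]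
  · have hτ2' : 0.5625 ≤ τ ^ 2 := by nlinarith
    have ha' : 0.8 ≤ a := by
      by_contra! ha'
      nlinarith
    generalize τ ^ 2 = t at hτ2 hτ2' ⊢
    nlinarith [mul_nonneg ha (mul_nonneg (sub_nonneg.2 hτ2') (sub_nonneg.2 hτ2)),
      mul_nonneg (sub_nonneg.2 ha') (sub_nonneg.2 hτ2),
      mul_nonneg (sub_nonneg.2 ha') (sub_nonneg.2 hτ2'),
      mul_nonneg (sub_nonneg.2 ha1) (sub_nonneg.2 hτ2),
      mul_nonneg (sub_nonneg.2 ha1) (sub_nonneg.2 hτ2')]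

section NumericalBounds

variable {r k κ : ℝ}

lemma slope_le (hr : 0 < r) (hr1 : r ≤ 1) (hk : 0 ≤ k) (hκ : 2 * κ ^ 2 = r ^ 2 + k ^ 2)
    (h : 6 * (r * k) ≤ 5 * (r ^ 2 - k ^ 2 + r ^ 2 * k ^ 2)) :
    0.4134 * κ * √(1 + k ^ 2) ≤ 0.3665 * r * √(1 + κ ^ 2) := by
  obtain ⟨τ, rfl⟩ : ∃ τ, k = τ * r := ⟨k / r, by field_simp⟩
  have hτ : 0 ≤ τ := nonneg_of_mul_nonneg_left hk hr
  have hr2 : 0 < r ^ 2 := by positivity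
  have poly := slope_polynomial_le (a := r ^ 2) hr2.le (by nlinarith) hτ
    (le_of_mul_le_mul_left (by linarith) hr2)
  refine le_of_sq_le_sq ?_ (by positivity)
  rw [mul_pow, mul_pow, mul_pow, mul_pow, Real.sq_sqrt (by positivity),
    Real.sq_sqrt (by positivity)]
  have := mul_le_mul_of_nonneg_left poly hr2.le
  linear_combination (1 / 2) * this + (0.4134 ^ 2 * (1 + (τ * r) ^ 2) - 0.3665 ^ 2 * r ^ 2) / 2 * hκ

lemma sqrt_one_add_sq_le (hkr : k ^ 2 ≤ r ^ 2) (hκ : 2 * κ ^ 2 = r ^ 2 + k ^ 2) :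
    √(1 + κ ^ 2) ≤ √(1 + k ^ 2) * (1 + (r ^ 2 - k ^ 2) / 4) := by
  have hd : 0 ≤ r ^ 2 - k ^ 2 := sub_nonneg.2 hkr
  refine Real.sqrt_le_iff.2 ⟨by positivity, ?_⟩
  rw [mul_pow, Real.sq_sqrt (by positivity)]
  nlinarith [mul_nonneg (sq_nonneg k) hd, mul_nonneg (sq_nonneg k) (sq_nonneg (r ^ 2 - k ^ 2)),
    sq_nonneg (r ^ 2 - k ^ 2)]

lemma intercept_polynomial_le (hr : 0 ≤ r) (hr1 : r ≤ 1) {τ : ℝ}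
    (hτ : τ ^ 2 ≤ 25 / 36) (hκ : 2 * κ ^ 2 = r ^ 2 + (τ * r) ^ 2) :
    (1 + (r ^ 2 - (τ * r) ^ 2) / 4) * (1 - 0.3665 * r) ≤ 1 - κ ^ 2 / 6 - 0.16536 * κ := by
  have hκ' : κ ≤ 0.7072 * r * (1 + τ ^ 2 / 2) := by
    refine le_of_sq_le_sq ?_ (by positivity)
    nlinarith [mul_nonneg (sq_nonneg r) (sq_nonneg τ),
      mul_nonneg (sq_nonneg r) (sq_nonneg (τ ^ 2)), sq_nonneg r]
  have hκ2 : κ ^ 2 = r ^ 2 * (1 + τ ^ 2) / 2 := by linear_combination hκ / 2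
  rw [hκ2, mul_pow]
  have ht := sq_nonneg τ
  generalize τ ^ 2 = t at hτ ht hκ' ⊢
  have key : 0 ≤ 0.3665 - r * (1 + t) / 12 - 0.16536 * 0.7072 * (1 + t / 2) - r * (1 - t) / 4
      + 0.3665 * r ^ 2 * (1 - t) / 4 := by
    nlinarith [mul_nonneg ht (sub_nonneg.2 hr1), mul_nonneg (sub_nonneg.2 hτ) (sub_nonneg.2 hr1),
      mul_nonneg (sub_nonneg.2 hτ) (sq_nonneg (1 - r)), mul_nonneg ht (sq_nonneg (1 - r)),
      mul_nonneg (mul_nonneg ht hr) (sub_nonneg.2 hr1)]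
  nlinarith [mul_nonneg hr key]

lemma intercept_le (hr : 0 < r) (hr1 : r ≤ 1) (hk : 0 ≤ k) (hkr : k ≤ 5 / 6 * r)
    (hκ : 2 * κ ^ 2 = r ^ 2 + k ^ 2) :
    √(1 + κ ^ 2) * (1 - 0.3665 * r) ≤ √(1 + k ^ 2) * (1 - κ ^ 2 / 6 - 0.16536 * κ) := by
  have hr' : 0 ≤ 1 - 0.3665 * r := by linarith
  have hkr2 : k ^ 2 ≤ 25 / 36 * r ^ 2 := by nlinarith
  calc √(1 + κ ^ 2) * (1 - 0.3665 * r)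
      ≤ √(1 + k ^ 2) * (1 + (r ^ 2 - k ^ 2) / 4) * (1 - 0.3665 * r) := by
        gcongr
        exact sqrt_one_add_sq_le (by nlinarith) hκ
    _ = √(1 + k ^ 2) * ((1 + (r ^ 2 - k ^ 2) / 4) * (1 - 0.3665 * r)) := by ring
    _ ≤ √(1 + k ^ 2) * (1 - κ ^ 2 / 6 - 0.16536 * κ) := by
        gcongr
        obtain ⟨τ, rfl⟩ : ∃ τ, k = τ * r := ⟨k / r, by field_simp⟩
        exact intercept_polynomial_le hr.le hr1 (by nlinarith [pow_pos hr 2]) hκ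

lemma le_five_sixths_mul (hr : 0 < r) (hr1 : r ≤ 1)
    (h : 6 * (r * k) ≤ 5 * (r ^ 2 - k ^ 2 + r ^ 2 * k ^ 2)) : k ≤ 5 / 6 * r := by
  have : r ^ 2 * k ^ 2 ≤ k ^ 2 := mul_le_of_le_one_left (sq_nonneg k) (by nlinarith)
  exact le_of_mul_le_mul_left (by nlinarith : r * k ≤ r * (5 / 6 * r)) hr

lemma log_sub_arsinh_le {q : ℝ} (hq : 1 ≤ q) (hr : 0 < r) (hr1 : r ≤ 1) (hk : 0 < k) (hκ0 : 0 < κ)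
    (hκ : 2 * κ ^ 2 = r ^ 2 + k ^ 2)
    (h : 6 * (r * k) ≤ 5 * (r ^ 2 - k ^ 2 + r ^ 2 * k ^ 2)) :
    k * √(1 + k ^ 2) / (κ * √(1 + κ ^ 2)) *
        (Real.log (1 + q * (q - 1) * (2 * κ ^ 2) ^ 2) / 2 - 2 * Real.arsinh κ) + 2 * Real.arsinh k
      ≤ 0.733 * q * (r * k) := by
  have hkr := le_five_sixths_mul hr hr1 h
  have slope := slope_le hr hr1 hk.le hκ h
  have intercept := intercept_le hr hr1 hk.le hkr hκ
  have hlog := log_one_add_mul_sub_one_mul_sq_le hq (by positivity : 0 ≤ 2 * κ ^ 2)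
  have harsinh := sub_cube_div_six_le_arsinh hκ0.le
  have affine : √(1 + k ^ 2) * (0.4134 * κ * (q - 0.6) - (1 - κ ^ 2 / 6)) ≤
      (0.3665 * q * r - 1) * √(1 + κ ^ 2) := by
    linear_combination (q - 1) * slope + intercept
  calc _ ≤ k * √(1 + k ^ 2) / (κ * √(1 + κ ^ 2)) *
        (2 * κ * (0.4134 * κ * (q - 0.6) - (1 - κ ^ 2 / 6))) + 2 * k := by
        gcongr
        · linarith
        · exact arsinh_le_self hk.le
    _ = 2 * k * (√(1 + k ^ 2) * (0.4134 * κ * (q - 0.6) - (1 - κ ^ 2 / 6)) / √(1 + κ ^ 2) + 1) := by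
        field_simp
    _ ≤ 2 * k * (0.3665 * q * r - 1 + 1) := by
        gcongr
        rwa [div_le_iff₀ (by positivity)]
    _ = 0.733 * q * (r * k) := by ring

end NumericalBounds

section PoissonIntegral
variable {c w : ℂ} {R : ℝ}

lemma continuousOn_poissonKernel_sphere (hw : w ∈ ball c R) :
    ContinuousOn (poissonKernel c w) (sphere c |R|) := by
  rw [poissonKernel_eq_re_herglotzRieszKernel]
  exact continuous_re.comp_continuousOn (continuousOn_herglotzRieszKernel_sphere hw)

lemma circleIntegrable_log_norm_eval (p : ℂ[X]) (c : ℂ) (R : ℝ) :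
    CircleIntegrable (fun z ↦ Real.log ‖p.eval z‖) c R :=
  MeromorphicOn.circleIntegrable_log_norm fun z _ ↦
    (AnalyticOnNhd.eval_polynomial p z trivial).meromorphicAt

lemma circleIntegrable_poissonKernel_mul_log_norm_eval (hw : w ∈ ball c R) (p : ℂ[X]) :
    CircleIntegrable (fun z ↦ poissonKernel c w z * Real.log ‖p.eval z‖) c R :=
  (circleIntegrable_log_norm_eval p c R).continuousOn_mul (continuousOn_poissonKernel_sphere hw)

lemma circleAverage_poissonKernel_mul_const (hw : w ∈ ball c R) (a : ℝ) :
    Real.circleAverage (fun z ↦ poissonKernel c w z * a) c R = a :=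
  InnerProductSpace.HarmonicOnNhd.circleAverage_poissonKernel_smul (f := fun _ ↦ a)
    (fun _ _ ↦ InnerProductSpace.harmonicAt_const a) hw

lemma circleAverage_poissonKernel_mul_log_norm_sub (hw : w ∈ ball c R) {ρ : ℂ}
    (hρ : ρ ∈ sphere c R) :
    Real.circleAverage (fun z ↦ poissonKernel c w z * Real.log ‖z - ρ‖) c R =
      Real.log ‖w - ρ‖ := by
  rw [poissonKernel_eq_re_herglotzRieszKernel]
  exact circleAverage_re_herglotzRieszKernel_mul_log hρ hw

lemma circleAverage_poissonKernel_mul_log_norm_eval_mul (hw : w ∈ ball c R) {p q : ℂ[X]}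
    (hp : p ≠ 0) (hq : q ≠ 0) :
    Real.circleAverage (fun z ↦ poissonKernel c w z * Real.log ‖(p * q).eval z‖) c R =
      Real.circleAverage (fun z ↦ poissonKernel c w z * Real.log ‖p.eval z‖) c R +
      Real.circleAverage (fun z ↦ poissonKernel c w z * Real.log ‖q.eval z‖) c R := by
  rw [← Real.circleAverage_fun_add (circleIntegrable_poissonKernel_mul_log_norm_eval hw p)
    (circleIntegrable_poissonKernel_mul_log_norm_eval hw q)]
  refine Real.circleAverage_congr_codiscreteWithin ?_ (pos_of_mem_ball hw).ne'
  filter_upwards [compl_finite_mem_codiscreteWithin (p.finite_setOfPred_isRoot hp),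
    compl_finite_mem_codiscreteWithin (q.finite_setOfPred_isRoot hq)] with z hpz hqz
  rw [eval_mul, norm_mul, Real.log_mul (norm_ne_zero_iff.2 hpz) (norm_ne_zero_iff.2 hqz), mul_add]

lemma circleAverage_poissonKernel_mul_log_norm_eval_C_mul_prod (hw : w ∈ ball c R) {a : ℂ}
    (ha : a ≠ 0) {s : Multiset ℂ} (hs : ∀ ρ ∈ s, ρ ∈ sphere c R) :
    Real.circleAverage (fun z ↦ poissonKernel c w z *
      Real.log ‖(C a * (s.map (X - C ·)).prod).eval z‖) c R =
      Real.log ‖(C a * (s.map (X - C ·)).prod).eval w‖ := by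
  induction s using Multiset.induction_on with
  | empty => simpa using circleAverage_poissonKernel_mul_const hw (Real.log ‖a‖)
  | cons ρ s ih =>
    obtain ⟨hρ, hs⟩ := Multiset.forall_mem_cons.1 hs
    have hne_of_mem {σ : ℂ} (hσ : σ ∈ sphere c R) : w ≠ σ := fun h ↦
      (mem_ball.1 hw).ne (h ▸ mem_sphere.1 hσ)
    set Q := C a * (s.map (X - C ·)).prod with hQ
    have hQ0 : Q ≠ 0 :=
      mul_ne_zero (C_ne_zero.2 ha) (Multiset.prod_ne_zero (by simp [X_sub_C_ne_zero]))
    have hQw : Q.eval w ≠ 0 := fun h ↦ by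
      have : w ∈ s := by simpa [hQ, roots_C_mul _ ha] using (mem_roots hQ0).2 h
      exact hne_of_mem (hs w this) rfl
    have hfactor : Real.log ‖(X - C ρ).eval w‖ =
        Real.circleAverage (fun z ↦ poissonKernel c w z * Real.log ‖(X - C ρ).eval z‖) c R := by
      simpa using (circleAverage_poissonKernel_mul_log_norm_sub hw hρ).symm
    rw [Multiset.map_cons, Multiset.prod_cons, mul_left_comm, ← hQ,
      circleAverage_poissonKernel_mul_log_norm_eval_mul hw (X_sub_C_ne_zero ρ) hQ0, ih hs,
      eval_mul (p := X - C ρ), norm_mul, Real.log_mul _ (norm_ne_zero_iff.2 hQw), hfactor]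
    simpa [sub_eq_zero] using hne_of_mem hρ

theorem circleAverage_poissonKernel_mul_log_norm_eval (hw : w ∈ ball c R) {p : ℂ[X]}
    (hp : ∀ ρ ∈ p.roots, ρ ∈ sphere c R) :
    Real.circleAverage (fun z ↦ poissonKernel c w z * Real.log ‖p.eval z‖) c R =
      Real.log ‖p.eval w‖ := by
  rcases eq_or_ne p 0 with rfl | hp0
  · simp [Real.circleAverage_const]
  · rw [(IsAlgClosed.splits p).eq_prod_roots]
    exact circleAverage_poissonKernel_mul_log_norm_eval_C_mul_prod hw
      (leadingCoeff_ne_zero.2 hp0) hp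

end PoissonIntegral

theorem log_norm_aeval_le_of_poissonKernel_le {w₀ w₁ : ℂ} {R a : ℝ}
    (hw₀ : w₀ ∈ ball 0 R) (hw₁ : w₁ ∈ ball 0 R) {p : ℝ[X]}
    (hp : ∀ ρ : ℂ, aeval ρ p = 0 → ‖ρ‖ = R) (hp1 : ∀ z : ℂ, ‖z‖ = R → ‖aeval z p‖ ≤ 1)
    (hK : ∀ z : ℂ, ‖z‖ = R → a * (poissonKernel 0 w₁ z + poissonKernel 0 (conj w₁) z) ≤
      poissonKernel 0 w₀ z + poissonKernel 0 (conj w₀) z) :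
    Real.log ‖aeval w₀ p‖ ≤ a * Real.log ‖aeval w₁ p‖ := by
  set P := p.map (algebraMap ℝ ℂ) with hP
  have heval (z : ℂ) : aeval z p = P.eval z := by rw [hP, eval_map_algebraMap]
  have hint {w : ℂ} (hw : w ∈ ball 0 R) :
      CircleIntegrable (fun z ↦ poissonKernel 0 w z * Real.log ‖P.eval z‖) 0 R ∧
      CircleIntegrable (fun z ↦ poissonKernel 0 (conj w) z * Real.log ‖P.eval z‖) 0 R :=
    ⟨circleIntegrable_poissonKernel_mul_log_norm_eval hw P,
      circleIntegrable_poissonKernel_mul_log_norm_eval (by simpa using hw) P⟩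
  have hroots : ∀ ρ ∈ P.roots, ρ ∈ sphere 0 R := fun ρ hρ ↦ by
    simpa using hp ρ ((heval ρ).trans (isRoot_of_mem_roots hρ))
  have haverage {w : ℂ} (hw : w ∈ ball 0 R) :
      Real.circleAverage (fun z ↦ poissonKernel 0 w z * Real.log ‖P.eval z‖ +
        poissonKernel 0 (conj w) z * Real.log ‖P.eval z‖) 0 R = 2 * Real.log ‖aeval w p‖ := by
    rw [Real.circleAverage_fun_add (hint hw).1 (hint hw).2,
      circleAverage_poissonKernel_mul_log_norm_eval hw hroots,
      circleAverage_poissonKernel_mul_log_norm_eval (by simpa using hw) hroots,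
      ← heval, ← heval, aeval_conj, norm_conj, two_mul]
  have hle : Real.circleAverage (fun z ↦ poissonKernel 0 w₀ z * Real.log ‖P.eval z‖ +
        poissonKernel 0 (conj w₀) z * Real.log ‖P.eval z‖) 0 R ≤
      Real.circleAverage (fun z ↦ a • (poissonKernel 0 w₁ z * Real.log ‖P.eval z‖ +
        poissonKernel 0 (conj w₁) z * Real.log ‖P.eval z‖)) 0 R := by
    refine Real.circleAverage_mono ((hint hw₀).1.add (hint hw₀).2)
      (((hint hw₁).1.add (hint hw₁).2).const_smul) fun z hz ↦ ?_
    rw [abs_of_pos (pos_of_mem_ball hw₀), mem_sphere_zero_iff_norm] at hz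
    have hlog : Real.log ‖P.eval z‖ ≤ 0 :=
      Real.log_nonpos (norm_nonneg _) (heval z ▸ hp1 z hz)
    rw [smul_eq_mul]
    linear_combination mul_le_mul_of_nonpos_right (hK z hz) hlog
  rw [Real.circleAverage_fun_smul, haverage hw₀, haverage hw₁, smul_eq_mul] at hle
  linarith

section EllipticCoordinates

lemma norm_sin_sq (ζ : ℂ) : ‖sin ζ‖ ^ 2 = Real.sin ζ.re ^ 2 + Real.sinh ζ.im ^ 2 := by
  rw [sin_eq, ← ofReal_sin, ← ofReal_cosh, ← ofReal_cos, ← ofReal_sinh, ← ofReal_mul,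
    ← ofReal_mul, Complex.sq_norm, normSq_add_mul_I, mul_pow, mul_pow, Real.cosh_sq, Real.cos_sq']
  ring

lemma norm_cos_sq (ζ : ℂ) : ‖cos ζ‖ ^ 2 = Real.cos ζ.re ^ 2 + Real.sinh ζ.im ^ 2 := by
  rw [cos_eq, ← ofReal_sin, ← ofReal_cosh, ← ofReal_cos, ← ofReal_sinh, ← ofReal_mul,
    ← ofReal_mul, sub_eq_add_neg, ← neg_mul, ← ofReal_neg, Complex.sq_norm, normSq_add_mul_I,
    neg_sq, mul_pow, mul_pow, Real.cosh_sq, Real.sin_sq]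
  ring

lemma norm_sin_sq_add_norm_cos_sq (ζ : ℂ) :
    ‖sin ζ‖ ^ 2 + ‖cos ζ‖ ^ 2 = 1 + 2 * Real.sinh ζ.im ^ 2 := by
  rw [norm_sin_sq, norm_cos_sq]
  linarith [Real.sin_sq_add_cos_sq ζ.re]

lemma norm_sin_sq_le_one_add_norm_cos_sq (ζ : ℂ) : ‖sin ζ‖ ^ 2 ≤ 1 + ‖cos ζ‖ ^ 2 := by
  rw [norm_sin_sq, norm_cos_sq]
  linarith [Real.sin_sq_le_one ζ.re, sq_nonneg (Real.cos ζ.re)]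

lemma norm_sub_ofReal_mul_sq (u q : ℝ) (A : ℂ) :
    ‖(u : ℂ) - q * A‖ ^ 2 =
      q * (q - u) * ‖A‖ ^ 2 + q * u * ‖1 - A‖ ^ 2 + u * (u - q) := by
  simp only [Complex.sq_norm, normSq_apply, sub_re, sub_im, mul_re, mul_im, ofReal_re, ofReal_im,
    one_re, one_im]
  ring

lemma norm_sub_ofReal_mul_sin_sq_sq (u q : ℝ) (ζ : ℂ) :
    ‖(u : ℂ) - q * sin ζ ^ 2‖ ^ 2 = q * (q - u) * (‖sin ζ‖ ^ 2) ^ 2 +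
      q * u * (‖cos ζ‖ ^ 2) ^ 2 + u * (u - q) := by
  rw [norm_sub_ofReal_mul_sq, ← cos_sq', norm_pow, norm_pow]

lemma exp_two_mul_I_sub_exp_two_mul_I (ζ φ : ℂ) :
    exp (2 * I * φ) - exp (2 * I * ζ) = -2 * I * exp (I * (ζ + φ)) * sin (ζ - φ) := by
  have h₁ : exp (2 * I * φ) = exp (I * (ζ + φ)) * exp (-(ζ - φ) * I) := by
    rw [← Complex.exp_add]; ring_nf
  have h₂ : exp (2 * I * ζ) = exp (I * (ζ + φ)) * exp ((ζ - φ) * I) := by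
    rw [← Complex.exp_add]; ring_nf
  rw [h₁, h₂, Complex.sin]
  linear_combination exp (I * (ζ + φ)) * (exp (-(ζ - φ) * I) - exp ((ζ - φ) * I)) * I_sq

lemma exists_exp_two_mul_I_eq {z : ℂ} (hz : ‖z‖ = 1) : ∃ φ : ℝ, exp (2 * I * φ) = z := by
  obtain ⟨θ, rfl⟩ := (norm_eq_one_iff z).1 hz
  exact ⟨θ / 2, by push_cast; ring_nf⟩

lemma norm_exp_two_mul_I (ζ : ℂ) : ‖exp (2 * I * ζ)‖ = Real.exp (-(2 * ζ.im)) := by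
  rw [norm_exp]
  simp

lemma norm_exp_two_mul_I_sub_sq (ζ : ℂ) (φ : ℝ) :
    ‖exp (2 * I * φ) - exp (2 * I * ζ)‖ ^ 2 =
      Real.exp (-(2 * ζ.im)) * (4 * ‖sin (ζ - φ)‖ ^ 2) := by
  have h : ‖exp (I * (ζ + φ))‖ ^ 2 = Real.exp (-(2 * ζ.im)) := by
    rw [norm_exp, ← Real.exp_nat_mul]
    simp
  rw [exp_two_mul_I_sub_exp_two_mul_I, norm_mul, norm_mul, mul_pow, mul_pow, h]
  norm_num
  ring

lemma poissonKernel_exp_two_mul_I (ζ : ℂ) (φ : ℝ) :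
    poissonKernel 0 (exp (2 * I * ζ)) (exp (2 * I * φ)) =
      Real.sinh (2 * ζ.im) / (2 * ‖sin (ζ - φ)‖ ^ 2) := by
  have h : 1 - Real.exp (-(2 * ζ.im)) ^ 2 =
      Real.exp (-(2 * ζ.im)) * (2 * Real.sinh (2 * ζ.im)) := by
    rw [Real.sinh_eq, mul_div_cancel₀ _ two_ne_zero, mul_sub, ← Real.exp_add, neg_add_cancel,
      Real.exp_zero, sq]
  rw [poissonKernel, sub_zero, sub_zero, norm_exp_two_mul_I_sub_sq, norm_exp_two_mul_I,
    norm_exp_two_mul_I, ofReal_im, mul_zero, neg_zero, Real.exp_zero, one_pow, h,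
    mul_div_mul_left _ _ (Real.exp_pos _).ne', ← mul_div_mul_left (Real.sinh _) _ (two_ne_zero' ℝ)]
  ring_nf

lemma conj_exp_two_mul_I (ζ : ℂ) : conj (exp (2 * I * ζ)) = exp (2 * I * -conj ζ) := by
  simp [← exp_conj, map_ofNat]

lemma norm_sin_sub_sq_add_norm_sin_add_sq (ζ : ℂ) (φ : ℝ) :
    ‖sin (ζ - φ)‖ ^ 2 + ‖sin (ζ + φ)‖ ^ 2 =
      2 * (Real.cos φ ^ 2 * ‖sin ζ‖ ^ 2 + Real.sin φ ^ 2 * ‖cos ζ‖ ^ 2) := by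
  have h := parallelogram_law_with_norm ℝ (sin ζ * cos φ) (cos ζ * sin φ)
  rw [← Complex.sin_add, ← Complex.sin_sub, norm_mul, norm_mul, ← ofReal_sin, ← ofReal_cos,
    norm_real, norm_real] at h
  linear_combination h + 2 * ‖sin ζ‖ ^ 2 * sq_abs (Real.cos φ) +
    2 * ‖cos ζ‖ ^ 2 * sq_abs (Real.sin φ)

lemma sin_sub_mul_sin_add (z w : ℂ) : sin (z - w) * sin (z + w) = sin z ^ 2 - sin w ^ 2 := by
  rw [Complex.sin_sub, Complex.sin_add]
  linear_combination sin z ^ 2 * sin_sq_add_cos_sq w - sin w ^ 2 * sin_sq_add_cos_sq z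

lemma sin_sq_ne_ofReal {ζ : ℂ} (hζ : ζ.im ≠ 0) {v : ℝ} (hv : v ∈ Icc 0 1) : sin ζ ^ 2 ≠ v := by
  intro h
  have hsin : ‖sin ζ‖ ^ 2 = v := by
    rw [← norm_pow, h, Complex.norm_of_nonneg hv.1]
  have hcos : ‖cos ζ‖ ^ 2 = 1 - v := by
    rw [← norm_pow, cos_sq', h, ← ofReal_one, ← ofReal_sub,
      Complex.norm_of_nonneg (sub_nonneg.2 hv.2)]
  have hsinh := norm_sin_sq_add_norm_cos_sq ζ
  rw [hsin, hcos] at hsinh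
  exact hζ (Real.sinh_eq_zero.1 (pow_eq_zero_iff two_ne_zero |>.1 (by linarith)))

lemma poissonKernel_add_poissonKernel_conj {ζ : ℂ} (hζ : ζ.im ≠ 0) (φ : ℝ) :
    poissonKernel 0 (exp (2 * I * ζ)) (exp (2 * I * φ)) +
      poissonKernel 0 (conj (exp (2 * I * ζ))) (exp (2 * I * φ)) =
    Real.sinh (2 * ζ.im) * ((Real.cos φ ^ 2 * ‖sin ζ‖ ^ 2 + Real.sin φ ^ 2 * ‖cos ζ‖ ^ 2) /
      ‖(Real.sin φ ^ 2 : ℝ) - sin ζ ^ 2‖ ^ 2) := by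
  have hprod : ‖sin (ζ - φ)‖ * ‖sin (ζ + φ)‖ = ‖(Real.sin φ ^ 2 : ℝ) - sin ζ ^ 2‖ := by
    rw [← norm_mul, sin_sub_mul_sin_add, norm_sub_rev]
    simp
  have hne : ‖sin (ζ - φ)‖ * ‖sin (ζ + φ)‖ ≠ 0 := by
    rw [hprod, norm_ne_zero_iff, sub_ne_zero]
    exact (sin_sq_ne_ofReal hζ ⟨sq_nonneg _, Real.sin_sq_le_one φ⟩).symm
  obtain ⟨hsub, hadd⟩ := mul_ne_zero_iff.1 hne
  have hconj : ‖sin (-conj ζ - φ)‖ = ‖sin (ζ + φ)‖ := by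
    rw [← norm_conj, ← sin_conj, ← norm_neg, ← Complex.sin_neg]
    simp [add_comm]
  rw [conj_exp_two_mul_I, poissonKernel_exp_two_mul_I, poissonKernel_exp_two_mul_I, hconj, neg_im,
    conj_im, neg_neg, ← hprod]
  field_simp
  linear_combination norm_sin_sub_sq_add_norm_sin_add_sq ζ φ

lemma poissonKernel_quotient_le {α β v : ℝ} (hα : 0 ≤ α) (hβ : 0 ≤ β) (hβ1 : β ≤ 1)
    (hαβ : α ≤ 1 + β) (hv : v ∈ Icc 0 1)
    (h₁ : 0 < (1 - v) * α ^ 2 + v - v * (1 - v))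
    (h₀ : 0 < (1 - v) * α ^ 2 + v * β ^ 2 - v * (1 - v)) :
    ((1 - v) * α + v) / ((1 - v) * α ^ 2 + v - v * (1 - v)) ≤
      ((1 - v) * α + v * β) / ((1 - v) * α ^ 2 + v * β ^ 2 - v * (1 - v)) := by
  obtain ⟨hv0, hv1⟩ := hv
  rw [div_le_div_iff₀ h₁ h₀]
  have : 0 ≤ (1 - β) * v * ((1 - v) * (α * (1 + β - α) + v) + v * β) :=
    mul_nonneg (mul_nonneg (sub_nonneg.2 hβ1) hv0)
      (add_nonneg (mul_nonneg (sub_nonneg.2 hv1)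
        (add_nonneg (mul_nonneg hα (sub_nonneg.2 hαβ)) hv0)) (mul_nonneg hv0 hβ))
  linear_combination this

lemma poissonKernel_le_of_norm_sin_eq {ζ₀ ζ₁ : ℂ} (hζ₀ : 0 < ζ₀.im) (hζ₁ : 0 < ζ₁.im)
    (hsin : ‖sin ζ₀‖ = ‖sin ζ₁‖) (hcos₀ : ‖cos ζ₀‖ ≤ 1) (hcos₁ : ‖cos ζ₁‖ = 1)
    {z : ℂ} (hz : ‖z‖ = 1) :
    Real.sinh (2 * ζ₀.im) / Real.sinh (2 * ζ₁.im) * (poissonKernel 0 (exp (2 * I * ζ₁)) z +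
      poissonKernel 0 (conj (exp (2 * I * ζ₁))) z) ≤
    poissonKernel 0 (exp (2 * I * ζ₀)) z + poissonKernel 0 (conj (exp (2 * I * ζ₀))) z := by
  obtain ⟨φ, rfl⟩ := exists_exp_two_mul_I_eq hz
  have hsinh₀ : 0 < Real.sinh (2 * ζ₀.im) := Real.sinh_pos_iff.2 (by linarith)
  have hsinh₁ : 0 < Real.sinh (2 * ζ₁.im) := Real.sinh_pos_iff.2 (by linarith)
  have hv : Real.sin φ ^ 2 ∈ Icc (0 : ℝ) 1 := ⟨sq_nonneg _, Real.sin_sq_le_one φ⟩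
  have hden_eq (ζ : ℂ) : ‖(Real.sin φ ^ 2 : ℝ) - sin ζ ^ 2‖ ^ 2 =
      (1 - Real.sin φ ^ 2) * (‖sin ζ‖ ^ 2) ^ 2 + Real.sin φ ^ 2 * (‖cos ζ‖ ^ 2) ^ 2 -
        Real.sin φ ^ 2 * (1 - Real.sin φ ^ 2) := by
    linear_combination (norm := (push_cast; ring_nf))
      norm_sub_ofReal_mul_sin_sq_sq (Real.sin φ ^ 2) 1 ζ
  have hden_pos {ζ : ℂ} (hζ : 0 < ζ.im) : 0 < ‖(Real.sin φ ^ 2 : ℝ) - sin ζ ^ 2‖ ^ 2 := by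
    have := sub_ne_zero.2 (sin_sq_ne_ofReal hζ.ne' hv).symm
    positivity
  have hpos₀ := hden_pos hζ₀
  have hpos₁ := hden_pos hζ₁
  rw [poissonKernel_add_poissonKernel_conj hζ₀.ne', poissonKernel_add_poissonKernel_conj hζ₁.ne',
    ← mul_assoc, div_mul_cancel₀ _ hsinh₁.ne']
  rw [hden_eq] at hpos₀ hpos₁ ⊢
  rw [hden_eq, Real.cos_sq', ← hsin, hcos₁]
  rw [← hsin, hcos₁] at hpos₁
  simp only [one_pow, mul_one] at hpos₁ ⊢
  exact mul_le_mul_of_nonneg_left (poissonKernel_quotient_le (sq_nonneg _) (sq_nonneg _)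
    (pow_le_one₀ (norm_nonneg _) hcos₀) (norm_sin_sq_le_one_add_norm_cos_sq ζ₀) hv hpos₁ hpos₀)
    hsinh₀.le

end EllipticCoordinates

/-- The polynomial of degree `2 * s.card` whose value at `exp (2 * I * ζ)` has the same modulus as
`∏ q ∈ s, (1 - q * sin ζ ^ 2)` up to the explicit factor `‖exp (2 * I * ζ)‖ ^ s.card`. It moves the
segment `ζ ∈ ℝ` to the unit circle, where Poisson's formula applies. -/
noncomputable def sinSqLift (s : Multiset ℝ) : ℝ[X] :=
  (s.map fun q ↦ X + C (q / 4) * (1 - X) ^ 2).prod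

lemma log_norm_multiset_prod {𝕜 : Type*} [NormedField 𝕜] {s : Multiset 𝕜} (hs : 0 ∉ s) :
    Real.log ‖s.prod‖ = (s.map fun z ↦ Real.log ‖z‖).sum := by
  rw [← normHom_apply, map_multiset_prod, Real.log_multiset_prod, Multiset.map_map]
  · rfl
  · intro x hx h0
    obtain ⟨z, hz, rfl⟩ := Multiset.mem_map.1 hx
    exact hs (norm_eq_zero.1 (normHom_apply z ▸ h0) ▸ hz)

section SinSqLift
variable {s : Multiset ℝ}

lemma aeval_sinSqLift (s : Multiset ℝ) (ζ : ℂ) :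
    aeval (exp (2 * I * ζ)) (sinSqLift s) =
      exp (2 * I * ζ) ^ s.card * (s.map fun q : ℝ ↦ 1 - (q : ℂ) * sin ζ ^ 2).prod := by
  have hsq : (1 - exp (2 * I * ζ)) ^ 2 = -4 * exp (2 * I * ζ) * sin ζ ^ 2 := by
    have h := exp_two_mul_I_sub_exp_two_mul_I ζ 0
    rw [mul_zero, Complex.exp_zero, add_zero, sub_zero] at h
    have hexp : exp (2 * I * ζ) = exp (I * ζ) ^ 2 := by rw [← exp_nat_mul]; ring_nf
    rw [h, hexp]
    linear_combination 4 * exp (I * ζ) ^ 2 * sin ζ ^ 2 * I_sq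
  rw [sinSqLift, map_multiset_prod, Multiset.map_map, ← Multiset.prod_replicate s.card,
    ← Multiset.map_const', ← Multiset.prod_map_mul]
  refine congrArg Multiset.prod (Multiset.map_congr rfl fun q _ ↦ ?_)
  simp only [Function.comp_apply, map_add, map_mul, map_pow, map_sub, map_one, aeval_X, aeval_C,
    coe_algebraMap, ofReal_div, ofReal_ofNat, hsq]
  ring

lemma one_sub_mul_sin_sq_ne_zero {q : ℝ} (hq : 1 ≤ q) {ζ : ℂ} (hζ : ζ.im ≠ 0) :
    1 - (q : ℂ) * sin ζ ^ 2 ≠ 0 := fun h ↦ by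
  refine sin_sq_ne_ofReal hζ (v := q⁻¹) ⟨by positivity, inv_le_one_of_one_le₀ hq⟩ ?_
  rw [ofReal_inv]
  exact eq_inv_of_mul_eq_one_right (sub_eq_zero.1 h).symm

lemma zero_notMem_map_one_sub_mul_sin_sq (hs : ∀ q ∈ s, 1 ≤ q) {ζ : ℂ} (hζ : ζ.im ≠ 0) :
    0 ∉ s.map fun q : ℝ ↦ 1 - (q : ℂ) * sin ζ ^ 2 := fun h ↦ by
  obtain ⟨q, hq, h0⟩ := Multiset.mem_map.1 h
  exact one_sub_mul_sin_sq_ne_zero (hs q hq) hζ h0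

lemma norm_eq_one_of_aeval_sinSqLift_eq_zero (hs : ∀ q ∈ s, 1 ≤ q) {z : ℂ}
    (hz : aeval z (sinSqLift s) = 0) : ‖z‖ = 1 := by
  have hz0 : z ≠ 0 := by
    rintro rfl
    rw [sinSqLift, map_multiset_prod, Multiset.map_map, Multiset.prod_eq_zero_iff] at hz
    obtain ⟨q, hq, h⟩ := Multiset.mem_map.1 hz
    have : q = 0 := by simpa using h
    linarith [hs q hq]
  obtain ⟨ζ, rfl⟩ : ∃ ζ, exp (2 * I * ζ) = z :=
    ⟨log z / (2 * I), by rw [mul_div_cancel₀ _ (by simp), exp_log hz0]⟩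
  rw [aeval_sinSqLift, mul_eq_zero_iff_left (pow_ne_zero _ (exp_ne_zero _))] at hz
  have hζ : ζ.im = 0 := by_contra fun h ↦
    Multiset.prod_ne_zero (zero_notMem_map_one_sub_mul_sin_sq hs h) hz
  rw [norm_exp_two_mul_I, hζ, mul_zero, neg_zero, Real.exp_zero]

lemma norm_aeval_sinSqLift_le_one
    (hs : ∀ v ∈ Icc (0 : ℝ) 1, |(s.map fun q ↦ 1 - q * v).prod| ≤ 1) {z : ℂ} (hz : ‖z‖ = 1) :
    ‖aeval z (sinSqLift s)‖ ≤ 1 := by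
  obtain ⟨φ, rfl⟩ := exists_exp_two_mul_I_eq hz
  have hreal : (s.map fun q : ℝ ↦ 1 - (q : ℂ) * sin φ ^ 2).prod =
      ofRealHom (s.map fun q ↦ 1 - q * Real.sin φ ^ 2).prod := by
    rw [map_multiset_prod, Multiset.map_map]
    simp
  rw [aeval_sinSqLift, norm_mul, norm_pow, hz, one_pow, one_mul, hreal, ofRealHom_eq_coe, norm_real]
  exact hs _ ⟨sq_nonneg _, Real.sin_sq_le_one φ⟩

lemma log_norm_aeval_sinSqLift (hs : ∀ q ∈ s, 1 ≤ q) {ζ : ℂ} (hζ : ζ.im ≠ 0) :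
    Real.log ‖aeval (exp (2 * I * ζ)) (sinSqLift s)‖ =
      (s.map fun q : ℝ ↦ Real.log ‖1 - (q : ℂ) * sin ζ ^ 2‖ - 2 * ζ.im).sum := by
  have h0 := zero_notMem_map_one_sub_mul_sin_sq hs hζ
  have hprod := norm_ne_zero_iff.2 (Multiset.prod_ne_zero h0)
  rw [aeval_sinSqLift, norm_mul, norm_pow, norm_exp_two_mul_I, Real.log_mul (by positivity) hprod,
    Real.log_pow, Real.log_exp, log_norm_multiset_prod h0, Multiset.map_map, Multiset.sum_map_sub,
    Multiset.map_const', Multiset.sum_replicate, nsmul_eq_mul]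
  simp only [Function.comp_apply]
  ring

theorem sum_log_norm_one_sub_mul_sin_sq_le (hs : ∀ q ∈ s, 1 ≤ q)
    (hs1 : ∀ v ∈ Icc (0 : ℝ) 1, |(s.map fun q ↦ 1 - q * v).prod| ≤ 1)
    {ζ₀ ζ₁ : ℂ} (hζ₀ : 0 < ζ₀.im) (hζ₁ : 0 < ζ₁.im)
    (hsin : ‖sin ζ₀‖ = ‖sin ζ₁‖) (hcos₀ : ‖cos ζ₀‖ ≤ 1) (hcos₁ : ‖cos ζ₁‖ = 1) :
    (s.map fun q : ℝ ↦ Real.log ‖1 - (q : ℂ) * sin ζ₀ ^ 2‖).sum ≤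
      (s.map fun q : ℝ ↦ Real.sinh (2 * ζ₀.im) / Real.sinh (2 * ζ₁.im) *
        (Real.log ‖1 - (q : ℂ) * sin ζ₁ ^ 2‖ - 2 * ζ₁.im) + 2 * ζ₀.im).sum := by
  have hball {ζ : ℂ} (hζ : 0 < ζ.im) : exp (2 * I * ζ) ∈ ball 0 1 := by
    rw [mem_ball_zero_iff, norm_exp_two_mul_I, Real.exp_lt_one_iff]
    linarith
  rw [Multiset.sum_map_add, Multiset.sum_map_mul_left, ← sub_le_iff_le_add,
    ← Multiset.sum_map_sub, ← log_norm_aeval_sinSqLift hs hζ₀.ne',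
    ← log_norm_aeval_sinSqLift hs hζ₁.ne']
  exact log_norm_aeval_le_of_poissonKernel_le (hball hζ₀) (hball hζ₁)
    (fun _ ↦ norm_eq_one_of_aeval_sinSqLift_eq_zero hs)
    (fun _ ↦ norm_aeval_sinSqLift_le_one hs1)
    fun _ ↦ poissonKernel_le_of_norm_sin_eq hζ₀ hζ₁ hsin hcos₀ hcos₁

lemma exists_norm_cos_eq_one {κ : ℝ} (hκ0 : 0 ≤ κ) (hκ1 : κ ≤ 1) :
    ∃ ζ : ℂ, ζ.im = Real.arsinh κ ∧ ‖sin ζ‖ ^ 2 = 2 * κ ^ 2 ∧ ‖cos ζ‖ = 1 := by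
  refine ⟨⟨Real.arcsin κ, Real.arsinh κ⟩, rfl, ?_, ?_⟩
  · rw [norm_sin_sq, Real.sin_arcsin (by linarith) hκ1, Real.sinh_arsinh, two_mul]
  · rw [← sq_eq_sq₀ (norm_nonneg _) zero_le_one, norm_cos_sq, Real.cos_sq',
      Real.sin_arcsin (by linarith) hκ1, Real.sinh_arsinh, sub_add_cancel, one_pow]

lemma sinh_two_mul_arsinh (x : ℝ) : Real.sinh (2 * Real.arsinh x) = 2 * (x * √(1 + x ^ 2)) := by
  rw [Real.sinh_two_mul, Real.sinh_arsinh, Real.cosh_arsinh, mul_assoc]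

lemma log_norm_one_sub_mul_sin_sq (q : ℝ) {ζ : ℂ} (hζ : ‖cos ζ‖ = 1) :
    Real.log ‖1 - (q : ℂ) * sin ζ ^ 2‖ =
      Real.log (1 + q * (q - 1) * (‖sin ζ‖ ^ 2) ^ 2) / 2 := by
  have h := norm_sub_ofReal_mul_sin_sq_sq 1 q ζ
  rw [ofReal_one, hζ] at h
  rw [eq_div_iff two_ne_zero, mul_comm, ← Nat.cast_two, ← Real.log_pow, h]
  ring_nf

lemma sum_log_norm_one_sub_mul_sin_sq_le_of_norm_sin_sq_eq (hs : ∀ q ∈ s, 1 ≤ q)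
    (hs1 : ∀ v ∈ Icc (0 : ℝ) 1, |(s.map fun q ↦ 1 - q * v).prod| ≤ 1) {ζ : ℂ} {k κ : ℝ}
    (hk : 0 < k) (hζ : ζ.im = Real.arsinh k) (hκ0 : 0 < κ) (hκ1 : κ ≤ 1)
    (hsin : ‖sin ζ‖ ^ 2 = 2 * κ ^ 2) (hcos : ‖cos ζ‖ ≤ 1) :
    (s.map fun q : ℝ ↦ Real.log ‖1 - (q : ℂ) * sin ζ ^ 2‖).sum ≤
      (s.map fun q ↦ k * √(1 + k ^ 2) / (κ * √(1 + κ ^ 2)) *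
        (Real.log (1 + q * (q - 1) * (2 * κ ^ 2) ^ 2) / 2 - 2 * Real.arsinh κ) +
          2 * Real.arsinh k).sum := by
  obtain ⟨ζ₁, hζ₁, hsin₁, hcos₁⟩ := exists_norm_cos_eq_one hκ0.le hκ1
  have hsin_eq : ‖sin ζ‖ = ‖sin ζ₁‖ := by
    rw [← sq_eq_sq₀ (norm_nonneg _) (norm_nonneg _), hsin, hsin₁]
  have h := sum_log_norm_one_sub_mul_sin_sq_le hs hs1 (hζ ▸ Real.arsinh_pos_iff.2 hk)
    (hζ₁ ▸ Real.arsinh_pos_iff.2 hκ0) hsin_eq hcos hcos₁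
  simpa only [hζ, hζ₁, sinh_two_mul_arsinh, mul_div_mul_left _ _ (two_ne_zero' ℝ),
    log_norm_one_sub_mul_sin_sq _ hcos₁, hsin₁] using h

theorem norm_prod_one_sub_mul_sin_sq_le (hs : ∀ q ∈ s, 1 ≤ q)
    (hs1 : ∀ v ∈ Icc (0 : ℝ) 1, |(s.map fun q ↦ 1 - q * v).prod| ≤ 1)
    {ζ : ℂ} {r k : ℝ} (hr : 0 < r) (hrζ : |Real.sin ζ.re| = r) (hk : 0 < k)
    (hkζ : Real.sinh ζ.im = k) (h : 6 * (r * k) ≤ 5 * (r ^ 2 - k ^ 2 + r ^ 2 * k ^ 2)) :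
    ‖(s.map fun q : ℝ ↦ 1 - (q : ℂ) * sin ζ ^ 2).prod‖ ≤ Real.exp (0.733 * s.sum * (r * k)) := by
  have hr1 : r ≤ 1 := hrζ ▸ Real.abs_sin_le_one _
  have hr2 : Real.sin ζ.re ^ 2 = r ^ 2 := by rw [← hrζ, sq_abs]
  have him : ζ.im = Real.arsinh k := by rw [← hkζ, Real.arsinh_sinh]
  have hkr : k ≤ 5 / 6 * r := le_five_sixths_mul hr hr1 h
  obtain ⟨κ, hκ0, hκ⟩ : ∃ κ : ℝ, 0 < κ ∧ 2 * κ ^ 2 = r ^ 2 + k ^ 2 :=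
    ⟨√((r ^ 2 + k ^ 2) / 2), by positivity, by rw [Real.sq_sqrt (by positivity)]; ring⟩
  have hcos : ‖cos ζ‖ ≤ 1 := by
    rw [← sq_le_one_iff₀ (norm_nonneg _), norm_cos_sq, hkζ, Real.cos_sq', hr2]
    nlinarith
  have hcompare := sum_log_norm_one_sub_mul_sin_sq_le_of_norm_sin_sq_eq hs hs1 hk him hκ0
    (by nlinarith) (by rw [norm_sin_sq, hkζ, hr2, hκ]) hcos
  have h0 := zero_notMem_map_one_sub_mul_sin_sq hs (him ▸ (Real.arsinh_pos_iff.2 hk).ne')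
  rw [← Real.log_le_iff_le_exp (norm_pos_iff.2 (Multiset.prod_ne_zero h0)),
    log_norm_multiset_prod h0, Multiset.map_map]
  calc _ ≤ _ := hcompare
    _ ≤ (s.map fun q ↦ 0.733 * q * (r * k)).sum :=
        Multiset.sum_map_le_sum_map _ _ fun q hq ↦ log_sub_arsinh_le (hs q hq) hr hr1 hk hκ0 hκ h
    _ = 0.733 * s.sum * (r * k) := by
        rw [Multiset.sum_map_mul_right, Multiset.sum_map_mul_left, Multiset.map_id']

lemma exists_cos_eq_of_im_ne_zero {x : ℂ} (hx : x.im ≠ 0) : ∃ ζ : ℂ, cos ζ = x ∧ 0 < ζ.im := by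
  obtain ⟨ζ, rfl⟩ := cos_surjective x
  have hζ : ζ.im ≠ 0 := fun h ↦ hx (by rw [cos_eq]; simp [h])
  rcases hζ.lt_or_gt with h | h
  · exact ⟨-ζ, Complex.cos_neg ζ, by simpa using h⟩
  · exact ⟨ζ, rfl, h⟩

lemma cos_re (ζ : ℂ) : (cos ζ).re = Real.cos ζ.re * Real.cosh ζ.im := by
  rw [cos_eq]; simp [← ofReal_cos, ← ofReal_sin, ← ofReal_cosh, ← ofReal_sinh]

lemma cos_im (ζ : ℂ) : (cos ζ).im = -(Real.sin ζ.re * Real.sinh ζ.im) := by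
  rw [cos_eq]; simp [← ofReal_cos, ← ofReal_sin, ← ofReal_cosh, ← ofReal_sinh]

theorem norm_prod_one_sub_mul_one_sub_sq_le (hs : ∀ q ∈ s, 1 ≤ q)
    (hs1 : ∀ v ∈ Icc (0 : ℝ) 1, |(s.map fun q ↦ 1 - q * v).prod| ≤ 1) {x : ℂ} (hx : x.im ≠ 0)
    (hx1 : 6 * |x.im| ≤ 5 * (1 - x.re ^ 2)) :
    ‖(s.map fun q : ℝ ↦ 1 - (q : ℂ) * (1 - x ^ 2)).prod‖ ≤
      Real.exp (0.733 * s.sum * |x.im|) := by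
  obtain ⟨ζ, rfl, hζ⟩ := exists_cos_eq_of_im_ne_zero hx
  have hk : 0 < Real.sinh ζ.im := Real.sinh_pos_iff.2 hζ
  have him : |(cos ζ).im| = |Real.sin ζ.re| * Real.sinh ζ.im := by
    rw [cos_im, abs_neg, abs_mul, abs_of_pos hk]
  have hr : 0 < |Real.sin ζ.re| := pos_of_mul_pos_left (him ▸ abs_pos.2 hx) hk.le
  rw [him] at hx1 ⊢
  simp only [← sin_sq]
  refine norm_prod_one_sub_mul_sin_sq_le hs hs1 hr rfl hk rfl (hx1.trans_eq ?_)
  rw [cos_re, mul_pow, Real.cosh_sq, Real.cos_sq', sq_abs]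
  ring

end SinSqLift

section RealRooted

/-- The Laguerre expression `p' ^ 2 - p * p''`, which is nonnegative wherever `p` is real-rooted. -/
noncomputable def laguerre {R : Type*} [CommRing R] (p : R[X]) : R[X] :=
  derivative p ^ 2 - p * derivative (derivative p)

lemma laguerre_mul {R : Type*} [CommRing R] (p q : R[X]) :
    laguerre (p * q) = p ^ 2 * laguerre q + q ^ 2 * laguerre p := by
  simp only [laguerre, derivative_mul, derivative_add]
  ring

lemma laguerre_C {R : Type*} [CommRing R] (a : R) : laguerre (C a) = 0 := by simp [laguerre]

lemma laguerre_X_add_C {R : Type*} [CommRing R] (a : R) : laguerre (X + C a) = 1 := by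
  simp [laguerre]

variable {p : ℝ[X]}

lemma laguerre_nonneg (hp : p.Splits) (x : ℝ) : 0 ≤ (laguerre p).eval x := by
  induction hp using Submonoid.closure_induction with
  | mem p hp => rcases hp with ⟨a, rfl⟩ | ⟨a, rfl⟩ <;> simp [laguerre_C, laguerre_X_add_C]
  | one => simp [laguerre]
  | mul p q _ _ hp hq =>
    rw [laguerre_mul, eval_add, eval_mul, eval_mul, eval_pow, eval_pow]
    positivity

lemma eval_sq_add_sq_mul_laguerre_le (hp : p.Splits) (z : ℂ) :
    p.eval z.re ^ 2 + z.im ^ 2 * (laguerre p).eval z.re ≤ ‖aeval z p‖ ^ 2 := by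
  induction hp using Submonoid.closure_induction with
  | mem p hp =>
    rcases hp with ⟨a, rfl⟩ | ⟨a, rfl⟩
    · simp [laguerre_C]
    · simp only [laguerre_X_add_C, eval_add, eval_X, eval_C, eval_one, map_add, aeval_X, aeval_C,
        coe_algebraMap, Complex.sq_norm, normSq_apply, add_re, add_im, ofReal_re, ofReal_im]
      linarith
  | one => simp [laguerre]
  | mul p q hp hq ihp ihq =>
    have hp0 := laguerre_nonneg hp z.re
    have hq0 := laguerre_nonneg hq z.re
    rw [laguerre_mul, map_mul, norm_mul, mul_pow]
    refine le_trans ?_ (mul_le_mul ihp ihq (by positivity) (by positivity))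
    simp only [eval_add, eval_mul, eval_pow]
    have : 0 ≤ z.im ^ 4 * ((laguerre p).eval z.re * (laguerre q).eval z.re) := by positivity
    linarith

lemma eval_laguerre_eq_mul_sum (hp : p.Splits) {x : ℝ} (hx : p.eval x ≠ 0) :
    (laguerre p).eval x = p.eval x ^ 2 * (p.roots.map fun a ↦ ((x - a) ^ 2)⁻¹).sum := by
  induction hp using Submonoid.closure_induction with
  | mem p hp =>
    rcases hp with ⟨a, rfl⟩ | ⟨a, rfl⟩
    · simp [laguerre_C]
    · rw [eval_add, eval_X, eval_C] at hx
      simp [laguerre_X_add_C, hx]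
  | one => simp [laguerre]
  | mul p q _ _ ihp ihq =>
    rw [eval_mul] at hx
    have hpq : p * q ≠ 0 := by
      rintro h
      simp [← eval_mul, h] at hx
    rw [laguerre_mul, roots_mul hpq, Multiset.map_add, Multiset.sum_add, eval_add, eval_mul,
      eval_mul, eval_mul, ihp (left_ne_zero_of_mul hx), ihq (right_ne_zero_of_mul hx)]
    simp only [eval_pow]
    ring

lemma abs_eval_le_abs_eval (hp : p.Splits) {x y : ℝ} (hx : ∀ a ∈ p.roots, a ≤ x) (hxy : x ≤ y) :
    |p.eval x| ≤ |p.eval y| := by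
  rw [hp.eval_eq_prod_roots, hp.eval_eq_prod_roots, abs_mul, abs_mul]
  have hprod : 0 ≤ (p.roots.map fun a ↦ x - a).prod :=
    Multiset.prod_nonneg (Multiset.forall_mem_map_iff.2 fun a ha ↦ sub_nonneg.2 (hx a ha))
  rw [abs_of_nonneg hprod]
  refine mul_le_mul_of_nonneg_left (le_trans ?_ (le_abs_self _)) (abs_nonneg _)
  exact Multiset.prod_map_le_prod_map₀ _ _ (fun a ha ↦ sub_nonneg.2 (hx a ha))
    fun a _ ↦ sub_le_sub_right hxy a

lemma eval_derivative_ne_zero (hp : p.Splits) (hdeg : p.natDegree ≠ 0) {x : ℝ}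
    (hx : ∀ a ∈ p.roots, a < x) : (derivative p).eval x ≠ 0 := by
  have hp0 : p ≠ 0 := by
    rintro rfl
    exact hdeg natDegree_zero
  have hpx : p.eval x ≠ 0 := fun h ↦ lt_irrefl x (hx x ((mem_roots hp0).2 h))
  rw [hp.eval_derivative_eq_eval_mul_sum hpx]
  refine mul_ne_zero hpx (ne_of_gt ?_)
  have hsum := Multiset.sum_lt_sum_of_nonempty (f := fun _ ↦ 0) (hp.roots_ne_zero hdeg)
    fun a ha ↦ one_div_pos.2 (sub_pos.2 (hx a ha))
  simpa only [Multiset.sum_map_zero] using hsum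

lemma eval_derivative_eq_zero_of_abs_le {a b ξ : ℝ} (hξ : ξ ∈ Ioo a b)
    (hmax : ∀ x ∈ Icc a b, |p.eval x| ≤ |p.eval ξ|) (h0 : p.eval ξ ≠ 0) :
    (derivative p).eval ξ = 0 := by
  have hloc : IsLocalMax (fun x ↦ p.eval x ^ 2) ξ := by
    filter_upwards [Icc_mem_nhds hξ.1 hξ.2] with x hx
    exact sq_le_sq.2 (hmax x hx)
  have h := hloc.hasDerivAt_eq_zero ((p.hasDerivAt ξ).pow 2)
  simpa [h0] using h

lemma splits_derivative (hp : p.Splits) : (derivative p).Splits := by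
  rw [splits_iff_card_roots] at hp ⊢
  refine le_antisymm (card_roots' _) ?_
  have := card_roots_le_derivative p
  rw [natDegree_derivative]
  lia

end RealRooted

/-- A symmetric oscillating polynomial on `[-1, 1]` that does not vanish at the endpoints: its zeros
are all real, lie in the open interval `(-1, 1)`, and `P (-X) = (-1) ^ deg P * P`. -/
structure IsSymmOscillating (P : ℝ[X]) : Prop where
  splits : P.Splits
  ne_zero : P ≠ 0
  abs_lt_one : ∀ a ∈ P.roots, |a| < 1
  comp_neg_X : P.comp (-X) = (-1) ^ P.natDegree * P

/-- The weights `(1 - a ^ 2)⁻¹`, one for each zero `a` of `P`. When `P` is symmetric they determine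
`P ^ 2 / P.eval 1 ^ 2`, and their sum is the logarithmic derivative of `P` at `1`. -/
noncomputable def endpointWeights (P : ℝ[X]) : Multiset ℝ :=
  P.roots.map fun a ↦ (1 - a ^ 2)⁻¹

lemma one_sub_sq_pos {a : ℝ} (ha : |a| < 1) : 0 < 1 - a ^ 2 :=
  sub_pos.2 ((sq_lt_one_iff_abs_lt_one a).2 ha)

lemma inv_one_sub_sq_le_inv_one_sub_sq {x y : ℝ} (hx : 0 ≤ x) (hxy : x ≤ y) (hy : |y| < 1) :
    (1 - x ^ 2)⁻¹ ≤ (1 - y ^ 2)⁻¹ :=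
  inv_anti₀ (one_sub_sq_pos hy) (sub_le_sub_left (pow_le_pow_left₀ hx hxy 2) 1)

lemma three_mul_le_of_two_mul_mul_le {A R : ℝ} (hA : 0 ≤ A)
    (h : 2 * A * R ≤ A ^ 2 + A - 4 * R ^ 2 - 4) : 3 * R ≤ A := by
  by_contra! hlt
  nlinarith [sq_nonneg (R - 3 / 2)]

namespace IsSymmOscillating
variable {P : ℝ[X]}

lemma eval_ne_zero (hP : IsSymmOscillating P) {x : ℝ} (hx : 1 ≤ |x|) : P.eval x ≠ 0 := fun h ↦
  hx.not_gt (hP.abs_lt_one x ((mem_roots hP.ne_zero).2 h))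

lemma eval_one_ne_zero (hP : IsSymmOscillating P) : P.eval 1 ≠ 0 :=
  hP.eval_ne_zero abs_one.ge

lemma eval_neg (hP : IsSymmOscillating P) (x : ℝ) :
    P.eval (-x) = (-1) ^ P.natDegree * P.eval x := by
  simpa using congrArg (eval x) hP.comp_neg_X

lemma abs_eval_neg (hP : IsSymmOscillating P) (x : ℝ) : |P.eval (-x)| = |P.eval x| := by
  rw [hP.eval_neg, abs_mul, abs_neg_one_pow, one_mul]

lemma map_neg_roots (hP : IsSymmOscillating P) {β : Type*} (f : ℝ → β) :
    (P.roots.map fun a ↦ f (-a)) = P.roots.map f := by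
  have h : P.roots.map (fun a ↦ -a) = P.roots := by
    rw [← roots_comp_neg_X, hP.comp_neg_X]
    rcases neg_one_pow_eq_or ℝ[X] P.natDegree with h | h <;> rw [h] <;> simp
  conv_rhs => rw [← h, Multiset.map_map]
  rfl

lemma neg_mem_roots (hP : IsSymmOscillating P) {a : ℝ} (ha : a ∈ P.roots) : -a ∈ P.roots := by
  rw [← Multiset.map_id P.roots, ← hP.map_neg_roots]
  exact Multiset.mem_map_of_mem _ ha

lemma derivative_comp_neg_X (hP : IsSymmOscillating P) (hn : P.natDegree ≠ 0) :
    (derivative P).comp (-X) = (-1) ^ (derivative P).natDegree * derivative P := by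
  obtain ⟨m, hm⟩ := Nat.exists_eq_succ_of_ne_zero hn
  have h := congrArg derivative hP.comp_neg_X
  rw [derivative_comp, hm, derivative_mul] at h
  rw [natDegree_derivative, hm, Nat.succ_sub_one]
  rcases neg_one_pow_eq_or ℝ[X] m with hm | hm <;>
    simpa [pow_succ, hm, neg_eq_iff_eq_neg] using h

protected lemma derivative (hP : IsSymmOscillating P) (hn : P.natDegree ≠ 0) :
    IsSymmOscillating (derivative P) where
  splits := splits_derivative hP.splits
  ne_zero := mt derivative_eq_zero.1 hn
  comp_neg_X := hP.derivative_comp_neg_X hn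
  abs_lt_one a ha := by
    by_contra! h
    have ha0 : (derivative P).eval a = 0 := isRoot_of_mem_roots ha
    have hneg : (derivative P).eval (-a) = 0 := by
      simpa [ha0] using congrArg (eval a) (hP.derivative_comp_neg_X hn)
    refine eval_derivative_ne_zero hP.splits hn (x := |a|)
      (fun b hb ↦ ((le_abs_self b).trans_lt (hP.abs_lt_one b hb)).trans_le h) ?_
    rcases abs_choice a with h | h <;> rwa [h]

lemma card_endpointWeights (hP : IsSymmOscillating P) :
    (endpointWeights P).card = P.natDegree := by
  rw [endpointWeights, Multiset.card_map, hP.splits.natDegree_eq_card_roots]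

lemma one_le_of_mem_endpointWeights (hP : IsSymmOscillating P) {q : ℝ}
    (hq : q ∈ endpointWeights P) : 1 ≤ q := by
  obtain ⟨a, ha, rfl⟩ := Multiset.mem_map.1 hq
  exact (one_le_inv₀ (one_sub_sq_pos (hP.abs_lt_one a ha))).2 (sub_le_self _ (sq_nonneg a))

lemma natDegree_le_sum_endpointWeights (hP : IsSymmOscillating P) :
    (P.natDegree : ℝ) ≤ (endpointWeights P).sum := by
  rw [← hP.card_endpointWeights, ← nsmul_one]
  exact Multiset.card_nsmul_le_sum fun q hq ↦ hP.one_le_of_mem_endpointWeights hq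

lemma two_mul_sum_map_roots (hP : IsSymmOscillating P) (f : ℝ → ℝ) :
    2 * (P.roots.map f).sum = (P.roots.map fun a ↦ f a + f (-a)).sum := by
  rw [Multiset.sum_map_add, hP.map_neg_roots, two_mul]

lemma eval_one_derivative (hP : IsSymmOscillating P) :
    (derivative P).eval 1 = P.eval 1 * (endpointWeights P).sum := by
  rw [hP.splits.eval_derivative_eq_eval_mul_sum hP.eval_one_ne_zero]
  refine congrArg _ (mul_left_cancel₀ (two_ne_zero' ℝ) ?_)
  rw [hP.two_mul_sum_map_roots, endpointWeights, ← Multiset.sum_map_mul_left]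
  refine congrArg Multiset.sum (Multiset.map_congr rfl fun a ha ↦ ?_)
  have hlt := abs_lt.1 (hP.abs_lt_one a ha)
  have hsub : 1 - a ≠ 0 := by linarith
  have hadd : 1 + a ≠ 0 := by linarith
  rw [sub_neg_eq_add, show 1 - a ^ 2 = (1 - a) * (1 + a) by ring]
  field_simp
  ring

lemma sum_inv_one_sub_sq (hP : IsSymmOscillating P) :
    (P.roots.map fun a ↦ ((1 - a) ^ 2)⁻¹).sum =
      2 * ((endpointWeights P).map fun q ↦ q ^ 2).sum - (endpointWeights P).sum := by
  refine mul_left_cancel₀ (two_ne_zero' ℝ) ?_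
  rw [hP.two_mul_sum_map_roots, endpointWeights, Multiset.map_map, ← Multiset.sum_map_mul_left,
    ← Multiset.sum_map_sub, ← Multiset.sum_map_mul_left]
  refine congrArg Multiset.sum (Multiset.map_congr rfl fun a ha ↦ ?_)
  have hlt := abs_lt.1 (hP.abs_lt_one a ha)
  have hsub : 1 - a ≠ 0 := by linarith
  have hadd : 1 + a ≠ 0 := by linarith
  rw [Function.comp_apply, sub_neg_eq_add, show 1 - a ^ 2 = (1 - a) * (1 + a) by ring]
  field_simp
  ring

lemma sum_mul_sum_endpointWeights_derivative (hP : IsSymmOscillating P) (hn : P.natDegree ≠ 0) :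
    (endpointWeights P).sum * (endpointWeights (derivative P)).sum =
      (endpointWeights P).sum ^ 2 + (endpointWeights P).sum -
        2 * ((endpointWeights P).map fun q ↦ q ^ 2).sum := by
  have h := eval_laguerre_eq_mul_sum hP.splits hP.eval_one_ne_zero
  rw [hP.sum_inv_one_sub_sq, laguerre, eval_sub, eval_pow, eval_mul,
    (hP.derivative hn).eval_one_derivative, hP.eval_one_derivative] at h
  refine mul_left_cancel₀ (pow_ne_zero 2 hP.eval_one_ne_zero) ?_
  linear_combination -h

section Aeval
variable {A : Type*} [CommRing A] [Algebra ℝ A]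

lemma aeval_sq (hP : IsSymmOscillating P) (x : A) :
    aeval x P ^ 2 = algebraMap ℝ A P.leadingCoeff ^ 2 *
      (P.roots.map fun a ↦ x ^ 2 - algebraMap ℝ A (a ^ 2)).prod := by
  have h : aeval x P = algebraMap ℝ A P.leadingCoeff *
      (P.roots.map fun a ↦ x - algebraMap ℝ A a).prod := by
    conv_lhs => rw [hP.splits.eq_prod_roots]
    simp [map_multiset_prod]
  rw [h, mul_pow, sq (Multiset.prod _)]
  nth_rw 1 [← hP.map_neg_roots]
  rw [← Multiset.prod_map_mul]
  refine congrArg _ (congrArg Multiset.prod (Multiset.map_congr rfl fun a _ ↦ ?_))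
  rw [map_neg, map_pow]
  ring

lemma aeval_sq_eq_eval_one_sq_mul_prod (hP : IsSymmOscillating P) (x : A) :
    aeval x P ^ 2 = algebraMap ℝ A (P.eval 1) ^ 2 *
      ((endpointWeights P).map fun q ↦ 1 - algebraMap ℝ A q * (1 - x ^ 2)).prod := by
  rw [← aeval_algebraMap_apply_eq_algebraMap_eval, map_one, hP.aeval_sq, hP.aeval_sq, mul_assoc,
    endpointWeights, Multiset.map_map, ← Multiset.prod_map_mul]
  refine congrArg _ (congrArg Multiset.prod (Multiset.map_congr rfl fun a ha ↦ ?_))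
  have hinv : algebraMap ℝ A (1 - a ^ 2) * algebraMap ℝ A (1 - a ^ 2)⁻¹ = 1 := by
    rw [← map_mul, mul_inv_cancel₀ (one_sub_sq_pos (hP.abs_lt_one a ha)).ne', map_one]
  rw [map_sub, map_one] at hinv
  rw [Function.comp_apply, one_pow]
  linear_combination (1 - x ^ 2) * hinv

end Aeval

lemma exists_endpointWeights_eq_cons_cons (hP : IsSymmOscillating P) {x : ℝ} (hx : x ∈ P.roots)
    (h0 : 0 < x) : ∃ t, endpointWeights P = (1 - x ^ 2)⁻¹ ::ₘ (1 - x ^ 2)⁻¹ ::ₘ t := by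
  obtain ⟨t, ht⟩ := Multiset.exists_cons_of_mem hx
  have hneg : -x ∈ t := by
    have h := hP.neg_mem_roots hx
    rw [ht, Multiset.mem_cons] at h
    exact h.resolve_left (by linarith)
  obtain ⟨u, rfl⟩ := Multiset.exists_cons_of_mem hneg
  exact ⟨u.map fun a ↦ (1 - a ^ 2)⁻¹, by rw [endpointWeights, ht]; simp⟩

lemma two_le_natDegree (hP : IsSymmOscillating P) {x : ℝ} (hx : x ∈ P.roots) (h0 : 0 < x) :
    2 ≤ P.natDegree := by
  obtain ⟨t, ht⟩ := hP.exists_endpointWeights_eq_cons_cons hx h0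
  rw [← hP.card_endpointWeights, ht, Multiset.card_cons, Multiset.card_cons]
  lia

lemma two_mul_add_le_sum_map_endpointWeights (hP : IsSymmOscillating P) {x : ℝ}
    (hx : x ∈ P.roots) (h0 : 0 < x) {f : ℝ → ℝ} (hf : ∀ q, 1 ≤ q → 1 ≤ f q) :
    2 * f (1 - x ^ 2)⁻¹ + (P.natDegree - 2) ≤ ((endpointWeights P).map f).sum := by
  obtain ⟨t, ht⟩ := hP.exists_endpointWeights_eq_cons_cons hx h0
  have hsum : t.card • (1 : ℝ) ≤ (t.map f).sum := by
    rw [← Multiset.card_map f]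
    refine Multiset.card_nsmul_le_sum (Multiset.forall_mem_map_iff.2 fun q hq ↦ ?_)
    exact hf q (hP.one_le_of_mem_endpointWeights (by rw [ht]; simp [hq]))
  rw [← hP.card_endpointWeights, ht]
  simp only [Multiset.map_cons, Multiset.sum_cons, Multiset.card_cons, nsmul_one, Nat.cast_add,
    Nat.cast_one] at hsum ⊢
  linarith

lemma exists_mem_roots_ge (hP : IsSymmOscillating P) (hn : P.natDegree ≠ 0) {x : ℝ}
    (hx : x ∈ (derivative P).roots) : ∃ a ∈ P.roots, x ≤ a := by
  by_contra! h
  exact eval_derivative_ne_zero hP.splits hn h (isRoot_of_mem_roots hx)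

lemma three_mul_inv_one_sub_sq_le_sum_endpointWeights (hP : IsSymmOscillating P)
    (hn : P.natDegree ≠ 0) {ξ x : ℝ} (hξ : 0 < ξ) (hξx : ξ < x) (hx : x ∈ (derivative P).roots)
    (h2 : (derivative (derivative P)).eval ξ = 0) :
    3 * (1 - ξ ^ 2)⁻¹ ≤ (endpointWeights P).sum := by
  have hP' := hP.derivative hn
  have hx0 : 0 < x := hξ.trans hξx
  have hdeg' : 2 ≤ (derivative P).natDegree := hP'.two_le_natDegree hx hx0
  have hP'' := hP'.derivative (by lia)
  have hdeg : 4 ≤ P.natDegree := by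
    have := hP''.two_le_natDegree ((mem_roots hP''.ne_zero).2 h2) hξ
    rw [natDegree_derivative, natDegree_derivative] at this
    lia
  obtain ⟨a, ha, hxa⟩ := hP.exists_mem_roots_ge hn hx
  have hR0 : 0 ≤ (1 - ξ ^ 2)⁻¹ := inv_nonneg.2 (one_sub_sq_pos
    (abs_lt.2 ⟨by linarith, hξx.trans (abs_lt.1 (hP'.abs_lt_one x hx)).2⟩)).le
  have hRx := inv_one_sub_sq_le_inv_one_sub_sq hξ.le hξx.le (hP'.abs_lt_one x hx)
  have hRa := inv_one_sub_sq_le_inv_one_sub_sq hξ.le (hξx.le.trans hxa) (hP.abs_lt_one a ha)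
  have hsum' := hP'.two_mul_add_le_sum_map_endpointWeights hx hx0 (f := id) fun _ ↦ id
  have hsumsq := hP.two_mul_add_le_sum_map_endpointWeights ha (hx0.trans_le hxa)
    (f := fun q ↦ q ^ 2) fun _ hq ↦ one_le_pow₀ hq
  have hRa2 := pow_le_pow_left₀ hR0 hRa 2
  have hrel := hP.sum_mul_sum_endpointWeights_derivative hn
  have hA := hP.natDegree_le_sum_endpointWeights
  have hdegR : (4 : ℝ) ≤ P.natDegree := by exact_mod_cast hdeg
  have hdegR' : (2 : ℝ) ≤ (derivative P).natDegree := by exact_mod_cast hdeg'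
  rw [Multiset.map_id, id] at hsum'
  have hmul : (endpointWeights P).sum * (2 * (1 - ξ ^ 2)⁻¹) ≤
      (endpointWeights P).sum * (endpointWeights (derivative P)).sum :=
    mul_le_mul_of_nonneg_left (by linarith) (by linarith)
  exact three_mul_le_of_two_mul_mul_le (by linarith) (by linarith)

lemma three_le_sum_endpointWeights_mul (hP : IsSymmOscillating P) (hn : P.natDegree ≠ 0) {ξ x : ℝ}
    (hξ : 0 ≤ ξ) (hξx : ξ < x) (hx : x ∈ (derivative P).roots)
    (h2 : (derivative (derivative P)).eval ξ = 0) :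
    3 ≤ (endpointWeights P).sum * (1 - ξ ^ 2) := by
  have hP' := hP.derivative hn
  rcases hξ.eq_or_lt with rfl | hξ0
  · have hdeg : 3 ≤ P.natDegree := by
      have := hP'.two_le_natDegree hx hξx
      rw [natDegree_derivative] at this
      lia
    have : (3 : ℝ) ≤ P.natDegree := by exact_mod_cast hdeg
    simpa using this.trans hP.natDegree_le_sum_endpointWeights
  · have hpos : 0 < 1 - ξ ^ 2 := one_sub_sq_pos
      (abs_lt.2 ⟨by linarith, hξx.trans (abs_lt.1 (hP'.abs_lt_one x hx)).2⟩)
    rw [← div_le_iff₀ hpos]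
    exact hP.three_mul_inv_one_sub_sq_le_sum_endpointWeights hn hξ0 hξx hx h2

lemma abs_prod_one_sub_endpointWeights_mul_le_one (hP : IsSymmOscillating P)
    (hmax : ∀ x ∈ Icc (-1 : ℝ) 1, |P.eval x| ≤ |P.eval 1|) {v : ℝ} (hv : v ∈ Icc (0 : ℝ) 1) :
    |((endpointWeights P).map fun q ↦ 1 - q * v).prod| ≤ 1 := by
  have hpos : 0 < P.eval 1 ^ 2 := sq_pos_of_ne_zero hP.eval_one_ne_zero
  have hle := sq_le_sq.2 (hmax √(1 - v) ⟨by linarith [Real.sqrt_nonneg (1 - v)],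
    Real.sqrt_le_one.2 (by linarith [hv.1])⟩)
  have h := hP.aeval_sq_eq_eval_one_sq_mul_prod √(1 - v)
  rw [Real.sq_sqrt (sub_nonneg.2 hv.2), sub_sub_cancel] at h
  simp only [coe_aeval_eq_eval, Algebra.algebraMap_self_apply] at h
  have habs := congrArg abs h
  rw [abs_mul, abs_sq, abs_of_pos hpos] at habs
  exact le_of_mul_le_mul_left (by linarith) hpos

lemma norm_aeval_le (hP : IsSymmOscillating P)
    (hmax : ∀ x ∈ Icc (-1 : ℝ) 1, |P.eval x| ≤ |P.eval 1|) {x : ℂ} (hx : x.im ≠ 0)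
    (hx1 : 6 * |x.im| ≤ 5 * (1 - x.re ^ 2)) :
    ‖aeval x P‖ ^ 2 ≤
      P.eval 1 ^ 2 * Real.exp (0.733 * (endpointWeights P).sum * |x.im|) := by
  rw [← norm_pow, hP.aeval_sq_eq_eval_one_sq_mul_prod, norm_mul, norm_pow, coe_algebraMap,
    norm_real, Real.norm_eq_abs, sq_abs]
  exact mul_le_mul_of_nonneg_left (norm_prod_one_sub_mul_one_sub_sq_le
    (fun _ ↦ hP.one_le_of_mem_endpointWeights)
    (fun _ ↦ hP.abs_prod_one_sub_endpointWeights_mul_le_one hmax) hx hx1) (sq_nonneg _)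

lemma abs_eval_derivative_le_of_three_le (hP : IsSymmOscillating P)
    (hmax : ∀ x ∈ Icc (-1 : ℝ) 1, |P.eval x| ≤ |P.eval 1|) {ξ : ℝ}
    (h2 : (derivative (derivative P)).eval ξ = 0)
    (hξ : 3 ≤ (endpointWeights P).sum * (1 - ξ ^ 2)) :
    |(derivative P).eval ξ| ≤ |(derivative P).eval 1| := by
  have hA : 0 < (endpointWeights P).sum := by
    refine ((Nat.cast_nonneg _).trans hP.natDegree_le_sum_endpointWeights).lt_of_ne fun h ↦ ?_
    norm_num [← h] at hξ
  obtain ⟨y, hy, hAy⟩ : ∃ y, 0 < y ∧ (endpointWeights P).sum * y = 5 / 2 :=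
    ⟨5 / 2 / (endpointWeights P).sum, by positivity, mul_div_cancel₀ _ hA.ne'⟩
  have hlower : y ^ 2 * (derivative P).eval ξ ^ 2 ≤ ‖aeval (⟨ξ, y⟩ : ℂ) P‖ ^ 2 := by
    have h := eval_sq_add_sq_mul_laguerre_le hP.splits ⟨ξ, y⟩
    simp only [laguerre, eval_sub, eval_pow, eval_mul, h2, mul_zero, sub_zero] at h
    linarith [sq_nonneg (P.eval ξ)]
  have hupper : ‖aeval (⟨ξ, y⟩ : ℂ) P‖ ^ 2 ≤ P.eval 1 ^ 2 * (5 / 2) ^ 2 := by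
    have hy1 : 6 * |y| ≤ 5 * (1 - ξ ^ 2) := by
      rw [abs_of_pos hy]
      refine le_of_mul_le_mul_left ?_ hA
      linarith
    refine (hP.norm_aeval_le hmax hy.ne' hy1).trans (mul_le_mul_of_nonneg_left ?_ (sq_nonneg _))
    rw [abs_of_pos hy, mul_assoc, hAy]
    calc Real.exp (0.733 * (5 / 2)) = Real.exp (0.733 * (5 / 4)) ^ 2 := by
          rw [← Real.exp_nat_mul]; ring_nf
      _ ≤ _ := pow_le_pow_left₀ (Real.exp_nonneg _) exp_le_five_halves 2
  refine sq_le_sq.1 (le_of_mul_le_mul_left ((hlower.trans hupper).trans_eq ?_) (pow_pos hy 2))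
  rw [hP.eval_one_derivative, ← hAy]
  ring

lemma exists_nonneg_abs_eval_le (hP : IsSymmOscillating P) :
    ∃ ξ ∈ Icc (0 : ℝ) 1, ∀ x ∈ Icc (-1 : ℝ) 1, |P.eval x| ≤ |P.eval ξ| := by
  obtain ⟨ξ, hξ, hmax⟩ := (isCompact_Icc (a := (-1 : ℝ)) (b := 1)).exists_isMaxOn ⟨0, by simp⟩
    (f := fun x ↦ |P.eval x|) (by fun_prop)
  refine ⟨|ξ|, ⟨abs_nonneg ξ, abs_le.2 hξ⟩, fun x hx ↦ ?_⟩
  have habs : |P.eval (|ξ|)| = |P.eval ξ| := by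
    rcases abs_choice ξ with h | h <;> rw [h]
    exact hP.abs_eval_neg ξ
  exact habs ▸ hmax hx

theorem abs_eval_derivative_le (hP : IsSymmOscillating P) (hn : P.natDegree ≠ 0)
    (hmax : ∀ x ∈ Icc (-1 : ℝ) 1, |P.eval x| ≤ |P.eval 1|) :
    ∀ x ∈ Icc (-1 : ℝ) 1, |(derivative P).eval x| ≤ |(derivative P).eval 1| := by
  have hP' := hP.derivative hn
  obtain ⟨ξ, ⟨hξ0, hξ1⟩, hξmax⟩ := hP'.exists_nonneg_abs_eval_le
  suffices |(derivative P).eval ξ| ≤ |(derivative P).eval 1| from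
    fun x hx ↦ (hξmax x hx).trans this
  by_cases hroot : ∃ x ∈ (derivative P).roots, ξ < x
  · obtain ⟨x, hx, hξx⟩ := hroot
    by_cases h0 : (derivative P).eval ξ = 0
    · rw [h0, abs_zero]
      exact abs_nonneg _
    have hξ : ξ ∈ Ioo (-1) 1 :=
      ⟨by linarith, hξx.trans (abs_lt.1 (hP'.abs_lt_one x hx)).2⟩
    have h2 := eval_derivative_eq_zero_of_abs_le hξ hξmax h0
    exact hP.abs_eval_derivative_le_of_three_le hmax h2
      (hP.three_le_sum_endpointWeights_mul hn hξ0 hξx hx h2)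
  · push Not at hroot
    exact abs_eval_le_abs_eval hP'.splits hroot hξ1

theorem abs_eval_iterate_derivative_le {k : ℕ} (hP : IsSymmOscillating P) (hk : k ≤ P.natDegree)
    (hmax : ∀ x ∈ Icc (-1 : ℝ) 1, |P.eval x| ≤ |P.eval 1|) :
    ∀ x ∈ Icc (-1 : ℝ) 1, |(derivative^[k] P).eval x| ≤ |(derivative^[k] P).eval 1| := by
  induction k generalizing P with
  | zero => exact hmax
  | succ k ih =>
    have hn : P.natDegree ≠ 0 := by lia
    refine ih (hP.derivative hn) ?_ (hP.abs_eval_derivative_le hn hmax)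
    rw [natDegree_derivative]
    lia

end IsSymmOscillating

/-- Bojanov–Naidenov, symmetric case: for a symmetric oscillating polynomial `P`
on `[-1,1]` with `max_{[-1,1]} |P| = |P(1)| = 1`, every derivative attains its
maximal absolute value over `[-1,1]` at the point `1`. -/
theorem bojanov_naidenov_symmetric (n : ℕ) (P : Polynomial ℝ)
    (hdeg : P.natDegree = n)
    (hcard : P.roots.card = n)
    (hloc : ∀ x ∈ P.roots, x ∈ Set.Icc (-1 : ℝ) 1)
    (hsym : ∀ x : ℝ, P.eval (-x) = (-1) ^ n * P.eval x)
    (hmax : ∀ x ∈ Set.Icc (-1 : ℝ) 1, |P.eval x| ≤ 1)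
    (h1 : |P.eval 1| = 1) :
    ∀ k : ℕ, 1 ≤ k → k ≤ n →
      ∀ x ∈ Set.Icc (-1 : ℝ) 1,
        |(derivative^[k] P).eval x| ≤ |(derivative^[k] P).eval 1| := by
  intro k _ hk
  have hone : P.eval 1 ≠ 0 := abs_ne_zero.1 (h1.trans_ne one_ne_zero)
  have hneg_one : P.eval (-1) ≠ 0 := by
    rw [hsym]
    exact mul_ne_zero (pow_ne_zero n (by norm_num)) hone
  have habs_lt_one (a : ℝ) (ha : a ∈ P.roots) : |a| < 1 := by
    have ha0 : P.eval a = 0 := isRoot_of_mem_roots ha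
    refine abs_lt.2 ⟨(hloc a ha).1.lt_of_ne ?_, (hloc a ha).2.lt_of_ne ?_⟩ <;> rintro rfl
    exacts [hneg_one ha0, hone ha0]
  have hP : IsSymmOscillating P :=
    { splits := splits_iff_card_roots.2 (hcard.trans hdeg.symm)
      ne_zero := by rintro rfl; exact hone eval_zero
      abs_lt_one := habs_lt_one
      comp_neg_X := Polynomial.funext fun x ↦ by simpa [hdeg] using hsym x }
  exact hP.abs_eval_iterate_derivative_le (hk.trans_eq hdeg.symm) (by rwa [h1])
end
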